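/- Let X be a geodesic metric space with basepoint o, let G be a countable group acting on X by isometries, and let g ∈ G be a WPD contracting isometry. Let μ be a probability measure on G with H(μ) < ∞ such that μ^{*n}(g^m) > 0 for some integers n, m > 0, and let (μ_i)_{i>0} be probability measures on G that converge simply to μ (μ_i(h) → μ(h) for every h ∈ G) and satisfy H(μ_i) → H(μ) (in particular H(μ_i) < ∞ for all large i). Then the asymptotic entropies converge: h(μ_i) → h(μ). -/

import Mathlib

open Filter Topology Pointwise

/-- `f` parametrizes a geodesic from `x` to `y` by arclength on `[0, dist x y]`. -/
def IsGeodesicSegment {X : Type*} [MetricSpace X] (f : ℝ → X) (x y : X) : Prop :=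
  f 0 = x ∧ f (dist x y) = y ∧
    ∀ s ∈ Set.Icc (0 : ℝ) (dist x y), ∀ t ∈ Set.Icc (0 : ℝ) (dist x y),
      dist (f s) (f t) = |s - t|

/-- `X` is a geodesic metric space: any two points are joined by a geodesic. -/
def IsGeodesicSpace (X : Type*) [MetricSpace X] : Prop :=
  ∀ x y : X, ∃ f : ℝ → X, IsGeodesicSegment f x y

/-- Nearest-point projection of `x` to the set `A`. -/
def projSet {X : Type*} [MetricSpace X] (A : Set X) (x : X) : Set X :=
  {a ∈ A | dist x a = Metric.infDist x A}

/-- Nearest-point projection of the set `B` to the set `A`. -/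
def projSetOf {X : Type*} [MetricSpace X] (A B : Set X) : Set X :=
  ⋃ x ∈ B, projSet A x

/-- A `K`-quasigeodesic indexed by `ℤ`. -/
def IsQuasigeodesicZ {X : Type*} [MetricSpace X] (K : ℝ) (γ : ℤ → X) : Prop :=
  ∀ s t : ℤ, |(s : ℝ) - (t : ℝ)| / K - K ≤ dist (γ s) (γ t) ∧
    dist (γ s) (γ t) ≤ K * |(s : ℝ) - (t : ℝ)| + K

/-- A `K`-contracting axis indexed by `ℤ`: a `K`-quasigeodesic such that every geodesic
staying `K`-far from it has nearest-point projection of diameter `< K`. -/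
def IsContractingAxisZ {X : Type*} [MetricSpace X] (K : ℝ) (γ : ℤ → X) : Prop :=
  IsQuasigeodesicZ K γ ∧
    ∀ (f : ℝ → X) (x y : X), IsGeodesicSegment f x y →
      (∀ t ∈ Set.Icc (0 : ℝ) (dist x y), K ≤ Metric.infDist (f t) (Set.range γ)) →
      EMetric.diam (projSetOf (Set.range γ) (f '' Set.Icc (0 : ℝ) (dist x y)))
        < ENNReal.ofReal K

/-- The `ℤ`-orbit of the basepoint `o` under powers of `g`. -/
def zorbit {G X : Type*} [Group G] [MetricSpace X] [MulAction G X] (o : X) (g : G) : Set X :=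
  Set.range fun i : ℤ => g ^ i • o

/-- `g` is a contracting isometry: its orbit map `i ↦ g^i • o` is a `K`-contracting axis
for some `K > 1`. -/
def IsContractingIsom {G X : Type*} [Group G] [MetricSpace X] [MulAction G X]
    (o : X) (g : G) : Prop :=
  ∃ K : ℝ, 1 < K ∧ IsContractingAxisZ K fun i : ℤ => g ^ i • o

/-- `g` is WPD: for each `K ≥ 0` there is `N > 0` so that the coarse stabilizer of
`(o, g^N o)` is finite. -/
def IsWPD {G X : Type*} [Group G] [MetricSpace X] [MulAction G X]
    (o : X) (g : G) : Prop :=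
  ∀ K : ℝ, 0 ≤ K → ∃ N : ℕ, 0 < N ∧
    {h : G | dist o (h • o) ≤ K ∧ dist ((g ^ N) • o) ((h * g ^ N) • o) ≤ K}.Finite

/-- `μ` is a probability measure on the countable group `G`. -/
def IsProbMeasure {G : Type*} (μ : G → ℝ) : Prop :=
  (∀ g, 0 ≤ μ g) ∧ Summable μ ∧ ∑' g, μ g = 1

/-- Convolution of two (signed) measures on `G`. -/
noncomputable def conv {G : Type*} [Group G] (μ ν : G → ℝ) : G → ℝ :=
  fun g => ∑' h : G, μ h * ν (h⁻¹ * g)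

/-- `n`-fold convolution power of `μ`, with `convPow μ 0` the point mass at the identity. -/
noncomputable def convPow {G : Type*} [Group G] (μ : G → ℝ) : ℕ → G → ℝ
  | 0 => ({1} : Set G).indicator fun _ => (1 : ℝ)
  | n + 1 => conv μ (convPow μ n)

/-- Shannon entropy `H(μ) = −∑_g μ(g) log μ(g)`. -/
noncomputable def entropyOf {G : Type*} (μ : G → ℝ) : ℝ :=
  ∑' g : G, -(μ g * Real.log (μ g))

/-- `μ` has finite one-step entropy. -/
def HasFiniteEntropy {G : Type*} (μ : G → ℝ) : Prop :=
  Summable fun g : G => μ g * Real.log (μ g)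

/-- The asymptotic entropy `h(μ) = lim_n H(μ^{*n})/n`; by subadditivity of
`n ↦ H(μ^{*n})` (Fekete), the limit equals the infimum. -/
noncomputable def asympEntropy {G : Type*} [Group G] (μ : G → ℝ) : ℝ :=
  ⨅ n : ℕ, entropyOf (convPow μ (n + 1)) / (n + 1 : ℝ)


set_option linter.all false

open scoped ENNReal

namespace EC

/-- surprisal -/
noncomputable def sur (y : ℝ≥0∞) : ℝ≥0∞ :=
  if y = 0 then ⊤ else ENNReal.ofReal (-Real.log y.toReal)

lemma sur_zero : sur 0 = ⊤ := by simp [sur]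

lemma sur_one : sur 1 = 0 := by simp [sur]

lemma sur_mul {x y : ℝ≥0∞} (hx : x ≤ 1) (hy : y ≤ 1) : sur (x * y) = sur x + sur y := by
  by_cases h0 : x = 0
  · simp [h0, sur]
  by_cases h1 : y = 0
  · simp [h1, sur]
  have hxt : x ≠ ⊤ := ne_top_of_le_ne_top ENNReal.one_ne_top hx
  have hyt : y ≠ ⊤ := ne_top_of_le_ne_top ENNReal.one_ne_top hy
  have hx' : 0 < x.toReal := ENNReal.toReal_pos h0 hxt
  have hy' : 0 < y.toReal := ENNReal.toReal_pos h1 hyt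
  have hx1 : x.toReal ≤ 1 := by simpa using ENNReal.toReal_mono ENNReal.one_ne_top hx
  have hy1 : y.toReal ≤ 1 := by simpa using ENNReal.toReal_mono ENNReal.one_ne_top hy
  have := Real.log_nonpos hx'.le hx1
  have := Real.log_nonpos hy'.le hy1
  simp only [sur, h0, h1, mul_eq_zero, or_self, if_false, ENNReal.toReal_mul]
  rw [Real.log_mul hx'.ne' hy'.ne', ← ENNReal.ofReal_add (by linarith) (by linarith)]
  congr 1; ring

lemma sur_anti {x y : ℝ≥0∞} (h : x ≤ y) : sur y ≤ sur x := by
  by_cases h0 : x = 0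
  · simp [h0, sur]
  have h1 : y ≠ 0 := fun h' => h0 (by simpa [h'] using h)
  by_cases hy : y = ⊤
  · simp [hy, sur]
  have hxt : x ≠ ⊤ := ne_top_of_le_ne_top hy h
  simp only [sur, h0, h1, if_false]
  apply ENNReal.ofReal_le_ofReal
  have := Real.log_le_log (ENNReal.toReal_pos h0 hxt) (ENNReal.toReal_mono hy h)
  linarith

lemma sur_prod {ι : Type*} (s : Finset ι) (f : ι → ℝ≥0∞) (hf : ∀ i ∈ s, f i ≤ 1) :
    sur (∏ i ∈ s, f i) = ∑ i ∈ s, sur (f i) := by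
  classical
  induction s using Finset.induction_on with
  | empty => simp [sur_one]
  | insert a s ha ih =>
    rw [Finset.prod_insert ha, Finset.sum_insert ha, sur_mul (hf a (by simp)), ih]
    · exact fun i hi => hf i (by simp [hi])
    · exact Finset.prod_le_one' fun i hi => hf i (by simp [hi])

lemma sur_inv_nat (M : ℕ) (hM : 0 < M) : sur ((M : ℝ≥0∞)⁻¹) = ENNReal.ofReal (Real.log M) := by
  simp [sur, ENNReal.toReal_inv]

lemma mul_sur_gibbs {p q : ℝ≥0∞} (hp : p ≤ 1) (hq : q ≤ 1) :
    p * sur p + p ≤ p * sur q + q := by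
  by_cases h0 : p = 0
  · simp [h0]
  by_cases h1 : q = 0
  · simp [h1, sur_zero, h0]
  have hpt : p ≠ ⊤ := ne_top_of_le_ne_top ENNReal.one_ne_top hp
  have hqt : q ≠ ⊤ := ne_top_of_le_ne_top ENNReal.one_ne_top hq
  have hp' : 0 < p.toReal := ENNReal.toReal_pos h0 hpt
  have hq' : 0 < q.toReal := ENNReal.toReal_pos h1 hqt
  have hp1 : p.toReal ≤ 1 := by simpa using ENNReal.toReal_mono ENNReal.one_ne_top hp
  have hq1 : q.toReal ≤ 1 := by simpa using ENNReal.toReal_mono ENNReal.one_ne_top hq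
  have l1 := Real.log_nonpos hp'.le hp1
  have l2 := Real.log_nonpos hq'.le hq1
  simp only [sur, h0, h1, if_false]
  rw [← ENNReal.ofReal_toReal hpt, ← ENNReal.ofReal_toReal hqt,
    ENNReal.toReal_ofReal hp'.le, ENNReal.toReal_ofReal hq'.le,
    ← ENNReal.ofReal_mul hp'.le, ← ENNReal.ofReal_mul hp'.le,
    ← ENNReal.ofReal_add (by nlinarith) hp'.le, ← ENNReal.ofReal_add (by nlinarith) hq'.le]
  apply ENNReal.ofReal_le_ofReal
  have := Real.log_le_sub_one_of_pos (div_pos hq' hp')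
  rw [Real.log_div hq'.ne' hp'.ne'] at this
  have h2 : p.toReal * (Real.log q.toReal - Real.log p.toReal) ≤ p.toReal * (q.toReal / p.toReal - 1) :=
    mul_le_mul_of_nonneg_left this hp'.le
  rw [mul_sub, mul_sub, mul_div_cancel₀ _ hp'.ne'] at h2
  linarith

/-- entropy -/
noncomputable def Ent {α : Type*} (p : α → ℝ≥0∞) : ℝ≥0∞ := ∑' x, p x * sur (p x)

def IsP {α : Type*} (p : α → ℝ≥0∞) : Prop := ∑' x, p x = 1

lemma IsP.le_one {α : Type*} {p : α → ℝ≥0∞} (h : IsP p) (x : α) : p x ≤ 1 :=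
  (ENNReal.le_tsum x).trans h.le

lemma gibbs {α : Type*} {p q : α → ℝ≥0∞} (hp : IsP p) (hq : ∑' x, q x ≤ 1) :
    Ent p ≤ ∑' x, p x * sur (q x) := by
  have h : ∑' x, (p x * sur (p x) + p x) ≤ ∑' x, (p x * sur (q x) + q x) :=
    ENNReal.tsum_le_tsum fun x => mul_sur_gibbs (hp.le_one x) ((ENNReal.le_tsum x).trans hq)
  rw [ENNReal.tsum_add, ENNReal.tsum_add, hp] at h
  have h2 := h.trans (add_le_add_right hq _)
  exact (ENNReal.add_le_add_iff_right ENNReal.one_ne_top).1 h2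

section conv
variable {G : Type*} [Group G]

noncomputable def cnv (p q : G → ℝ≥0∞) : G → ℝ≥0∞ := fun g => ∑' h, p h * q (h⁻¹ * g)

noncomputable def cpow (p : G → ℝ≥0∞) : ℕ → G → ℝ≥0∞
  | 0 => ({1} : Set G).indicator fun _ => 1
  | n + 1 => cnv p (cpow p n)

lemma tsum_mul_left_shift (f : G → ℝ≥0∞) (h : G) : ∑' g, f (h * g) = ∑' g, f g :=
  (Equiv.mulLeft h).tsum_eq f

lemma tsum_cnv (p q : G → ℝ≥0∞) (f : G → ℝ≥0∞) :
    ∑' g, cnv p q g * f g = ∑' h, p h * ∑' k, q k * f (h * k) := by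
  simp only [cnv, ← ENNReal.tsum_mul_right]
  rw [ENNReal.tsum_comm]
  refine tsum_congr fun h => ?_
  rw [← tsum_mul_left_shift _ h, ← ENNReal.tsum_mul_left]
  simp [mul_assoc]

lemma isP_cnv {p q : G → ℝ≥0∞} (hp : IsP p) (hq : IsP q) : IsP (cnv p q) := by
  have := tsum_cnv p q (fun _ => 1)
  simp only [mul_one] at this
  unfold IsP at *
  rw [this, hq]; simp [hp]

lemma isP_cpow {p : G → ℝ≥0∞} (hp : IsP p) : ∀ n, IsP (cpow p n)
  | 0 => by
    classical
    unfold IsP cpow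
    rw [tsum_eq_single 1] <;> simp +contextual
  | n + 1 => isP_cnv hp (isP_cpow hp n)

lemma tsum_cpow_zero (p : G → ℝ≥0∞) (f : G → ℝ≥0∞) : ∑' g, cpow p 0 g * f g = f 1 := by
  unfold cpow
  rw [tsum_eq_single 1] <;> simp +contextual

lemma ext_of_tsum {α : Type*} {p q : α → ℝ≥0∞}
    (h : ∀ f : α → ℝ≥0∞, ∑' g, p g * f g = ∑' g, q g * f g) : p = q := by
  classical
  funext x
  have := h (fun y => if y = x then 1 else 0)
  simpa using this

lemma cpow_add (p : G → ℝ≥0∞) (m n : ℕ) : cpow p (m + n) = cnv (cpow p m) (cpow p n) := by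
  induction m with
  | zero =>
    refine ext_of_tsum fun f => ?_
    rw [tsum_cnv, tsum_cpow_zero]; simp
  | succ m ih =>
    rw [show m + 1 + n = (m + n) + 1 by ring]
    refine ext_of_tsum fun f => ?_
    rw [tsum_cnv]
    show ∑' g, cnv p (cpow p (m+n)) g * f g = ∑' h, cnv p (cpow p m) h * _
    rw [tsum_cnv, tsum_cnv]
    refine tsum_congr fun h => ?_
    rw [ih, tsum_cnv]
    simp [mul_assoc]

lemma cpow_one (p : G → ℝ≥0∞) : cpow p 1 = p := by
  refine ext_of_tsum fun f => ?_
  show ∑' g, cnv p (cpow p 0) g * f g = _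
  rw [tsum_cnv]
  simp [tsum_cpow_zero]

lemma cpow_cpow (p : G → ℝ≥0∞) (m n : ℕ) : cpow (cpow p m) n = cpow p (m * n) := by
  induction n with
  | zero => rfl
  | succ n ih =>
    show cnv (cpow p m) (cpow (cpow p m) n) = _
    rw [ih, ← cpow_add]; congr 1; ring

lemma le_cnv (p q : G → ℝ≥0∞) (h k : G) : p h * q k ≤ cnv p q (h * k) := by
  unfold cnv
  refine le_trans ?_ (ENNReal.le_tsum h)
  simp

lemma Ent_cnv_le {p q : G → ℝ≥0∞} (hp : IsP p) (hq : IsP q) :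
    Ent (cnv p q) ≤ Ent p + Ent q := by
  unfold Ent
  rw [tsum_cnv]
  calc ∑' h, p h * ∑' k, q k * sur (cnv p q (h * k))
      ≤ ∑' h, p h * ∑' k, (q k * sur (p h) + q k * sur (q k)) := by
        gcongr with h k
        rw [← mul_add, ← sur_mul (hp.le_one _) (hq.le_one _)]
        gcongr
        exact sur_anti (le_cnv p q h k)
    _ = _ := by
        simp only [ENNReal.tsum_add, ENNReal.tsum_mul_right, mul_add]
        rw [hq, hp]; simp

lemma Ent_cpow_zero (p : G → ℝ≥0∞) : Ent (cpow p 0) = 0 := by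
  unfold Ent; rw [tsum_cpow_zero]; simp [cpow, sur_one]

lemma Ent_cpow_le {p : G → ℝ≥0∞} (hp : IsP p) (n : ℕ) : Ent (cpow p n) ≤ n * Ent p := by
  induction n with
  | zero => simp [Ent_cpow_zero]
  | succ n ih =>
    refine (Ent_cnv_le hp (isP_cpow hp n)).trans ?_
    push_cast; rw [add_mul, one_mul, add_comm]; gcongr

/-- coding inequality -/
lemma code {pU pV : G → ℝ≥0∞} (hU : IsP pU) (hV : IsP pV) (q : G → G → ℝ≥0∞)
    (hq : ∀ w, ∑' u, q u w ≤ 1) :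
    Ent pU + Ent pV ≤ Ent (cnv pU pV) + ∑' u, pU u * ∑' v, pV v * sur (q u (u * v)) := by
  have hc := isP_cnv hU hV
  have hq1 : ∀ u w, q u w ≤ 1 := fun u w => (ENNReal.le_tsum u).trans (hq w)
  have hP : IsP (fun x : G × G => pU x.1 * pV x.2) := by
    unfold IsP
    rw [ENNReal.tsum_prod']
    simp only [ENNReal.tsum_mul_left]
    rw [hV]; simpa [IsP] using hU
  have hQ : ∑' x : G × G, cnv pU pV (x.1 * x.2) * q x.1 (x.1 * x.2) ≤ 1 := by
    rw [ENNReal.tsum_prod']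
    have : ∀ u, ∑' v, cnv pU pV (u * v) * q u (u * v) = ∑' w, cnv pU pV w * q u w :=
      fun u => tsum_mul_left_shift (fun w => cnv pU pV w * q u w) u
    simp only [this]
    rw [ENNReal.tsum_comm]
    simp only [ENNReal.tsum_mul_left]
    calc _ ≤ ∑' w, cnv pU pV w * 1 := by gcongr with w; exact hq w
      _ = 1 := by simpa [IsP] using hc
  have := gibbs hP hQ
  unfold Ent at *
  rw [ENNReal.tsum_prod', ENNReal.tsum_prod', ] at this
  have e1 : ∑' u, ∑' v, pU u * pV v * sur (pU u * pV v)
      = ∑' x, pU x * sur (pU x) + ∑' x, pV x * sur (pV x) := by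
    have : ∀ u v, pU u * pV v * sur (pU u * pV v) =
       pU u * sur (pU u) * pV v + pU u * (pV v * sur (pV v)) := by
      intro u v
      rw [sur_mul (hU.le_one _) (hV.le_one _)]; ring
    simp only [this, ENNReal.tsum_add, ENNReal.tsum_mul_left, ENNReal.tsum_mul_right]
    rw [hU, hV]; simp
  have e2 : ∑' u, ∑' v, pU u * pV v * sur (cnv pU pV (u * v) * q u (u * v))
      = ∑' x, cnv pU pV x * sur (cnv pU pV x) + ∑' u, pU u * ∑' v, pV v * sur (q u (u * v)) := by
    rw [tsum_cnv]
    have : ∀ u v, pU u * pV v * sur (cnv pU pV (u * v) * q u (u * v)) =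
       pU u * (pV v * sur (cnv pU pV (u * v))) + pU u * (pV v * sur (q u (u * v))) := by
      intro u v
      rw [sur_mul (hc.le_one _) (hq1 _ _)]; ring
    simp only [this, ENNReal.tsum_add, ENNReal.tsum_mul_left]
  rw [← e1, ← e2]
  exact this

end conv
end EC

open scoped ENNReal

namespace EC

lemma fatou {α : Type*} {F : ℕ → α → ℝ≥0∞} {f : α → ℝ≥0∞}
    (h : ∀ x, f x ≤ liminf (fun i => F i x) atTop) :
    ∑' x, f x ≤ liminf (fun i => ∑' x, F i x) atTop := by
  let _ : MeasurableSpace α := ⊤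
  have := MeasureTheory.lintegral_liminf_le (μ := MeasureTheory.Measure.count) (u := atTop) (f := F)
    (fun n => measurable_from_top)
  rw [MeasureTheory.lintegral_count] at this
  simp only [MeasureTheory.lintegral_count] at this
  exact (ENNReal.tsum_le_tsum h).trans this

lemma lsc_ev {a : ℝ≥0∞} {f : ℕ → ℝ≥0∞} (h : a ≤ liminf f atTop) (ha : a ≠ ⊤) {ε : ℝ≥0∞}
    (hε : ε ≠ 0) : ∀ᶠ i in atTop, a ≤ f i + ε := by
  by_cases h0 : a = 0
  · simp [h0]
  · have : a - ε < liminf f atTop := lt_of_lt_of_le (ENNReal.sub_lt_self ha h0 hε) h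
    filter_upwards [eventually_lt_of_lt_liminf this] with i hi
    exact tsub_le_iff_right.1 hi.le

lemma squeeze_lsc {E C : ℕ → ℝ≥0∞} {e c : ℝ≥0∞} (hE : e ≤ liminf E atTop)
    (hC : c ≤ liminf C atTop) (hT : Tendsto (fun i => E i + C i) atTop (𝓝 (e + c)))
    (hfin : e + c ≠ ⊤) : Tendsto E atTop (𝓝 e) := by
  have he : e ≠ ⊤ := fun h => hfin (by simp [h])
  have hc : c ≠ ⊤ := fun h => hfin (by simp [h])
  rw [ENNReal.tendsto_nhds he]
  intro ε hε
  have hε2 : ε / 2 ≠ 0 := by simpa using hε.ne'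
  filter_upwards [lsc_ev hE he hε.ne', lsc_ev hC hc hε2,
    (ENNReal.tendsto_nhds hfin).1 hT (ε / 2) (pos_iff_ne_zero.2 hε2)] with i h1 h2 h4
  refine ⟨tsub_le_iff_right.2 h1, ?_⟩
  by_cases hεt : ε = ⊤
  · simp [hεt]
  have h5 : E i + C i ≤ e + c + ε / 2 := h4.2
  have hCi : C i ≠ ⊤ := by
    intro h
    rw [h] at h5
    simp at h5
    rcases h5 with h5 | h5
    · rcases h5 with h5 | h5 <;> contradiction
    · exact (ENNReal.div_ne_top hεt (by simp)) h5
  have h6 : E i + C i ≤ e + ε + C i := by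
    calc E i + C i ≤ e + c + ε / 2 := h5
      _ ≤ e + (C i + ε / 2) + ε / 2 := by gcongr
      _ = e + (ε / 2 + ε / 2) + C i := by ring
      _ = _ := by rw [ENNReal.add_halves]
  exact (ENNReal.add_le_add_iff_right hCi).1 h6

lemma tendsto_sur {f : ℕ → ℝ≥0∞} {a : ℝ≥0∞} (h : Tendsto f atTop (𝓝 a)) (ha : a ≠ 0)
    (ha' : a ≠ ⊤) : Tendsto (fun i => sur (f i)) atTop (𝓝 (sur a)) := by
  have h1 : Tendsto (fun i => ENNReal.ofReal (-Real.log (f i).toReal)) atTop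
      (𝓝 (ENNReal.ofReal (-Real.log a.toReal))) := by
    refine ENNReal.tendsto_ofReal (Tendsto.neg (Tendsto.log ?_ ?_))
    · exact (ENNReal.tendsto_toReal ha').comp h
    · exact (ENNReal.toReal_pos ha ha').ne'
  have h2 : sur a = ENNReal.ofReal (-Real.log a.toReal) := by simp [sur, ha]
  rw [h2]
  refine h1.congr' ?_
  filter_upwards [h.eventually_ne ha] with i hi
  simp [sur, hi]

/-- lower semicontinuity of `a sur (a/b)` -/
lemma lsc_term {a b : ℕ → ℝ≥0∞} {a0 b0 : ℝ≥0∞} (ha : Tendsto a atTop (𝓝 a0))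
    (hb : Tendsto b atTop (𝓝 b0)) (hab : a0 ≤ b0) (hb1 : b0 ≤ 1) :
    a0 * sur (a0 / b0) ≤ liminf (fun i => a i * sur (a i / b i)) atTop := by
  by_cases h0 : a0 = 0
  · simp [h0]
  have hb0 : b0 ≠ 0 := fun h => h0 (by simpa [h] using hab)
  have hbt : b0 ≠ ⊤ := ne_top_of_le_ne_top ENNReal.one_ne_top hb1
  have hat : a0 ≠ ⊤ := ne_top_of_le_ne_top hbt hab
  have hd : a0 / b0 ≠ 0 := by simp [ENNReal.div_eq_zero_iff, h0, hbt]
  have hdt : a0 / b0 ≠ ⊤ := ENNReal.div_ne_top hat hb0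
  have : Tendsto (fun i => a i * sur (a i / b i)) atTop (𝓝 (a0 * sur (a0 / b0))) := by
    refine ENNReal.Tendsto.mul ha (Or.inl h0) (tendsto_sur ?_ hd hdt) (Or.inr hat)
    exact ENNReal.Tendsto.div ha (Or.inl h0) hb (Or.inl hbt)
  exact this.liminf_eq.ge

lemma tendsto_of_lsc_isP {α : Type*} {p : ℕ → α → ℝ≥0∞} {q : α → ℝ≥0∞} (hp : ∀ i, IsP (p i))
    (hq : IsP q) (h : ∀ x, q x ≤ liminf (fun i => p i x) atTop) (x : α) :
    Tendsto (fun i => p i x) atTop (𝓝 (q x)) := by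
  classical
  have key : ∀ r : α → ℝ≥0∞, ∑' y, r y = r x + ∑' y, if y = x then 0 else r y :=
    fun r => ENNReal.tsum_eq_add_tsum_ite x
  refine squeeze_lsc (C := fun i => ∑' y, if y = x then 0 else p i y)
    (c := ∑' y, if y = x then 0 else q y) (h x) (fatou fun y => ?_) ?_ ?_
  · by_cases hy : y = x
    · simp [hy]
    · simpa [hy] using h y
  · simp only [← key]
    have : ∀ i, ∑' y, p i y = 1 := hp
    simp only [this]
    rw [show ∑' y, q y = 1 from hq]
    exact tendsto_const_nhds
  · rw [← key, show ∑' y, q y = 1 from hq]; simp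

lemma tv {α : Type*} {p : ℕ → α → ℝ≥0∞} {q : α → ℝ≥0∞} (hp : ∀ i, IsP (p i))
    (hq : IsP q) (h : ∀ x, Tendsto (fun i => p i x) atTop (𝓝 (q x))) {ε : ℝ≥0∞} (hε : ε ≠ 0) :
    ∀ᶠ i in atTop, ∀ f : α → ℝ≥0∞, (∀ x, f x ≤ 1) →
      ∑' x, p i x * f x ≤ ∑' x, q x * f x + ε := by
  have h1 : ∑' x, q x ≤ liminf (fun i => ∑' x, min (p i x) (q x)) atTop := by
    refine fatou fun x => ?_
    have : Tendsto (fun i => min (p i x) (q x)) atTop (𝓝 (min (q x) (q x))) :=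
      (h x).min tendsto_const_nhds
    rw [min_self] at this
    exact this.liminf_eq.ge
  rw [show ∑' y, q y = 1 from hq] at h1
  filter_upwards [lsc_ev h1 (by simp) hε] with i hi f hf
  have h2 : ∀ x, p i x = min (p i x) (q x) + (p i x - min (p i x) (q x)) := fun x =>
    (add_tsub_cancel_of_le (min_le_left _ _)).symm
  have hfin : ∑' x, min (p i x) (q x) ≠ ⊤ := ne_top_of_le_ne_top ENNReal.one_ne_top
    ((ENNReal.tsum_le_tsum fun x => min_le_left _ _).trans (hp i).le)
  have h3 : ∑' x, (p i x - min (p i x) (q x)) ≤ ε := by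
    have : ∑' x, min (p i x) (q x) + ∑' x, (p i x - min (p i x) (q x)) = 1 := by
      rw [← ENNReal.tsum_add]; simp only [← h2]; exact hp i
    rw [← this] at hi
    exact (ENNReal.add_le_add_iff_left hfin).1 hi
  calc ∑' x, p i x * f x = ∑' x, (min (p i x) (q x) * f x + (p i x - min (p i x) (q x)) * f x) :=
        tsum_congr fun x => by rw [← add_mul, ← h2]
    _ ≤ ∑' x, (q x * f x + (p i x - min (p i x) (q x))) := by
        gcongr with x
        · exact min_le_right _ _
        · exact mul_le_of_le_one_right' (hf x)
    _ ≤ _ := by rw [ENNReal.tsum_add]; gcongr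

section
variable {α : Type*} {p : ℕ → α → ℝ≥0∞} {q : α → ℝ≥0∞}

lemma lsc_sur (hq : IsP q) (h : ∀ x, Tendsto (fun i => p i x) atTop (𝓝 (q x))) (x : α) :
    q x * sur (q x) ≤ liminf (fun i => p i x * sur (p i x)) atTop := by
  simpa using lsc_term (h x) (tendsto_const_nhds (x := (1 : ℝ≥0∞))) (hq.le_one x) le_rfl

lemma lsc_Ent (hq : IsP q) (h : ∀ x, Tendsto (fun i => p i x) atTop (𝓝 (q x))) :
    Ent q ≤ liminf (fun i => Ent (p i)) atTop := fatou (lsc_sur hq h)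

/-- uniform tails -/
lemma tail_small (hq : IsP q) (h : ∀ x, Tendsto (fun i => p i x) atTop (𝓝 (q x)))
    (hE : Tendsto (fun i => Ent (p i)) atTop (𝓝 (Ent q))) (hfin : Ent q ≠ ⊤)
    {ε : ℝ≥0∞} (hε : ε ≠ 0) : ∃ F : Set α, F.Finite ∧
      ∀ᶠ i in atTop, ∑' x, p i x * (Fᶜ.indicator (fun x => sur (p i x)) x) ≤ ε := by
  classical
  have h2 : ε / 2 ≠ 0 := by simpa using hε
  have ht := ENNReal.tendsto_tsum_compl_atTop_zero hfin
  obtain ⟨F, hF⟩ := (ht.eventually (eventually_le_nhds (b := ε / 2)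
    (pos_iff_ne_zero.2 h2))).exists
  refine ⟨F, F.finite_toSet, ?_⟩
  have e0 : ∀ r : α → ℝ≥0∞, ∑' x, r x * ((F : Set α)ᶜ.indicator (fun x => sur (r x)) x) =
      ∑' x : {x // x ∉ F}, r x * sur (r x) := by
    intro r
    rw [show (∑' x : {x // x ∉ F}, r x * sur (r x)) = _ from
      tsum_subtype ((F : Set α)ᶜ) (fun x => r x * sur (r x))]
    refine tsum_congr fun x => ?_
    by_cases hx : x ∈ F <;> simp [hx, Set.indicator]
  have e1 : ∀ r : α → ℝ≥0∞, Ent r = ∑' x, r x * ((F : Set α)ᶜ.indicator (fun x => sur (r x)) x)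
      + ∑' x, r x * ((F : Set α).indicator (fun x => sur (r x)) x) := by
    intro r
    rw [← ENNReal.tsum_add]
    refine tsum_congr fun x => ?_
    by_cases hx : x ∈ F <;> simp [hx]
  have hl : ∀ B : Set α, ∑' x, q x * (B.indicator (fun x => sur (q x)) x) ≤
      liminf (fun i => ∑' x, p i x * (B.indicator (fun x => sur (p i x)) x)) atTop := by
    intro B
    refine fatou fun x => ?_
    by_cases hx : x ∈ B
    · simpa [hx] using lsc_sur hq h x
    · simp [hx]
  have := squeeze_lsc (hl (F : Set α)ᶜ) (hl F) (by simpa only [← e1] using hE)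
    (by rwa [← e1])
  have hlt : ∑' x, q x * ((F : Set α)ᶜ.indicator (fun x => sur (q x)) x) < ε ∨ ε = ⊤ := by
    by_cases hεt : ε = ⊤
    · exact Or.inr hεt
    · left; rw [e0]; exact lt_of_le_of_lt hF (ENNReal.half_lt_self hε hεt)
  rcases hlt with hlt | rfl
  · exact (this.eventually (eventually_le_nhds hlt))
  · simp

end

section
variable {G : Type*} [Group G] {p p' : ℕ → G → ℝ≥0∞} {q q' : G → ℝ≥0∞}

lemma tendsto_cnv (hp : ∀ i, IsP (p i)) (hq : IsP q)
    (h : ∀ x, Tendsto (fun i => p i x) atTop (𝓝 (q x)))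
    (hp' : ∀ i, IsP (p' i)) (hq' : IsP q')
    (h' : ∀ x, Tendsto (fun i => p' i x) atTop (𝓝 (q' x))) (x : G) :
    Tendsto (fun i => cnv (p i) (p' i) x) atTop (𝓝 (cnv q q' x)) := by
  refine tendsto_of_lsc_isP (fun i => isP_cnv (hp i) (hp' i)) (isP_cnv hq hq') (fun g => ?_) x
  refine fatou fun y => ?_
  have : Tendsto (fun i => p i y * p' i (y⁻¹ * g)) atTop (𝓝 (q y * q' (y⁻¹ * g))) :=
    ENNReal.Tendsto.mul (h y) (Or.inr (ne_top_of_le_ne_top ENNReal.one_ne_top (hq'.le_one _)))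
      (h' _) (Or.inr (ne_top_of_le_ne_top ENNReal.one_ne_top (hq.le_one _)))
  exact this.liminf_eq.ge

lemma Ent_split {p q : G → ℝ≥0∞} (hp : IsP p) (hq : IsP q) : Ent p + Ent q = Ent (cnv p q) +
    ∑' x : G × G, p x.1 * q x.2 * sur (p x.1 * q x.2 / cnv p q (x.1 * x.2)) := by
  have hc := isP_cnv hp hq
  have h1 : ∀ h k, p h * q k * sur (p h * q k / cnv p q (h * k)) +
      p h * q k * sur (cnv p q (h * k)) = p h * q k * sur (p h) + p h * q k * sur (q k) := by
    intro h k
    by_cases h0 : p h * q k = 0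
    · simp [h0]
    have hle := le_cnv p q h k
    have hc0 : cnv p q (h * k) ≠ 0 := fun e => h0 (by simpa [e] using hle)
    rw [← mul_add, ← mul_add, ← sur_mul (hp.le_one _) (hq.le_one _), ← sur_mul
      (ENNReal.div_le_of_le_mul (by simpa using hle)) (hc.le_one _), ENNReal.div_mul_cancel hc0
      (ne_top_of_le_ne_top ENNReal.one_ne_top (hc.le_one _))]
  have h2 : ∑' h, ∑' k, (p h * q k * sur (p h) + p h * q k * sur (q k)) = Ent p + Ent q := by
    have : ∀ h k, p h * q k * sur (p h) + p h * q k * sur (q k) =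
      p h * sur (p h) * q k + p h * (q k * sur (q k)) := fun h k => by ring
    simp only [this, ENNReal.tsum_add, ENNReal.tsum_mul_left, ENNReal.tsum_mul_right]
    rw [hp, hq]; simp [Ent]
  rw [← h2]
  simp only [← h1, ENNReal.tsum_add]
  rw [add_comm, ENNReal.tsum_prod']
  congr 1
  unfold Ent
  rw [tsum_cnv]
  simp only [← ENNReal.tsum_mul_left, mul_assoc]

lemma tendsto_Ent_cnv (hp : ∀ i, IsP (p i)) (hq : IsP q)
    (h : ∀ x, Tendsto (fun i => p i x) atTop (𝓝 (q x)))
    (hp' : ∀ i, IsP (p' i)) (hq' : IsP q')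
    (h' : ∀ x, Tendsto (fun i => p' i x) atTop (𝓝 (q' x)))
    (hE : Tendsto (fun i => Ent (p i)) atTop (𝓝 (Ent q))) (hfin : Ent q ≠ ⊤)
    (hE' : Tendsto (fun i => Ent (p' i)) atTop (𝓝 (Ent q'))) (hfin' : Ent q' ≠ ⊤) :
    Tendsto (fun i => Ent (cnv (p i) (p' i))) atTop (𝓝 (Ent (cnv q q'))) := by
  have hc := tendsto_cnv hp hq h hp' hq' h'
  refine squeeze_lsc (lsc_Ent (isP_cnv hq hq') hc) (fatou fun x => ?_)
    (C := fun i => ∑' x : G × G, p i x.1 * p' i x.2 *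
      sur (p i x.1 * p' i x.2 / cnv (p i) (p' i) (x.1 * x.2)))
    (c := ∑' x : G × G, q x.1 * q' x.2 * sur (q x.1 * q' x.2 / cnv q q' (x.1 * x.2))) ?_ ?_
  · refine lsc_term ?_ (hc _) (le_cnv _ _ _ _) ((isP_cnv hq hq').le_one _)
    exact ENNReal.Tendsto.mul (h _)
      (Or.inr (ne_top_of_le_ne_top ENNReal.one_ne_top (hq'.le_one _)))
      (h' _) (Or.inr (ne_top_of_le_ne_top ENNReal.one_ne_top (hq.le_one _)))
  · rw [← Ent_split hq hq']
    have : ∀ i, _ := fun i => Ent_split (hp i) (hp' i)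
    simp only [← this]
    exact hE.add hE'
  · rw [← Ent_split hq hq']; simp [hfin, hfin']

lemma tendsto_cpow (hp : ∀ i, IsP (p i)) (hq : IsP q)
    (h : ∀ x, Tendsto (fun i => p i x) atTop (𝓝 (q x))) (n : ℕ) (x : G) :
    Tendsto (fun i => cpow (p i) n x) atTop (𝓝 (cpow q n x)) := by
  induction n generalizing x with
  | zero => exact tendsto_const_nhds
  | succ n ih => exact tendsto_cnv hp hq h (fun i => isP_cpow (hp i) n) (isP_cpow hq n) ih x

lemma Ent_cpow_ne_top (hq : IsP q) (hfin : Ent q ≠ ⊤) (n : ℕ) : Ent (cpow q n) ≠ ⊤ :=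
  ne_top_of_le_ne_top (ENNReal.mul_ne_top (by simp) hfin) (Ent_cpow_le hq n)

lemma tendsto_Ent_cpow (hp : ∀ i, IsP (p i)) (hq : IsP q)
    (h : ∀ x, Tendsto (fun i => p i x) atTop (𝓝 (q x)))
    (hE : Tendsto (fun i => Ent (p i)) atTop (𝓝 (Ent q))) (hfin : Ent q ≠ ⊤) (n : ℕ) :
    Tendsto (fun i => Ent (cpow (p i) n)) atTop (𝓝 (Ent (cpow q n))) := by
  induction n with
  | zero => simp only [Ent_cpow_zero]; exact tendsto_const_nhds
  | succ n ih => 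
    exact tendsto_Ent_cnv hp hq h (fun i => isP_cpow (hp i) n) (isP_cpow hq n)
      (tendsto_cpow hp hq h n) hE hfin ih (Ent_cpow_ne_top hq hfin n)

end
end EC

open scoped ENNReal

namespace EC
section EE
open Function
variable {α : Type*}

noncomputable def II (p : α → ℝ≥0∞) (j : ℕ) (f : (ℕ → α) → ℝ≥0∞) (x : ℕ → α) : ℝ≥0∞ :=
  ∑' s, p s * f (update x j s)

noncomputable def EE (p : α → ℝ≥0∞) : ℕ → ((ℕ → α) → ℝ≥0∞) → (ℕ → α) → ℝ≥0∞
  | 0, f => f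
  | k + 1, f => EE p k (II p k f)

variable {p : α → ℝ≥0∞}

lemma EE_mono_on {k : ℕ} {f g : (ℕ → α) → ℝ≥0∞} {x0 : ℕ → α}
    (h : ∀ x, (∀ j, k ≤ j → x j = x0 j) → f x ≤ g x) : EE p k f x0 ≤ EE p k g x0 := by
  induction k generalizing f g with
  | zero =>
    exact h x0 fun _ _ => rfl
  | succ k ih =>
    refine ih fun x hx => ?_
    unfold II
    gcongr with s
    refine h _ fun j hj => ?_
    rw [update_of_ne (by omega)]
    exact hx j (by omega)

lemma EE_mono {k : ℕ} {f g : (ℕ → α) → ℝ≥0∞} {x0 : ℕ → α}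
    (h : ∀ x, f x ≤ g x) : EE p k f x0 ≤ EE p k g x0 := EE_mono_on fun x _ => h x

lemma EE_tsum {ι : Type*} (k : ℕ) (f : ι → (ℕ → α) → ℝ≥0∞) (x0 : ℕ → α) :
    EE p k (fun x => ∑' i, f i x) x0 = ∑' i, EE p k (f i) x0 := by
  induction k generalizing f with
  | zero => rfl
  | succ k ih =>
    show EE p k _ x0 = ∑' i, EE p k (II p k (f i)) x0
    rw [← ih]
    congr 1
    ext x
    unfold II
    rw [ENNReal.tsum_comm]
    simp only [ENNReal.tsum_mul_left]

lemma EE_add (k : ℕ) (f g : (ℕ → α) → ℝ≥0∞) (x0 : ℕ → α) :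
    EE p k (fun x => f x + g x) x0 = EE p k f x0 + EE p k g x0 := by
  have := EE_tsum (p := p) k (fun b : Bool => cond b f g) x0
  simpa [tsum_bool, add_comm] using this

lemma EE_sum {ι : Type*} (s : Finset ι) (k : ℕ) (f : ι → (ℕ → α) → ℝ≥0∞) (x0 : ℕ → α) :
    EE p k (fun x => ∑ i ∈ s, f i x) x0 = ∑ i ∈ s, EE p k (f i) x0 := by
  have := EE_tsum (p := p) k (fun i : s => f i) x0
  simpa [tsum_fintype, Finset.sum_attach s (fun i => EE p k (f i) x0),
    fun x => Finset.sum_attach s (fun i => f i x)] using this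

lemma EE_mul (k : ℕ) (c : ℝ≥0∞) (f : (ℕ → α) → ℝ≥0∞) (x0 : ℕ → α) :
    EE p k (fun x => c * f x) x0 = c * EE p k f x0 := by
  induction k generalizing f with
  | zero => rfl
  | succ k ih =>
    show EE p k _ x0 = c * EE p k (II p k f) x0
    rw [← ih]
    congr 1
    ext x
    unfold II
    rw [← ENNReal.tsum_mul_left]
    refine tsum_congr fun s => by ring

lemma II_const (hp : IsP p) (j : ℕ) (f : (ℕ → α) → ℝ≥0∞) (x : ℕ → α)
    (h : ∀ s, f (update x j s) = f x) : II p j f x = f x := by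
  unfold II
  simp only [h, ENNReal.tsum_mul_right]
  rw [show ∑' s, p s = 1 from hp, one_mul]

lemma EE_II (hp : IsP p) {j k : ℕ} (hjk : j < k) (f : (ℕ → α) → ℝ≥0∞) :
    EE p k (II p j f) = EE p k f := by
  induction k generalizing f with
  | zero => omega
  | succ k ih =>
    show EE p k (II p k (II p j f)) = EE p k (II p k f)
    rcases Nat.lt_succ_iff_lt_or_eq.1 hjk with h | rfl
    · rw [← ih h (II p k f)]
      congr 1
      ext x
      unfold II
      simp only [← ENNReal.tsum_mul_left]
      rw [ENNReal.tsum_comm]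
      refine tsum_congr fun s => tsum_congr fun t => ?_
      rw [update_comm h.ne]
      ring
    · congr 1
      ext x
      refine II_const hp _ _ _ fun s => ?_
      unfold II
      simp

lemma EE_const (hp : IsP p) (k : ℕ) (c : ℝ≥0∞) (x0 : ℕ → α) : EE p k (fun _ => c) x0 = c := by
  induction k with
  | zero => rfl
  | succ k ih =>
    have : EE p (k+1) (fun _ => c) x0 = EE p k (II p k (fun _ => c)) x0 := rfl
    rw [this, show II p k (fun _ => c) = fun _ => c from
      funext fun x => II_const hp k _ x fun s => rfl]
    exact ih

lemma EE_coord (hp : IsP p) {k b : ℕ} (hb : b < k) (f : α → ℝ≥0∞) (x0 : ℕ → α) :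
    EE p k (fun x => f (x b)) x0 = ∑' s, p s * f s := by
  rw [← EE_II hp hb]
  have : II p b (fun x => f (x b)) = fun _ => ∑' s, p s * f s := by
    ext x; unfold II; simp
  rw [this, EE_const hp]

lemma le_EE {k : ℕ} (f : (ℕ → α) → ℝ≥0∞) {x0 y : ℕ → α} (h : ∀ j, k ≤ j → y j = x0 j) :
    (∏ j ∈ Finset.range k, p (y j)) * f y ≤ EE p k f x0 := by
  induction k generalizing f y with
  | zero =>
    have : y = x0 := funext fun j => h j (by omega)
    simp [EE, this]
  | succ k ih =>
    have h2 := ih (II p k f) (y := update y k (x0 k)) (by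
      intro j hj
      by_cases e : j = k
      · subst e; simp
      · rw [update_of_ne e]; exact h j (by omega))
    refine le_trans ?_ h2
    rw [Finset.prod_range_succ, mul_assoc]
    have : ∏ j ∈ Finset.range k, p (update y k (x0 k) j) = ∏ j ∈ Finset.range k, p (y j) := by
      refine Finset.prod_congr rfl fun j hj => ?_
      rw [update_of_ne (by have := Finset.mem_range.1 hj; omega)]
    rw [this]
    gcongr
    unfold II
    refine le_trans ?_ (ENNReal.le_tsum (y k))
    simp

/-- product of adapted factors, integrating the top index first -/
lemma EE_prod_up (hp : IsP p) {c : ℝ≥0∞} {a : ℕ} (f : ℕ → (ℕ → α) → ℝ≥0∞)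
    (hf : ∀ i j x s, i < j → f i (update x j s) = f i x)
    {k : ℕ} (hc : ∀ j x, a ≤ j → II p j (f j) x ≤ c) (d : ℕ) (hd : a + d ≤ k) (x0 : ℕ → α) :
    EE p k (fun x => ∏ i ∈ Finset.range d, f (a + i) x) x0 ≤ c ^ d := by
  induction d with
  | zero => simp [EE_const hp]
  | succ d ih =>
    rw [← EE_II hp (show a + d < k by omega)]
    calc _ ≤ EE p k (fun x => c * ∏ i ∈ Finset.range d, f (a + i) x) x0 := by
          refine EE_mono fun x => ?_
          unfold II
          have : ∀ s, p s * ∏ i ∈ Finset.range (d+1), f (a + i) (update x (a + d) s) =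
              p s * f (a+d) (update x (a+d) s) * ∏ i ∈ Finset.range d, f (a + i) x := by
            intro s
            rw [Finset.prod_range_succ]
            have : ∏ i ∈ Finset.range d, f (a + i) (update x (a + d) s) =
                ∏ i ∈ Finset.range d, f (a + i) x := Finset.prod_congr rfl fun i hi =>
              hf _ _ _ _ (by have := Finset.mem_range.1 hi; omega)
            rw [this]; ring
          simp only [this]
          rw [ENNReal.tsum_mul_right]
          gcongr
          exact hc (a+d) x (by omega)
      _ ≤ _ := by
          rw [EE_mul, pow_succ, mul_comm]
          gcongr
          exact ih (by omega)

lemma EE_prod_down (hp : IsP p) {c : ℝ≥0∞} {e : ℕ} (f : ℕ → (ℕ → α) → ℝ≥0∞)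
    (hf : ∀ i j x s, j < i → f i (update x j s) = f i x)
    {k : ℕ} (hc : ∀ j x, j < e → II p j (f j) x ≤ c) (he : e ≤ k) (d : ℕ) (a : ℕ)
    (had : a + d = e) (x0 : ℕ → α) :
    EE p k (fun x => ∏ i ∈ Finset.range d, f (a + i) x) x0 ≤ c ^ d := by
  induction d generalizing a with
  | zero => simp [EE_const hp]
  | succ d ih =>
    rw [← EE_II hp (show a < k by omega)]
    calc _ ≤ EE p k (fun x => c * ∏ i ∈ Finset.range d, f (a + 1 + i) x) x0 := by
          refine EE_mono fun x => ?_
          unfold II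
          have : ∀ s, p s * ∏ i ∈ Finset.range (d+1), f (a + i) (update x a s) =
              p s * f a (update x a s) * ∏ i ∈ Finset.range d, f (a + 1 + i) x := by
            intro s
            rw [Finset.prod_range_succ']
            have : ∏ i ∈ Finset.range d, f (a + (i + 1)) (update x a s) =
                ∏ i ∈ Finset.range d, f (a + 1 + i) x := Finset.prod_congr rfl fun i hi => by
              rw [hf _ _ _ _ (by omega)]; congr 1; ring
            rw [this]; simp only [add_zero]; ring
          simp only [this]
          rw [ENNReal.tsum_mul_right]
          gcongr
          exact hc a x (by omega)
      _ ≤ _ := by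
          rw [EE_mul, pow_succ, mul_comm]
          gcongr
          exact ih (a+1) (by omega)

open Classical in
/-- probability of long runs -/
lemma run_prob (hp : IsP p) {θ : ℝ≥0∞} (h0 : θ ≠ 0) (h1 : θ ≤ 1) {a : ℕ}
    (Lp Rp : ℕ → (ℕ → α) → Prop)
    (hL : ∀ i j x s, i < j → (Lp i (update x j s) ↔ Lp i x))
    (hR : ∀ i j x s, j < i → (Rp i (update x j s) ↔ Rp i x))
    {k : ℕ} (hLp : ∀ j x, a ≤ j → ∑' s, p s * (if Lp j (update x j s) then 1 else 0) ≤ θ ^ 2)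
    (hRp : ∀ j x, j < k → ∑' s, p s * (if Rp j (update x j s) then 1 else 0) ≤ θ ^ 2)
    (d : ℕ) (hd : a + d ≤ k) (x0 : ℕ → α) :
    EE p k (fun x => if ∀ i, a ≤ i → i < a + d → (Lp i x ∨ Rp i x) then 1 else 0) x0
      ≤ 2 * (2 * θ) ^ d := by
  have ht : θ ≠ ⊤ := ne_top_of_le_ne_top ENNReal.one_ne_top h1
  set f : ℕ → (ℕ → α) → ℝ≥0∞ := fun i x => θ + θ⁻¹ * (if Lp i x then 1 else 0) with hf
  set g : ℕ → (ℕ → α) → ℝ≥0∞ := fun i x => θ + θ⁻¹ * (if Rp i x then 1 else 0) with hg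
  have aux : ∀ (Q : ℕ → (ℕ → α) → Prop) j x, ∑' s, p s * (if Q j (update x j s) then 1 else 0)
      ≤ θ ^ 2 → II p j (fun x => θ + θ⁻¹ * (if Q j x then 1 else 0)) x ≤ 2 * θ := by
    intro Q j x hQ
    unfold II
    have : ∀ s, p s * (θ + θ⁻¹ * (if Q j (update x j s) then 1 else 0)) =
      p s * θ + θ⁻¹ * (p s * (if Q j (update x j s) then 1 else 0)) := fun s => by ring
    simp only [this]
    rw [ENNReal.tsum_add, ENNReal.tsum_mul_left, ENNReal.tsum_mul_right,
      show ∑' s, p s = 1 from hp, two_mul, one_mul]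
    gcongr
    calc _ ≤ θ⁻¹ * θ ^ 2 := by gcongr
      _ = θ := by rw [pow_two, ← mul_assoc, ENNReal.inv_mul_cancel h0 ht, one_mul]
  have key : ∀ x, (if ∀ i, a ≤ i → i < a + d → (Lp i x ∨ Rp i x) then (1:ℝ≥0∞) else 0) ≤
      ∏ i ∈ Finset.range d, f (a+i) x + ∏ i ∈ Finset.range d, g (a+i) x := by
    intro x
    split_ifs with h
    · by_contra hlt
      push Not at hlt
      have h2 : (∏ i ∈ Finset.range d, f (a+i) x) * ∏ i ∈ Finset.range d, g (a+i) x ≤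
          ∏ i ∈ Finset.range d, f (a+i) x := mul_le_of_le_one_right' (le_add_self.trans hlt.le)
      have h3 : ∏ i ∈ Finset.range d, f (a+i) x < 1 := le_self_add.trans_lt hlt
      have h4 : 1 ≤ (∏ i ∈ Finset.range d, f (a+i) x) * ∏ i ∈ Finset.range d, g (a+i) x := by
        rw [← Finset.prod_mul_distrib]
        refine Finset.one_le_prod' fun i hi => ?_
        have e1 : θ⁻¹ * θ = 1 := ENNReal.inv_mul_cancel h0 ht
        rcases h (a+i) (by omega) (by have := Finset.mem_range.1 hi; omega) with h | h
        · calc 1 = θ⁻¹ * θ := e1.symm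
            _ ≤ _ := by
              simp only [hf, hg, h, if_true, mul_one]
              gcongr
              · exact le_add_self
              · exact le_self_add
        · calc 1 = θ * θ⁻¹ := by rw [mul_comm]; exact e1.symm
            _ ≤ _ := by
              simp only [hf, hg, h, if_true, mul_one]
              gcongr
              · exact le_self_add
              · exact le_add_self
      exact absurd (h4.trans h2) (not_le.2 h3)
    · exact zero_le
  calc _ ≤ EE p k (fun x => ∏ i ∈ Finset.range d, f (a+i) x +
        ∏ i ∈ Finset.range d, g (a+i) x) x0 := EE_mono key
    _ ≤ (2 * θ) ^ d + (2 * θ) ^ d := by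
        rw [EE_add]
        gcongr
        · refine EE_prod_up hp f (fun i j x s hij => ?_)
            (fun j x hj => aux Lp j x (hLp j x hj)) d hd x0
          simp only [hf, hL i j x s hij]
        · refine EE_prod_down hp g (fun i j x s hij => ?_) (e := a + d)
            (fun j x hj => aux Rp j x (hRp j x (by omega))) hd d a rfl x0
          simp only [hg, hR i j x s hij]
    _ = _ := by rw [two_mul ((2*θ)^d)]

lemma geom_bound {ρ : ℝ≥0∞} (h : ρ ≤ 2⁻¹) (b : ℕ) :
    ∑ a ∈ Finset.range b, ρ ^ (b - a) ≤ 2 * ρ := by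
  induction b with
  | zero => simp
  | succ b ih =>
    rw [Finset.sum_range_succ]
    have : ∑ a ∈ Finset.range b, ρ ^ (b + 1 - a) = ρ * ∑ a ∈ Finset.range b, ρ ^ (b - a) := by
      rw [Finset.mul_sum]
      refine Finset.sum_congr rfl fun a ha => ?_
      rw [← pow_succ']; congr 1
      have := Finset.mem_range.1 ha; omega
    rw [this, show b + 1 - b = 1 by omega, pow_one, two_mul]
    gcongr
    calc ρ * _ ≤ ρ * (2 * 2⁻¹) := by gcongr; exact ih.trans (by gcongr)
      _ = ρ := by rw [ENNReal.mul_inv_cancel (by simp) (by simp), mul_one]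

end EE
end EC

open scoped ENNReal

namespace EC
section coding
open Function
variable {G S' : Type*} [Group G] (val : S' → G) (L R : G → Set S')

def PP (Z : ℕ → G) (S : ℕ → S') : ℕ → G
  | 0 => 1
  | j + 1 => PP Z S j * Z j * val (S j)

def seg (Z : ℕ → G) (S : ℕ → S') (a j : ℕ) : G := (PP val Z S a)⁻¹ * PP val Z S j * Z j

def phi (Z : ℕ → G) (S : ℕ → S') (w : G) (a j : ℕ) : Prop :=
  S j ∈ L (seg val Z S a j) ∨ S j ∈ R ((PP val Z S (j+1))⁻¹ * w)

def run (Z : ℕ → G) (S : ℕ → S') (w : G) (a e : ℕ) : Prop :=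
  ∀ i, a ≤ i → i < e → phi val L R Z S w a i

def Bad (k : ℕ) (Z : ℕ → G) (S : ℕ → S') (w : G) : Prop :=
  phi val L R Z S w 0 (k-1) ∨ ∃ a, a < k ∧ run val L R Z S w a k

def Rev' (k : ℕ) (Z : ℕ → G) (S : ℕ → S') (w : G) (b : ℕ) : Prop :=
  Bad val L R k Z S w ∨ phi val L R Z S w b b ∨ ∃ a, a < b ∧ run val L R Z S w a b

open Classical in
noncomputable def OO (F : Set G) (k : ℕ) (Z : ℕ → G) (S : ℕ → S') (w : G) (b : ℕ) : Option G :=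
  if b < k ∧ (Z b ∉ F ∨ Rev' val L R k Z S w b) then some (Z b) else none

open Classical in
noncomputable def stt (Z : ℕ → G) (S : ℕ → S') (w : G) : ℕ → ℕ
  | 0 => 0
  | j + 1 => if phi val L R Z S w (stt Z S w j) j then stt Z S w j else j + 1

def Cand (F : Set G) (k : ℕ) (w : G) (S : ℕ → S') (O : ℕ → Option G) : Set G :=
  {u | ∃ Z, u = PP val Z S k ∧ OO val L R F k Z S w = O}

variable {val L R}

lemma stt_spec (Z : ℕ → G) (S : ℕ → S') (w : G) (j : ℕ) :
    stt val L R Z S w j ≤ j ∧ run val L R Z S w (stt val L R Z S w j) j := by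
  induction j with
  | zero => exact ⟨le_rfl, fun i h1 h2 => by omega⟩
  | succ j ih =>
    by_cases h : phi val L R Z S w (stt val L R Z S w j) j
    · have e : stt val L R Z S w (j+1) = stt val L R Z S w j := by simp [stt, h]
      rw [e]
      refine ⟨by omega, fun i h1 h2 => ?_⟩
      rcases Nat.lt_succ_iff_lt_or_eq.1 h2 with h3 | rfl
      · exact ih.2 i h1 h3
      · exact h
    · have e : stt val L R Z S w (j+1) = j + 1 := by simp [stt, h]
      rw [e]
      exact ⟨le_rfl, fun i h1 h2 => by omega⟩

lemma PP_congr_seg (Z Z' : ℕ → G) (S : ℕ → S') (a d : ℕ)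
    (h : ∀ b, a ≤ b → b < a + d → Z b = Z' b) :
    (PP val Z S a)⁻¹ * PP val Z S (a+d) = (PP val Z' S a)⁻¹ * PP val Z' S (a+d) := by
  induction d with
  | zero => simp
  | succ d ih =>
    have ih := ih fun b h1 h2 => h b h1 (by omega)
    have e : ∀ Z'' : ℕ → G, (PP val Z'' S a)⁻¹ * PP val Z'' S (a+(d+1)) =
        (PP val Z'' S a)⁻¹ * PP val Z'' S (a+d) * Z'' (a+d) * val (S (a+d)) := by
      intro Z''
      show (PP val Z'' S a)⁻¹ * (PP val Z'' S (a+d) * Z'' (a+d) * val (S (a+d))) = _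
      group
    rw [e, e, ih, h (a+d) (by omega) (by omega)]

lemma OO_eq {F : Set G} {k : ℕ} {Z Z' : ℕ → G} {S : ℕ → S'} {w : G}
    (h : OO val L R F k Z S w = OO val L R F k Z' S w) {b : ℕ} (hb : b < k)
    (hr : Rev' val L R k Z S w b) : Z b = Z' b := by
  have h1 := congrFun h b
  unfold OO at h1
  rw [if_pos ⟨hb, Or.inr hr⟩] at h1
  split_ifs at h1
  simpa using h1

lemma OO_or {F : Set G} {k : ℕ} {Z Z' : ℕ → G} {S : ℕ → S'} {w : G}
    (h : OO val L R F k Z S w = OO val L R F k Z' S w) {b : ℕ} (hb : b < k) :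
    Z b = Z' b ∨ (Z b ∈ F ∧ Z' b ∈ F) := by
  have h1 := congrFun h b
  unfold OO at h1
  split_ifs at h1 with h2 h3
  · left; simpa using h1
  · right
    push Not at h2
    rename_i h3
    push Not at h3
    exact ⟨(h2 hb).1, (h3 hb).1⟩

section norms
variable {nm : G → ℝ} {A Lc : ℝ}

lemma seg_tail (Z : ℕ → G) (S : ℕ → S') (w : G) (t j : ℕ) :
    seg val Z S t j * val (S j) * ((PP val Z S (j+1))⁻¹ * w) = (PP val Z S t)⁻¹ * w := by
  simp only [seg, PP]; group

lemma drift (hA : ∀ u v s, s ∉ L u → s ∉ R v → |nm (u * val s * v) - nm u - nm v| ≤ A)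
    {F : Set G} (hF : ∀ z ∈ F, 0 ≤ nm z ∧ nm z ≤ Lc) (hLc : 0 ≤ Lc) {k : ℕ}
    {Z Z' : ℕ → G} {S : ℕ → S'} {w : G}
    (h : OO val L R F k Z S w = OO val L R F k Z' S w)
    (he : ∀ j < k, phi val L R Z S w (stt val L R Z S w j) j ↔
      phi val L R Z' S w (stt val L R Z' S w j) j) (hA0 : 0 ≤ A) (j : ℕ) (hj : j ≤ k) :
    stt val L R Z S w j = stt val L R Z' S w j ∧
    |nm ((PP val Z S (stt val L R Z S w j))⁻¹ * w)
      - nm ((PP val Z' S (stt val L R Z S w j))⁻¹ * w)| ≤ j * (2 * A + Lc) := by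
  induction j with
  | zero => simp [stt, PP]
  | succ j ih =>
    obtain ⟨ih1, ih2⟩ := ih (by omega)
    have hj' : j < k := by omega
    have hej := he j hj'
    by_cases hphi : phi val L R Z S w (stt val L R Z S w j) j
    · have e : stt val L R Z S w (j+1) = stt val L R Z S w j := by simp [stt, hphi]
      have e' : stt val L R Z' S w (j+1) = stt val L R Z' S w j := by simp [stt, hej.1 hphi]
      rw [e, e']
      refine ⟨ih1, ih2.trans ?_⟩
      push_cast
      nlinarith
    · have hphi' : ¬ phi val L R Z' S w (stt val L R Z' S w j) j := fun h => hphi (hej.2 h)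
      have e : stt val L R Z S w (j+1) = j+1 := by simp [stt, hphi]
      have e' : stt val L R Z' S w (j+1) = j+1 := by simp [stt, hphi']
      rw [e, e']
      refine ⟨rfl, ?_⟩
      rw [← ih1] at hphi'
      have hsp := stt_spec (val := val) (L := L) (R := R) Z S w j
      set t := stt val L R Z S w j
      have q1 := hA _ _ _ (fun h => hphi (Or.inl h)) (fun h => hphi (Or.inr h))
      have q2 := hA _ _ _ (fun h => hphi' (Or.inl h)) (fun h => hphi' (Or.inr h))
      rw [seg_tail] at q1 q2
      have q3 : |nm (seg val Z S t j) - nm (seg val Z' S t j)| ≤ Lc := by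
        rcases Nat.lt_or_ge t j with htj | htj
        · have hz : ∀ b, t ≤ b → b ≤ j → Z b = Z' b := by
            intro b h1 h2
            refine OO_eq h (by omega) ?_
            rcases Nat.eq_or_lt_of_le h1 with rfl | h3
            · exact Or.inr (Or.inl (hsp.2 _ le_rfl htj))
            · exact Or.inr (Or.inr ⟨t, h3, fun i h4 h5 => hsp.2 i h4 (by omega)⟩)
          have : seg val Z S t j = seg val Z' S t j := by
            unfold seg
            have := PP_congr_seg (val := val) Z Z' S t (j - t) (fun b h1 h2 => hz b h1 (by omega))
            rw [show t + (j - t) = j by omega] at this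
            rw [this, hz j htj.le le_rfl]
          rw [this]; simpa using hLc
        · have : t = j := by omega
          have e1 : ∀ Z : ℕ → G, seg val Z S t j = Z j := by intro Z; simp [seg, this]
          rw [e1, e1]
          rcases OO_or h hj' with h4 | ⟨h4, h5⟩
          · rw [h4]; simpa using hLc
          · have := hF _ h4
            have := hF _ h5
            rw [abs_le]; constructor <;> linarith
      push_cast
      rw [abs_le] at *
      constructor <;> nlinarith

noncomputable def cnt {α : Type*} (B : Set α) : ℝ≥0∞ := ∑' _ : B, (1 : ℝ≥0∞)

lemma cnt_mono {α : Type*} {B C : Set α} (h : B ⊆ C) : cnt B ≤ cnt C :=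
  ENNReal.tsum_mono_subtype (fun _ => 1) h

lemma cnt_image {α β : Type*} (f : α → β) (B : Set α) : cnt (f '' B) ≤ cnt B := by
  unfold cnt
  rw [ENNReal.tsum_set_one, ENNReal.tsum_set_one]
  exact_mod_cast Set.encard_image_le f B

lemma cnt_le_one {α : Type*} {B : Set α} (h : ∀ x ∈ B, ∀ y ∈ B, x = y) : cnt B ≤ 1 := by
  unfold cnt
  rw [ENNReal.tsum_set_one]
  have : B.encard ≤ 1 := Set.encard_le_one_iff.2 fun a b ha hb => h a ha b hb
  exact_mod_cast this

lemma cnt_iUnion {α ι : Type*} [Fintype ι] (B : ι → Set α) {c : ℝ≥0∞} (h : ∀ i, cnt (B i) ≤ c) :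
    cnt (⋃ i, B i) ≤ Fintype.card ι * c := by
  refine (ENNReal.tsum_iUnion_le (fun _ => 1) B).trans ?_
  refine (Finset.sum_le_sum fun i _ => h i).trans ?_
  simp

lemma cnt_Cand {A Lc A' : ℕ}
    (hA : ∀ u v s, s ∉ L u → s ∉ R v → |nm (u * val s * v) - nm u - nm v| ≤ A)
    {F : Set G} (hF : ∀ z ∈ F, 0 ≤ nm z ∧ nm z ≤ Lc)
    (hA' : ∀ w s (D : ℝ), cnt {u | ∃ v, u * val s * v = w ∧ s ∉ L u ∧ s ∉ R v ∧
      D ≤ nm u ∧ nm u ≤ D + 1} ≤ A') {k : ℕ} (hk : 0 < k) (w : G) (S : ℕ → S')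
    (O : ℕ → Option G) :
    cnt (Cand val L R F k w S O) ≤
      ((1 + 2 ^ k * ((2 * (k * (2 * A + Lc) + 2 * A) + 1) * A') : ℕ) : ℝ≥0∞) := by
  set W : ℕ := k * (2 * A + Lc) + 2 * A with hW
  set B1 : Set G := {u | ∃ Z, u = PP val Z S k ∧ OO val L R F k Z S w = O ∧ Bad val L R k Z S w}
  set B2 : (Fin k → Prop) → Set G := fun e => {u | ∃ Z, u = PP val Z S k ∧
    OO val L R F k Z S w = O ∧ ¬ Bad val L R k Z S w ∧
    ∀ j : Fin k, e j = phi val L R Z S w (stt val L R Z S w j) j}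
  have hsub : Cand val L R F k w S O ⊆ B1 ∪ ⋃ e, B2 e := by
    rintro u ⟨Z, hu, hO⟩
    by_cases hb : Bad val L R k Z S w
    · exact Or.inl ⟨Z, hu, hO, hb⟩
    · exact Or.inr (Set.mem_iUnion.2 ⟨fun j => phi val L R Z S w (stt val L R Z S w j) j,
        Z, hu, hO, hb, fun j => rfl⟩)
  have h1 : cnt B1 ≤ 1 := by
    refine cnt_le_one ?_
    rintro u ⟨Z, rfl, hO, hb⟩ u' ⟨Z', rfl, hO', hb'⟩
    have := PP_congr_seg (val := val) Z Z' S 0 k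
      (fun b _ h2 => OO_eq (hO.trans hO'.symm) (by omega) (Or.inl hb))
    simpa [PP] using this
  have h2 : ∀ e, cnt (B2 e) ≤ ((2 * W + 1 : ℕ) : ℝ≥0∞) * A' := by
    intro e
    by_cases hne : (B2 e).Nonempty
    · obtain ⟨u0, Z0, hu0, hO0, hb0, he0⟩ := hne
      have hmain : ∀ Z, OO val L R F k Z S w = O → ¬ Bad val L R k Z S w →
          (∀ j : Fin k, e j = phi val L R Z S w (stt val L R Z S w j) j) →
          |nm (seg val Z S 0 (k-1)) - nm (seg val Z0 S 0 (k-1))| ≤ W := by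
        intro Z hO hb he
        have hst : ∀ Z, ¬ Bad val L R k Z S w → stt val L R Z S w k = k := by
          intro Z hb
          have := stt_spec (val := val) (L := L) (R := R) Z S w k
          by_contra hne
          exact hb (Or.inr ⟨_, lt_of_le_of_ne this.1 hne, this.2⟩)
        have hd := drift hA hF (Nat.cast_nonneg _) (hO.trans hO0.symm)
          (fun j hj => by rw [← he ⟨j, hj⟩, ← he0 ⟨j, hj⟩]) (Nat.cast_nonneg _) k le_rfl
        rw [hst Z hb] at hd
        have hd := hd.2
        have q : ∀ Z, ¬ Bad val L R k Z S w →
            |nm w - nm (seg val Z S 0 (k-1)) - nm ((PP val Z S k)⁻¹ * w)| ≤ A := by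
          intro Z hb
          have hphi : ¬ phi val L R Z S w 0 (k-1) := fun h => hb (Or.inl h)
          have q1 := hA _ _ _ (fun h => hphi (Or.inl h)) (fun h => hphi (Or.inr h))
          rw [seg_tail, show k - 1 + 1 = k by omega] at q1
          simpa [PP] using q1
        have q1 := q Z hb
        have q2 := q Z0 hb0
        rw [hW]; push_cast
        rw [abs_le] at *
        constructor <;> linarith
      set D0 := nm (seg val Z0 S 0 (k-1))
      have hsub2 : B2 e ⊆ ⋃ i : Fin (2 * W + 1), (fun u => u * val (S (k-1))) ''
          {u | ∃ v, u * val (S (k-1)) * v = w ∧ S (k-1) ∉ L u ∧ S (k-1) ∉ R v ∧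
            D0 - W + (i : ℕ) ≤ nm u ∧ nm u ≤ D0 - W + (i : ℕ) + 1} := by
        rintro u ⟨Z, rfl, hO, hb, he⟩
        have hm := hmain Z hO hb he
        rw [abs_le] at hm
        have hnn : 0 ≤ nm (seg val Z S 0 (k-1)) - D0 + W := by linarith
        rw [Set.mem_iUnion]
        have hfl := Nat.floor_le hnn
        refine ⟨⟨⌊nm (seg val Z S 0 (k-1)) - D0 + W⌋₊, ?_⟩, seg val Z S 0 (k-1), ?_, ?_⟩
        · rw [Nat.lt_succ_iff]
          have : ((⌊nm (seg val Z S 0 (k-1)) - D0 + W⌋₊ : ℕ) : ℝ) ≤ ((2 * W : ℕ) : ℝ) := by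
            push_cast; linarith
          exact_mod_cast this
        · have hphi : ¬ phi val L R Z S w 0 (k-1) := fun h => hb (Or.inl h)
          refine ⟨_, (seg_tail Z S w 0 (k-1)).trans (by simp [PP]), fun h => hphi (Or.inl h),
            fun h => hphi (Or.inr h), ?_, ?_⟩
          · simp only; linarith
          · have := (Nat.lt_floor_add_one (nm (seg val Z S 0 (k-1)) - D0 + W)).le
            simp only; linarith
        · obtain ⟨k', rfl⟩ : ∃ k', k = k' + 1 := ⟨k - 1, by omega⟩
          simp [seg, PP]
      refine (cnt_mono hsub2).trans ?_
      refine (cnt_iUnion _ (fun i => (cnt_image _ _).trans (hA' w (S (k-1)) _))).trans ?_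
      simp
    · rw [Set.not_nonempty_iff_eq_empty.1 hne]
      simp [cnt]
  refine (cnt_mono hsub).trans ?_
  refine (ENNReal.tsum_union_le (fun _ => 1) _ _).trans ?_
  have h3 := cnt_iUnion B2 h2
  refine (add_le_add h1 h3).trans ?_
  simp

end norms
end coding
end EC

open scoped ENNReal

namespace EC
section coding2
open Function
variable {G S' : Type*} [Group G] {val : S' → G} {L R : G → Set S'}

lemma PP_upd (Z : ℕ → G) (S : ℕ → S') (j : ℕ) (s : S') (i : ℕ) (h : i ≤ j) :
    PP val Z (update S j s) i = PP val Z S i := by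
  induction i with
  | zero => rfl
  | succ i ih =>
    simp only [PP]
    rw [ih (by omega), update_of_ne (by omega)]

lemma PP_upd_Z (Z : ℕ → G) (S : ℕ → S') (j : ℕ) (z : G) (i : ℕ) (h : i ≤ j) :
    PP val (update Z j z) S i = PP val Z S i := by
  induction i with
  | zero => rfl
  | succ i ih =>
    simp only [PP]
    rw [ih (by omega), update_of_ne (by omega)]

lemma PP_upd2 (Z : ℕ → G) (S : ℕ → S') (j : ℕ) (s : S') (a k : ℕ) (h : j < a) (hk : a ≤ k) :
    (PP val Z (update S j s) a)⁻¹ * PP val Z (update S j s) k =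
      (PP val Z S a)⁻¹ * PP val Z S k := by
  induction k, hk using Nat.le_induction with
  | base => simp
  | succ k hk ih =>
    simp only [PP]
    rw [← mul_assoc, ← mul_assoc, ih, update_of_ne (by omega)]
    simp only [mul_assoc]

lemma seg_upd (Z : ℕ → G) (S : ℕ → S') (j : ℕ) (s : S') (a i : ℕ) (h : a ≤ i) (hk : i ≤ j) :
    seg val Z (update S j s) a i = seg val Z S a i := by
  unfold seg
  rw [PP_upd _ _ _ _ _ hk, PP_upd _ _ _ _ _ (by omega)]

open Classical in
lemma phi_run_prob {σ : S' → ℝ≥0∞} (hσ : IsP σ) {θ : ℝ≥0∞} (h0 : θ ≠ 0) (h1 : θ ≤ 1)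
    (hL : ∀ u, ∑' s, σ s * (if s ∈ L u then 1 else 0) ≤ θ ^ 2)
    (hR : ∀ u, ∑' s, σ s * (if s ∈ R u then 1 else 0) ≤ θ ^ 2)
    (k : ℕ) (Z : ℕ → G) (v : G) (a0 a d : ℕ) (ha : a0 ≤ a) (hd : a + d ≤ k) (S0 : ℕ → S') :
    EE σ k (fun S => if ∀ i, a ≤ i → i < a + d → phi val L R Z S (PP val Z S k * v) a0 i
      then 1 else 0) S0 ≤ 2 * (2 * θ) ^ d := by
  refine le_trans (EE_mono fun S => ?_) (run_prob hσ h0 h1 (a := a) (k := k)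
    (fun i S => a0 ≤ i ∧ S i ∈ L (seg val Z S a0 i))
    (fun i S => i < k ∧ S i ∈ R ((PP val Z S (i+1))⁻¹ * PP val Z S k * v)) ?_ ?_ ?_ ?_ d hd S0)
  · split_ifs with q1 q2
    · exact le_rfl
    · exfalso
      refine q2 fun i hi1 hi2 => ?_
      rcases q1 i hi1 hi2 with h | h
      · exact Or.inl ⟨by omega, h⟩
      · exact Or.inr ⟨by omega, by rwa [mul_assoc]⟩
    · exact zero_le
    · exact zero_le
  · intro i j x s hij
    refine and_congr_right fun hi => ?_
    rw [seg_upd _ _ _ _ _ _ hi hij.le, update_of_ne hij.ne]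
  · intro i j x s hij
    refine and_congr_right fun hi => ?_
    rw [PP_upd2 _ _ _ _ _ _ (by omega) (by omega), update_of_ne hij.ne']
  · intro j x hj
    refine le_trans ?_ (hL (seg val Z x a0 j))
    gcongr with s
    rw [seg_upd _ _ _ _ _ _ (by omega) le_rfl, update_self]
    split_ifs with q1 q2
    · exact le_rfl
    · exact absurd q1.2 q2
    · exact zero_le
    · exact zero_le
  · intro j x hj
    refine le_trans ?_ (hR ((PP val Z x (j+1))⁻¹ * PP val Z x k * v))
    gcongr with s
    rw [PP_upd2 _ _ _ _ _ _ (by omega) (by omega), update_self]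
    split_ifs with q1 q2
    · exact le_rfl
    · exact absurd q1.2 q2
    · exact zero_le
    · exact zero_le

open Classical in
lemma rev_prob {σ : S' → ℝ≥0∞} (hσ : IsP σ) {θ : ℝ≥0∞} (h0 : θ ≠ 0) (h1 : 2 * θ ≤ 2⁻¹)
    (hL : ∀ u, ∑' s, σ s * (if s ∈ L u then 1 else 0) ≤ θ ^ 2)
    (hR : ∀ u, ∑' s, σ s * (if s ∈ R u then 1 else 0) ≤ θ ^ 2)
    (k : ℕ) (Z : ℕ → G) (v : G) (b : ℕ) (hb : b < k) (S0 : ℕ → S') :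
    EE σ k (fun S => if Rev' val L R k Z S (PP val Z S k * v) b then 1 else 0) S0
      ≤ 24 * θ := by
  have hθ1 : θ ≤ 1 := by
    calc θ ≤ 2 * θ := by rw [two_mul]; exact le_self_add
      _ ≤ 2⁻¹ := h1
      _ ≤ 1 := by simp
  have hrun := fun a0 a d ha hd => phi_run_prob (val := val) hσ h0 hθ1 hL hR k Z v a0 a d ha hd S0
  have key : ∀ S : ℕ → S', (if Rev' val L R k Z S (PP val Z S k * v) b then (1:ℝ≥0∞) else 0) ≤
      (if ∀ i, k-1 ≤ i → i < k-1+1 → phi val L R Z S (PP val Z S k * v) 0 i then 1 else 0) +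
      (if ∀ i, b ≤ i → i < b+1 → phi val L R Z S (PP val Z S k * v) b i then 1 else 0) +
      ∑ a ∈ Finset.range k, (if ∀ i, a ≤ i → i < a + (k - a) →
        phi val L R Z S (PP val Z S k * v) a i then 1 else 0) +
      ∑ a ∈ Finset.range b, (if ∀ i, a ≤ i → i < a + (b - a) →
        phi val L R Z S (PP val Z S k * v) a i then 1 else 0) := by
    intro S
    by_cases h : Rev' val L R k Z S (PP val Z S k * v) b
    swap
    · rw [if_neg h]; exact zero_le
    rw [if_pos h]
    have hone : ∀ (q : ℕ → Prop) (j : ℕ), q j → ∀ i, j ≤ i → i < j + 1 → q i := by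
      intro q j hq i h1 h2
      obtain rfl : i = j := by omega
      exact hq
    have hsum : ∀ e, (∃ a, a < e ∧ run val L R Z S (PP val Z S k * v) a e) →
        (1:ℝ≥0∞) ≤ ∑ a ∈ Finset.range e, (if ∀ i, a ≤ i → i < a + (e - a) →
        phi val L R Z S (PP val Z S k * v) a i then 1 else 0) := by
      rintro e ⟨a, ha, hr⟩
      refine le_trans ?_ (Finset.single_le_sum (fun _ _ => zero_le) (Finset.mem_range.2 ha))
      rw [if_pos]
      intro i hi1 hi2
      exact hr i hi1 (by omega)
    rcases h with (h | h) | h | h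
    · rw [if_pos (hone _ _ h)]
      simp only [add_assoc]; exact le_self_add
    · refine (hsum k h).trans ?_
      refine le_trans ?_ le_self_add
      exact le_add_self
    · rw [if_pos (hone _ _ h)]
      refine le_trans ?_ le_self_add
      refine le_trans ?_ le_self_add
      exact le_add_self
    · exact (hsum b h).trans le_add_self
  refine (EE_mono key).trans ?_
  rw [EE_add, EE_add, EE_add, EE_sum, EE_sum]
  have hs : ∀ e ≤ k, ∑ a ∈ Finset.range e, EE σ k (fun S => if ∀ i, a ≤ i → i < a + (e - a) →
        phi val L R Z S (PP val Z S k * v) a i then 1 else 0) S0 ≤ 2 * (2 * (2 * θ)) := by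
    intro e he
    refine (Finset.sum_le_sum fun a ha => hrun a a (e - a) le_rfl
      (by have := Finset.mem_range.1 ha; omega)).trans ?_
    rw [← Finset.mul_sum]
    gcongr
    exact geom_bound h1 e
  calc _ ≤ 2 * (2 * θ) ^ 1 + 2 * (2 * θ) ^ 1 + 2 * (2 * (2 * θ)) + 2 * (2 * (2 * θ)) := by
        gcongr
        · exact hrun 0 (k-1) 1 (by omega) (by omega)
        · exact hrun b b 1 le_rfl (by omega)
        · exact hs k le_rfl
        · exact hs b hb.le
    _ = _ := by ring

lemma law {ζ ρ : G → ℝ≥0∞} {σ : S' → ℝ≥0∞}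
    (hρ : ∀ F : G → ℝ≥0∞, ∑' y, ρ y * F y = ∑' z, ζ z * ∑' s, σ s * F (z * val s))
    (k : ℕ) (Z0 : ℕ → G) (S0 : ℕ → S') (F : G → ℝ≥0∞) :
    ∑' u, cpow ρ k u * F u = EE ζ k (fun Z => EE σ k (fun S => F (PP val Z S k)) S0) Z0 := by
  induction k generalizing F with
  | zero => rw [tsum_cpow_zero]; rfl
  | succ k ih =>
    rw [cpow_add, tsum_cnv, cpow_one]
    rw [ih (fun h => ∑' y, ρ y * F (h * y))]
    show _ = EE ζ k (II ζ k (fun Z => EE σ k (II σ k (fun S => F (PP val Z S (k+1)))) S0)) Z0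
    congr 1
    ext Z
    unfold II
    simp only [PP, PP_upd _ _ _ _ k le_rfl, PP_upd_Z _ _ _ _ k le_rfl, update_self]
    simp only [← EE_mul]
    rw [← EE_tsum]
    congr 1
    ext S
    rw [hρ]
    simp only [mul_assoc]

noncomputable def wt (ζ : G → ℝ≥0∞) : Option G → ℝ≥0∞
  | none => 2⁻¹
  | some z => 2⁻¹ * ζ z

lemma isP_wt {ζ : G → ℝ≥0∞} (hζ : IsP ζ) : IsP (wt ζ) := by
  unfold IsP
  rw [← (Equiv.optionEquivSumPUnit.{0} G).symm.tsum_eq, ENNReal.summable.tsum_sum ENNReal.summable]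
  simp [wt]
  rw [ENNReal.tsum_mul_left, show ∑' z, ζ z = 1 from hζ, mul_one, ENNReal.inv_two_add_inv_two]

lemma isP_of_law {ζ ρ : G → ℝ≥0∞} {σ : S' → ℝ≥0∞} (hζ : IsP ζ) (hσ : IsP σ)
    (hρ : ∀ F : G → ℝ≥0∞, ∑' y, ρ y * F y = ∑' z, ζ z * ∑' s, σ s * F (z * val s)) : IsP ρ := by
  have := hρ (fun _ => 1)
  simp only [mul_one] at this
  rw [show ∑' s, σ s = 1 from hσ] at this
  simp only [mul_one] at this
  exact this.trans hζ

open Classical in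
theorem main_coding {ζ ρ ν : G → ℝ≥0∞} {σ : S' → ℝ≥0∞} (hζ : IsP ζ) (hσ : IsP σ) (hν : IsP ν)
    (hρ : ∀ F : G → ℝ≥0∞, ∑' y, ρ y * F y = ∑' z, ζ z * ∑' s, σ s * F (z * val s))
    {θ : ℝ≥0∞} (h0 : θ ≠ 0) (h1 : 2 * θ ≤ 2⁻¹)
    (hL : ∀ u, ∑' s, σ s * (if s ∈ L u then 1 else 0) ≤ θ ^ 2)
    (hR : ∀ u, ∑' s, σ s * (if s ∈ R u then 1 else 0) ≤ θ ^ 2)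
    {nm : G → ℝ} {A Lc A' : ℕ}
    (hA : ∀ u v s, s ∉ L u → s ∉ R v → |nm (u * val s * v) - nm u - nm v| ≤ A)
    {F : Set G} (hF : ∀ z ∈ F, 0 ≤ nm z ∧ nm z ≤ Lc)
    (hA' : ∀ w s (D : ℝ), cnt {u | ∃ v, u * val s * v = w ∧ s ∉ L u ∧ s ∉ R v ∧
      D ≤ nm u ∧ nm u ≤ D + 1} ≤ A') {k : ℕ} (hk : 0 < k) :
    Ent (cpow ρ k) + Ent ν ≤ Ent (cnv (cpow ρ k) ν) + (sur
      (((1 + 2 ^ k * ((2 * (k * (2 * A + Lc) + 2 * A) + 1) * A') : ℕ) : ℝ≥0∞)⁻¹) + k * Ent σ +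
      k * (sur 2⁻¹ + ∑' z, ζ z * (Fᶜ.indicator (fun z => sur (ζ z)) z) + 24 * θ * Ent ζ)) := by
  set M : ℕ := 1 + 2 ^ k * ((2 * (k * (2 * A + Lc) + 2 * A) + 1) * A') with hM
  have hM0 : (M : ℝ≥0∞) ≠ 0 := by
    rw [hM]; push_cast; simp
  have hρP := isP_of_law hζ hσ hρ
  obtain ⟨s0⟩ : Nonempty S' := by
    by_contra h
    rw [not_nonempty_iff] at h
    simp [IsP] at hσ
  let Z0 : ℕ → G := fun _ => 1
  let S0 : ℕ → S' := fun _ => s0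
  let O0 : ℕ → Option G := fun _ => none
  let q : G → G → ℝ≥0∞ := fun u w => (M : ℝ≥0∞)⁻¹ * EE σ k (fun S => EE (wt ζ) k
    (fun O => (Cand val L R F k w S O).indicator 1 u) O0) S0
  have hq : ∀ w, ∑' u, q u w ≤ 1 := by
    intro w
    simp only [q]
    rw [ENNReal.tsum_mul_left, ← EE_tsum]
    simp only [← EE_tsum]
    calc _ ≤ (M : ℝ≥0∞)⁻¹ * EE σ k (fun S => EE (wt ζ) k (fun O => (M : ℝ≥0∞)) O0) S0 := by
          gcongr
          refine EE_mono fun S => EE_mono fun O => ?_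
          rw [← tsum_subtype]
          exact cnt_Cand hA hF hA' hk w S O
      _ = 1 := by
          simp only [EE_const (isP_wt hζ), EE_const hσ]
          exact ENNReal.inv_mul_cancel hM0 (by simp)
  refine (code (isP_cpow hρP k) hν q hq).trans ?_
  gcongr
  rw [law hρ k Z0 S0 (fun u => ∑' v, ν v * sur (q u (u * v)))]
  -- pointwise bound
  have hpt : ∀ Z S, (∀ j, k ≤ j → S j = S0 j) → ∀ v,
      sur (q (PP val Z S k) (PP val Z S k * v)) ≤ sur ((M : ℝ≥0∞)⁻¹) +
        ∑ b ∈ Finset.range k, sur (σ (S b)) + ∑ b ∈ Finset.range k, (sur 2⁻¹ +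
          Fᶜ.indicator (fun z => sur (ζ z)) (Z b) + sur (ζ (Z b)) *
          (if Rev' val L R k Z S (PP val Z S k * v) b then 1 else 0)) := by
    intro Z S hS v
    set w := PP val Z S k * v
    set O := OO val L R F k Z S w with hO
    have hle' : (∏ j ∈ Finset.range k, σ (S j)) * (∏ j ∈ Finset.range k, wt ζ (O j)) ≤
        EE σ k (fun S' => EE (wt ζ) k
          (fun O => (Cand val L R F k w S' O).indicator 1 (PP val Z S k)) O0) S0 := by
      refine le_trans ?_ (le_EE _ hS)
      gcongr
      refine le_trans ?_ (le_EE (y := O) _ ?_)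
      · rw [Set.indicator_of_mem (show PP val Z S k ∈ Cand val L R F k w S O from ⟨Z, rfl, hO.symm⟩)]
        simp
      · intro j hj
        rw [hO]; unfold OO
        rw [if_neg (by omega)]
    have hp1 : ∏ j ∈ Finset.range k, σ (S j) ≤ 1 := Finset.prod_le_one' fun j _ => hσ.le_one _
    have hp2 : ∏ j ∈ Finset.range k, wt ζ (O j) ≤ 1 :=
      Finset.prod_le_one' fun j _ => (isP_wt hζ).le_one _
    have hMi : (M : ℝ≥0∞)⁻¹ ≤ 1 := by
      rw [ENNReal.inv_le_one, hM]; push_cast; exact le_self_add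
    calc _ ≤ sur ((M : ℝ≥0∞)⁻¹ * ((∏ j ∈ Finset.range k, σ (S j)) *
          (∏ j ∈ Finset.range k, wt ζ (O j)))) := sur_anti (by simp only [q]; gcongr)
      _ = sur ((M : ℝ≥0∞)⁻¹) + ∑ b ∈ Finset.range k, sur (σ (S b)) +
          ∑ b ∈ Finset.range k, sur (wt ζ (O b)) := by
          rw [sur_mul hMi (mul_le_one' hp1 hp2), sur_mul hp1 hp2,
            sur_prod _ _ (fun j _ => hσ.le_one _), sur_prod _ _ (fun j _ => (isP_wt hζ).le_one _),
            add_assoc]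
      _ ≤ _ := by
          gcongr with b hb
          have hb := Finset.mem_range.1 hb
          have h2 : (2⁻¹ : ℝ≥0∞) ≤ 1 := by simp
          simp only [hO, OO]
          split_ifs with q1 q2 q2
          · simp only [wt]
            rw [sur_mul h2 (hζ.le_one _), mul_one, add_assoc]
            gcongr; exact le_add_self
          · simp only [wt]
            rw [sur_mul h2 (hζ.le_one _), mul_zero, add_zero]
            gcongr
            rw [Set.indicator_of_mem]
            rcases q1.2 with h | h
            · exact h
            · exact absurd h q2
          · simp only [wt, add_assoc]; exact le_self_add
          · simp only [wt, add_assoc]; exact le_self_add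
  calc _ ≤ EE ζ k (fun Z => EE σ k (fun S => ∑' v, ν v * (sur ((M : ℝ≥0∞)⁻¹) +
        ∑ b ∈ Finset.range k, sur (σ (S b)) + ∑ b ∈ Finset.range k, (sur 2⁻¹ +
          Fᶜ.indicator (fun z => sur (ζ z)) (Z b) + sur (ζ (Z b)) *
          (if Rev' val L R k Z S (PP val Z S k * v) b then 1 else 0)))) S0) Z0 := by
        refine EE_mono fun Z => EE_mono_on fun S hS => ?_
        gcongr with v
        exact hpt Z S hS v
    _ ≤ EE ζ k (fun Z => ∑' v, ν v * (sur ((M : ℝ≥0∞)⁻¹) + k * Ent σ +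
          ∑ b ∈ Finset.range k, (sur 2⁻¹ +
          Fᶜ.indicator (fun z => sur (ζ z)) (Z b) + sur (ζ (Z b)) * (24 * θ)))) Z0 := by
        refine EE_mono fun Z => ?_
        rw [EE_tsum]
        gcongr with v
        rw [EE_mul, EE_add, EE_add, EE_sum, EE_sum, EE_const hσ]
        gcongr with b hb
        · rw [show (k : ℝ≥0∞) * Ent σ = ∑ b ∈ Finset.range k, Ent σ by simp]
          refine Finset.sum_le_sum fun b hb => ?_
          rw [EE_coord hσ (Finset.mem_range.1 hb) (fun s => sur (σ s))]
          exact le_rfl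
        · rw [EE_add, EE_const hσ, EE_mul]
          gcongr
          exact rev_prob hσ h0 h1 hL hR k Z v b (Finset.mem_range.1 hb) S0
    _ = EE ζ k (fun Z => (sur ((M : ℝ≥0∞)⁻¹) + k * Ent σ +
          ∑ b ∈ Finset.range k, (sur 2⁻¹ +
          Fᶜ.indicator (fun z => sur (ζ z)) (Z b) + sur (ζ (Z b)) * (24 * θ)))) Z0 := by
        congr 1
        ext Z
        rw [ENNReal.tsum_mul_right, show ∑' v, ν v = 1 from hν, one_mul]
    _ ≤ _ := by
        rw [EE_add, EE_const hζ, EE_sum]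
        gcongr
        rw [show (k : ℝ≥0∞) * (sur 2⁻¹ + ∑' z, ζ z * (Fᶜ.indicator (fun z => sur (ζ z)) z)
          + 24 * θ * Ent ζ) = ∑ b ∈ Finset.range k, (sur 2⁻¹ +
          ∑' z, ζ z * (Fᶜ.indicator (fun z => sur (ζ z)) z) + 24 * θ * Ent ζ) by
            rw [Finset.sum_const, Finset.card_range, nsmul_eq_mul]]
        refine Finset.sum_le_sum fun b hb => ?_
        have hb := Finset.mem_range.1 hb
        rw [EE_add, EE_add, EE_const hζ, EE_coord hζ hb (Fᶜ.indicator (fun z => sur (ζ z)))]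
        gcongr
        rw [EE_coord hζ hb (fun z => sur (ζ z) * (24 * θ))]
        simp only [← mul_assoc]
        rw [ENNReal.tsum_mul_right, ENNReal.tsum_mul_right]
        unfold Ent
        rw [mul_comm (24 * θ), mul_assoc]

end coding2
end EC

open scoped ENNReal

namespace EC
section geom
variable {X : Type*} [MetricSpace X]

def Pr (γ : ℤ → X) (x : X) (i : ℤ) : Prop := ∀ j, dist x (γ i) ≤ dist x (γ j)

variable {γ : ℤ → X} {K : ℝ}

lemma qg_lower (hK : 1 < K) (h : IsQuasigeodesicZ K γ) (i j : ℤ) :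
    |(i : ℝ) - j| ≤ K * (dist (γ i) (γ j) + K) := by
  have h1 := (h i j).1
  have hK0 : 0 < K := by linarith
  have : |(i : ℝ) - j| / K ≤ dist (γ i) (γ j) + K := by linarith
  rw [div_le_iff₀ hK0] at this
  linarith

lemma exists_Pr (hK : 1 < K) (h : IsQuasigeodesicZ K γ) (x : X) : ∃ i, Pr γ x i := by
  set B : ℝ := K * (2 * dist x (γ 0) + K) with hB
  have hB0 : 0 ≤ B := by
    have := dist_nonneg (x := x) (y := γ 0)
    have : 0 < K := by linarith
    positivity
  set n : ℕ := ⌈B⌉₊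
  obtain ⟨i, hi, hmin⟩ := (Finset.Icc (-(n:ℤ)) n).exists_min_image (fun j => dist x (γ j))
    ⟨0, by simp⟩
  refine ⟨i, fun j => ?_⟩
  by_cases hj : j ∈ Finset.Icc (-(n:ℤ)) n
  · exact hmin j hj
  · refine (hmin 0 (by simp)).trans ?_
    by_contra hlt
    push Not at hlt
    apply hj
    have h1 := qg_lower hK h j 0
    have h2 : dist (γ j) (γ 0) ≤ 2 * dist x (γ 0) := by
      have := dist_triangle_left (γ j) (γ 0) x
      linarith
    have h3 : |(j : ℝ)| ≤ B := by
      have : |(j : ℝ) - (0 : ℤ)| = |(j : ℝ)| := by simp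
      rw [this] at h1
      refine h1.trans ?_
      rw [hB]; gcongr
    have h4 : |(j:ℝ)| ≤ n := h3.trans (Nat.le_ceil B)
    rw [abs_le] at h4
    rw [Finset.mem_Icc]
    constructor
    · have := h4.1; exact_mod_cast this
    · exact_mod_cast h4.2

lemma infDist_Pr {x : X} {i : ℤ} (h : Pr γ x i) : Metric.infDist x (Set.range γ) = dist x (γ i) := by
  refine le_antisymm (Metric.infDist_le_dist_of_mem (Set.mem_range_self i)) ?_
  refine (Metric.le_infDist (Set.range_nonempty γ)).2 ?_
  rintro _ ⟨j, rfl⟩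
  exact h j

/-- unit speed on `[0, ℓ]` -/
def Geo (f : ℝ → X) (l : ℝ) : Prop :=
  0 ≤ l ∧ ∀ s ∈ Set.Icc (0 : ℝ) l, ∀ t ∈ Set.Icc (0 : ℝ) l, dist (f s) (f t) = |s - t|

lemma Geo.sub {f : ℝ → X} {l s t : ℝ} (h : Geo f l) (hs : 0 ≤ s) (hst : s ≤ t) (ht : t ≤ l) :
    Geo (fun u => f (s + u)) (t - s) := by
  refine ⟨by linarith, fun a ha b hb => ?_⟩
  rw [h.2 _ ⟨by linarith [ha.1], by linarith [ha.2]⟩ _ ⟨by linarith [hb.1], by linarith [hb.2]⟩]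
  congr 1; ring

lemma Geo.rev {f : ℝ → X} {l : ℝ} (h : Geo f l) : Geo (fun u => f (l - u)) l := by
  refine ⟨h.1, fun a ha b hb => ?_⟩
  rw [h.2 _ ⟨by linarith [ha.2], by linarith [ha.1]⟩ _ ⟨by linarith [hb.2], by linarith [hb.1]⟩,
    abs_sub_comm]
  congr 1; ring

lemma Geo.of {f : ℝ → X} {x y : X} (h : IsGeodesicSegment f x y) : Geo f (dist x y) :=
  ⟨dist_nonneg, h.2.2⟩

lemma Geo.seg {f : ℝ → X} {l : ℝ} (h : Geo f l) : IsGeodesicSegment f (f 0) (f l) := by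
  have e : dist (f 0) (f l) = l := by
    rw [h.2 0 ⟨le_rfl, h.1⟩ l ⟨h.1, le_rfl⟩]
    simp [abs_of_nonneg h.1]
  refine ⟨rfl, by rw [e], ?_⟩
  rw [e]; exact h.2

lemma contr0 (hK : 1 < K) (hax : IsContractingAxisZ K γ) {f : ℝ → X} {l : ℝ} (h : Geo f l)
    (hd : ∀ u ∈ Set.Icc (0:ℝ) l, K ≤ Metric.infDist (f u) (Set.range γ)) {i j : ℤ}
    (hi : Pr γ (f 0) i) (hj : Pr γ (f l) j) : dist (γ i) (γ j) < K := by
  have e : dist (f 0) (f l) = l := by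
    rw [h.2 0 ⟨le_rfl, h.1⟩ l ⟨h.1, le_rfl⟩]
    simp [abs_of_nonneg h.1]
  have := hax.2 f _ _ h.seg (by rw [e]; exact hd)
  rw [e] at this
  have hm : ∀ u ∈ Set.Icc (0:ℝ) l, ∀ i, Pr γ (f u) i →
      γ i ∈ projSetOf (Set.range γ) (f '' Set.Icc 0 l) := by
    intro u hu i hi
    refine Set.mem_iUnion₂.2 ⟨f u, ⟨u, hu, rfl⟩, ⟨i, rfl⟩, ?_⟩
    exact (infDist_Pr hi).symm
  have h2 := EMetric.edist_le_diam_of_mem (hm 0 ⟨le_rfl, h.1⟩ i hi) (hm l ⟨h.1, le_rfl⟩ j hj)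
  have h3 := h2.trans_lt this
  rw [edist_dist, ENNReal.ofReal_lt_ofReal_iff (by linarith)] at h3
  exact h3

lemma contr (hK : 1 < K) (hax : IsContractingAxisZ K γ) {f : ℝ → X} {l : ℝ} (h : Geo f l)
    {s t : ℝ} (hs : 0 ≤ s) (hst : s ≤ t) (ht : t ≤ l)
    (hd : ∀ u, s ≤ u → u ≤ t → K ≤ Metric.infDist (f u) (Set.range γ)) {i j : ℤ}
    (hi : Pr γ (f s) i) (hj : Pr γ (f t) j) : dist (γ i) (γ j) < K := by
  refine contr0 hK hax (h.sub hs hst ht) (fun u hu => hd _ (by linarith [hu.1])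
    (by linarith [hu.2])) ?_ ?_
  · simpa using hi
  · simpa using hj

lemma Geo.infLip {f : ℝ → X} {l : ℝ} (h : Geo f l) (B : Set X) {s t : ℝ} (hs : s ∈ Set.Icc 0 l)
    (ht : t ∈ Set.Icc 0 l) : Metric.infDist (f s) B ≤ Metric.infDist (f t) B + |s - t| := by
  rw [← h.2 s hs t ht]
  exact Metric.infDist_le_infDist_add_dist

lemma Geo.closed {f : ℝ → X} {l : ℝ} (h : Geo f l) (B : Set X) (c : ℝ) {a b : ℝ} (ha : 0 ≤ a)
    (hb : b ≤ l) : IsCompact {u | u ∈ Set.Icc a b ∧ Metric.infDist (f u) B ≤ c} := by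
  have hc : ContinuousOn (fun u => Metric.infDist (f u) B) (Set.Icc a b) := by
    refine LipschitzOnWith.continuousOn (K := 1) (LipschitzOnWith.of_dist_le_mul ?_)
    intro s hs t ht
    have hs' : s ∈ Set.Icc 0 l := ⟨ha.trans hs.1, hs.2.trans hb⟩
    have ht' : t ∈ Set.Icc 0 l := ⟨ha.trans ht.1, ht.2.trans hb⟩
    have h1 := h.infLip B hs' ht'
    have h2 := h.infLip B ht' hs'
    rw [abs_sub_comm] at h2
    simp only [Real.dist_eq, NNReal.coe_one, one_mul]
    rw [abs_le]; constructor <;> linarith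
  exact isCompact_Icc.of_isClosed_subset
    (hc.preimage_isClosed_of_isClosed isClosed_Icc isClosed_Iic) fun u hu => hu.1

/-- first hitting -/
lemma first_hit (hK : 1 < K) (hax : IsContractingAxisZ K γ) {f : ℝ → X} {l : ℝ} (h : Geo f l)
    {i : ℤ} (hi : Pr γ (f 0) i) {c : ℝ} (hc : c ∈ Set.Icc 0 l)
    (hcK : Metric.infDist (f c) (Set.range γ) ≤ K) :
    ∃ s, 0 ≤ s ∧ s ≤ c ∧ dist (f s) (γ i) ≤ 2 * K ∧
      (∀ u, 0 ≤ u → u < s → K < Metric.infDist (f u) (Set.range γ)) := by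
  obtain ⟨s, ⟨hs, hsK⟩, hmin⟩ := (h.closed (Set.range γ) K le_rfl le_rfl).exists_isLeast
    ⟨c, hc, hcK⟩
  have hlt : ∀ u, 0 ≤ u → u < s → K < Metric.infDist (f u) (Set.range γ) := by
    intro u hu hus
    by_contra hle
    push Not at hle
    exact absurd (hmin ⟨⟨hu, hus.le.trans hs.2⟩, hle⟩) (not_le.2 hus)
  refine ⟨s, hs.1, hmin ⟨hc, hcK⟩, ?_, hlt⟩
  rcases hs.1.eq_or_lt with rfl | hpos
  · rw [infDist_Pr hi] at hsK; linarith
  · have hge : ∀ u, 0 ≤ u → u ≤ s → K ≤ Metric.infDist (f u) (Set.range γ) := by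
      intro u hu hus
      rcases hus.eq_or_lt with rfl | hus
      · refine le_of_forall_pos_le_add fun ε hε => ?_
        have h1 := hlt (max 0 (u - ε)) (le_max_left _ _) (max_lt hpos (by linarith))
        have h2 := h.infLip (Set.range γ) (s := max 0 (u - ε)) (t := u)
          ⟨le_max_left _ _, max_le h.1 (by linarith [hs.2])⟩ hs
        have h3 : |max 0 (u - ε) - u| ≤ ε := by
          have h4 := le_max_right 0 (u - ε)
          have h5 : max 0 (u - ε) ≤ u := max_le hu (by linarith)
          rw [abs_le]; constructor <;> linarith
        linarith
      · exact (hlt u hu hus).le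
    obtain ⟨i', hi'⟩ := exists_Pr hK hax.1 (f s)
    have h1 := contr hK hax h le_rfl hs.1 hs.2 hge hi hi'
    rw [infDist_Pr hi'] at hsK
    have := dist_triangle_right (f s) (γ i) (γ i')
    linarith

lemma lemA (hK : 1 < K) (hax : IsContractingAxisZ K γ) {f : ℝ → X} {l : ℝ} (h : Geo f l)
    {i j : ℤ} (hi : Pr γ (f 0) i) (hj : Pr γ (f l) j) (hij : K ≤ dist (γ i) (γ j)) :
    ∃ s t, 0 ≤ s ∧ s ≤ t ∧ t ≤ l ∧ dist (f s) (γ i) ≤ 2 * K ∧ dist (f t) (γ j) ≤ 2 * K := by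
  have hex : ∃ c ∈ Set.Icc 0 l, Metric.infDist (f c) (Set.range γ) ≤ K := by
    by_contra hno
    push Not at hno
    have := contr0 hK hax h (fun u hu => (hno u hu).le) hi hj
    linarith
  obtain ⟨c, hc, hcK⟩ := hex
  obtain ⟨s, hs0, hsc, hsd, -⟩ := first_hit hK hax h hi hc hcK
  obtain ⟨t, ht0, htc, htd, -⟩ := first_hit hK hax h.rev (i := j) (by simpa using hj)
    (c := l - c) ⟨by linarith [hc.2], by linarith [hc.1]⟩ (by simpa using hcK)
  exact ⟨s, l - t, hs0, by linarith, by linarith, hsd, htd⟩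

lemma qconv (hK : 1 < K) (hax : IsContractingAxisZ K γ) {f : ℝ → X} {l : ℝ} (h : Geo f l)
    {R : ℝ} (hR : K ≤ R) (h0 : Metric.infDist (f 0) (Set.range γ) ≤ R)
    (hl : Metric.infDist (f l) (Set.range γ) ≤ R) {u : ℝ} (hu : u ∈ Set.Icc 0 l) :
    Metric.infDist (f u) (Set.range γ) ≤ 3 * R := by
  by_cases hle : Metric.infDist (f u) (Set.range γ) ≤ R
  · linarith
  obtain ⟨s, ⟨hs, hsR⟩, hsmax⟩ := (h.closed (Set.range γ) R (a := 0) (b := u) le_rfl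
    hu.2).exists_isGreatest ⟨0, ⟨le_rfl, hu.1⟩, h0⟩
  obtain ⟨t, ⟨ht, htR⟩, htmin⟩ := (h.closed (Set.range γ) R (a := u) (b := l) hu.1
    le_rfl).exists_isLeast ⟨l, ⟨hu.2, le_rfl⟩, hl⟩
  have hsI : s ∈ Set.Icc 0 l := ⟨hs.1, hs.2.trans hu.2⟩
  have htI : t ∈ Set.Icc 0 l := ⟨hu.1.trans ht.1, ht.2⟩
  have hbig : ∀ v, s < v → v < t → R < Metric.infDist (f v) (Set.range γ) := by
    intro v h1 h2
    by_contra hv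
    push Not at hv
    rcases le_total v u with h3 | h3
    · exact absurd (hsmax ⟨⟨hs.1.trans h1.le, h3⟩, hv⟩) (not_le.2 h1)
    · exact absurd (htmin ⟨⟨h3, h2.le.trans ht.2⟩, hv⟩) (not_le.2 h2)
  have hsu : s < u := lt_of_le_of_ne hs.2 (fun e => hle (e ▸ hsR))
  have hut : u < t := lt_of_le_of_ne ht.1 (fun e => hle (e ▸ htR))
  have hge : ∀ v, s ≤ v → v ≤ t → K ≤ Metric.infDist (f v) (Set.range γ) := by
    intro v h1 h2
    refine le_of_forall_pos_le_add fun ε hε => ?_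
    have hvI : v ∈ Set.Icc 0 l := ⟨hs.1.trans h1, h2.trans ht.2⟩
    obtain ⟨v', h3, h4, h5⟩ : ∃ v', s < v' ∧ v' < t ∧ |v' - v| ≤ ε := by
      rcases lt_or_ge v u with h6 | h6
      · refine ⟨min u (v + ε), lt_min hsu (by linarith), (min_le_left _ _).trans_lt hut, ?_⟩
        have := min_le_right u (v + ε)
        have : v ≤ min u (v + ε) := le_min h6.le (by linarith)
        rw [abs_le]; constructor <;> linarith
      · refine ⟨max u (v - ε), hsu.trans_le (le_max_left _ _), max_lt hut (by linarith), ?_⟩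
        have := le_max_right u (v - ε)
        have : max u (v - ε) ≤ v := max_le h6 (by linarith)
        rw [abs_le]; constructor <;> linarith
    have h6 := hbig v' h3 h4
    have h7 := h.infLip (Set.range γ) (s := v') (t := v) ⟨hs.1.trans h3.le, h4.le.trans ht.2⟩ hvI
    linarith
  obtain ⟨i, hi⟩ := exists_Pr hK hax.1 (f s)
  obtain ⟨j, hj⟩ := exists_Pr hK hax.1 (f t)
  have hc := contr hK hax h hs.1 (hsu.trans hut).le ht.2 hge hi hj
  rw [infDist_Pr hi] at hsR
  rw [infDist_Pr hj] at htR
  have hst : t - s ≤ 3 * R := by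
    have e : dist (f s) (f t) = t - s := by
      rw [h.2 s hsI t htI, abs_sub_comm, abs_of_nonneg (by linarith)]
    have := dist_triangle4_right (f s) (f t) (γ i) (γ j)
    linarith
  have h1 := h.infLip (Set.range γ) hu hsI
  have h2 := h.infLip (Set.range γ) hu htI
  rw [infDist_Pr hi] at h1
  rw [infDist_Pr hj] at h2
  rw [abs_of_nonneg (by linarith)] at h1
  rw [abs_of_nonpos (by linarith)] at h2
  linarith

noncomputable def D1 (K : ℝ) : ℝ := 6 * K + (K * (K * (13 * K + 2)) + K)

lemma ft_aux (hK : 1 < K) (hax : IsContractingAxisZ K γ) {f : ℝ → X} {l : ℝ} (h : Geo f l)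
    {i j : ℤ} (hi : dist (f 0) (γ i) ≤ 2 * K) (hj : dist (f l) (γ j) ≤ 2 * K) {n : ℤ}
    (h1 : i ≤ n) (h2 : n ≤ j) : ∃ u ∈ Set.Icc 0 l, dist (f u) (γ n) ≤ D1 K := by
  have hinf : ∀ u ∈ Set.Icc 0 l, ∃ m, dist (f u) (γ m) ≤ 6 * K := by
    intro u hu
    obtain ⟨m, hm⟩ := exists_Pr hK hax.1 (f u)
    refine ⟨m, ?_⟩
    rw [← infDist_Pr hm]
    have := qconv hK hax h (R := 2 * K) (by linarith)
      ((Metric.infDist_le_dist_of_mem (Set.mem_range_self i)).trans hi)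
      ((Metric.infDist_le_dist_of_mem (Set.mem_range_self j)).trans hj) hu
    linarith
  set B : Set ℝ := {v | v ∈ Set.Icc 0 l ∧ ∃ m, m ≤ n ∧ dist (f v) (γ m) ≤ 6 * K} with hB
  have hB0 : (0:ℝ) ∈ B := ⟨⟨le_rfl, h.1⟩, i, h1, by linarith⟩
  have hbd : BddAbove B := ⟨l, fun v hv => hv.1.2⟩
  set c := sSup B
  have hc0 : 0 ≤ c := le_csSup hbd hB0
  have hcl : c ≤ l := csSup_le ⟨0, hB0⟩ fun v hv => hv.1.2
  obtain ⟨v1, hv1, hv1c⟩ := exists_lt_of_lt_csSup ⟨0, hB0⟩ (show c - 1 < c by linarith)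
  have hv1c' : v1 ≤ c := le_csSup hbd hv1
  obtain ⟨v2, hv2, hv2c, hv2c', m', hm', hd'⟩ : ∃ v2 ∈ Set.Icc 0 l, c ≤ v2 ∧ v2 ≤ c + 1 ∧
      ∃ m', n ≤ m' ∧ dist (f v2) (γ m') ≤ 6 * K := by
    rcases le_or_gt l (c + 1) with h3 | h3
    · exact ⟨l, ⟨h.1, le_rfl⟩, hcl, h3, j, h2, by linarith⟩
    · have hI : c + 1 ∈ Set.Icc 0 l := ⟨by linarith, h3.le⟩
      obtain ⟨m, hm⟩ := hinf (c+1) hI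
      refine ⟨c+1, hI, by linarith, le_rfl, m, ?_, hm⟩
      by_contra hlt
      push Not at hlt
      have := le_csSup hbd (show c + 1 ∈ B from ⟨hI, m, hlt.le, hm⟩)
      change c + 1 ≤ c at this
      linarith
  obtain ⟨hv1I, m, hm, hd⟩ := hv1
  refine ⟨v1, hv1I, ?_⟩
  have e : dist (f v1) (f v2) ≤ 2 := by
    rw [h.2 _ hv1I _ hv2, abs_le]; constructor <;> linarith
  have h3 : dist (γ m) (γ m') ≤ 12 * K + 2 := by
    have q1 := dist_triangle_left (γ m) (γ m') (f v1)
    have q2 := dist_triangle (f v1) (f v2) (γ m')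
    linarith
  have h4 := qg_lower hK hax.1 m m'
  have h5 : |(m:ℝ) - n| ≤ K * (13 * K + 2) := by
    have q1 : |(m:ℝ) - n| ≤ |(m:ℝ) - m'| := by
      have a1 : (m:ℝ) ≤ n := by exact_mod_cast hm
      have a2 : (n:ℝ) ≤ m' := by exact_mod_cast hm'
      rw [abs_of_nonpos (by linarith), abs_of_nonpos (by linarith)]
      linarith
    refine q1.trans (h4.trans ?_)
    exact mul_le_mul_of_nonneg_left (by linarith) (by linarith)
  have h6 := (hax.1 m n).2
  have h7 := dist_triangle (f v1) (γ m) (γ n)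
  have : K * |(m:ℝ) - n| ≤ K * (K * (13 * K + 2)) := by
    have : 0 < K := by linarith
    gcongr
  unfold D1
  linarith

lemma far_of (hK : 1 < K) (hax : IsContractingAxisZ K γ) {i j : ℤ}
    (hij : 2 * K ^ 2 < |(i:ℝ) - j|) : K ≤ dist (γ i) (γ j) := by
  have := qg_lower hK hax.1 i j
  by_contra hlt
  push Not at hlt
  have : K * (dist (γ i) (γ j) + K) ≤ K * (K + K) := by
    have : 0 < K := by linarith
    gcongr
  nlinarith

/-- fellow travelling -/
lemma ft (hK : 1 < K) (hax : IsContractingAxisZ K γ) {f : ℝ → X} {l : ℝ} (h : Geo f l)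
    {i j : ℤ} (hi : Pr γ (f 0) i) (hj : Pr γ (f l) j) (hij : 2 * K ^ 2 < |(i:ℝ) - j|) {n : ℤ}
    (h1 : i ≤ n ∧ n ≤ j ∨ j ≤ n ∧ n ≤ i) : ∃ u ∈ Set.Icc 0 l, dist (f u) (γ n) ≤ D1 K := by
  have core : ∀ {f : ℝ → X} {i j : ℤ}, Geo f l → Pr γ (f 0) i → Pr γ (f l) j →
      2 * K ^ 2 < |(i:ℝ) - j| → i ≤ n → n ≤ j → ∃ u ∈ Set.Icc 0 l, dist (f u) (γ n) ≤ D1 K := by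
    intro f i j h hi hj hij h1 h2
    obtain ⟨s, t, hs, hst, ht, hsd, htd⟩ := lemA hK hax h hi hj (far_of hK hax hij)
    obtain ⟨u, hu, hud⟩ := ft_aux hK hax (h.sub hs hst ht) (i := i) (j := j)
      (by simpa using hsd) (by simpa using htd) h1 h2
    exact ⟨s + u, ⟨by linarith [hu.1], by linarith [hu.2]⟩, hud⟩
  rcases h1 with h1 | h1
  · exact core h hi hj hij h1.1 h1.2
  · obtain ⟨u, hu, hud⟩ := core h.rev (i := j) (j := i) (by simpa using hj) (by simpa using hi)
      (by rwa [abs_sub_comm]) h1.1 h1.2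
    exact ⟨l - u, ⟨by linarith [hu.2], by linarith [hu.1]⟩, hud⟩

end geom
end EC

open scoped ENNReal
namespace EC
set_option linter.unusedSectionVars false
set_option linter.unusedVariables false
section grp
variable {G X : Type*} [Group G] [MetricSpace X] [MulAction G X] {o : X} {g : G} {K : ℝ}

/-- the orbit of the basepoint -/
def orb (o : X) (g : G) : ℤ → X := fun i => g ^ i • o

structure Ctx (o : X) (g : G) (K : ℝ) : Prop where
  geo : IsGeodesicSpace X
  iso : ∀ g : G, Isometry fun x : X => g • x
  hK : 1 < K
  ax : IsContractingAxisZ K (orb o g)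
  wpd : IsWPD o g

lemma Ctx.ds (c : Ctx o g K) (h : G) (x y : X) : dist (h • x) (h • y) = dist x y :=
  (c.iso h).dist_eq x y

lemma orb_zero : orb o g 0 = o := by simp [orb]

lemma orb_add (i j : ℤ) : orb o g (i + j) = g ^ i • orb o g j := by
  simp [orb, zpow_add, mul_smul]

lemma Ctx.dinv (c : Ctx o g K) (h : G) (x y : X) : dist (h⁻¹ • x) y = dist x (h • y) := by
  rw [← c.ds h, smul_inv_smul]

lemma Ctx.Pr_shift (c : Ctx o g K) {x : X} {i : ℤ} (n : ℤ) (h : Pr (orb o g) x i) :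
    Pr (orb o g) (g ^ n • x) (n + i) := by
  intro j
  have := h (-n + j)
  have e : orb o g j = g ^ n • orb o g (-n + j) := by rw [← orb_add]; congr 1; ring
  rw [e, orb_add, c.ds, c.ds]
  exact this

lemma Ctx.Pr_self (c : Ctx o g K) (i : ℤ) : Pr (orb o g) (orb o g i) i := by
  intro j; rw [dist_self]; exact dist_nonneg

lemma Ctx.inj (c : Ctx o g K) {i j : ℤ} (h : g ^ i = g ^ j) : i = j := by
  by_contra hne
  have h1 : g ^ (i - j) = 1 := by rw [zpow_sub, h, mul_inv_cancel]
  have h2 : (1:ℝ) ≤ |((i - j : ℤ) : ℝ)| := by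
    have : (1:ℤ) ≤ |i - j| := Int.one_le_abs (sub_ne_zero.2 hne)
    exact_mod_cast this
  obtain ⟨n, hn⟩ := exists_nat_gt (K * K)
  have h3 := qg_lower c.hK c.ax.1 ((i - j) * n) 0
  have e : orb o g ((i-j) * n) = orb o g 0 := by
    simp [orb, zpow_mul, h1]
  rw [e, dist_self, zero_add] at h3
  have : |(((i - j) * n : ℤ) : ℝ) - ((0:ℤ):ℝ)| = |((i - j : ℤ) : ℝ)| * n := by
    push_cast
    rw [sub_zero, abs_mul, abs_of_nonneg (Nat.cast_nonneg n : (0:ℝ) ≤ n)]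
  rw [this] at h3
  have : (0:ℝ) ≤ n := Nat.cast_nonneg n
  nlinarith

/-- the coarse stabilizer along the axis -/
def WS (o : X) (g : G) (D : ℝ) (N : ℕ) : Set G :=
  {k : G | dist o (k • o) ≤ D ∧ ∃ e : ℤ, dist (k • orb o g e) (orb o g N) ≤ D}

lemma Ctx.finWS (c : Ctx o g K) {D : ℝ} (hD : 0 ≤ D) : ∃ N : ℕ, 0 < N ∧ (WS o g D N).Finite := by
  obtain ⟨N, hN, hfin⟩ := c.wpd (2 * D) (by linarith)
  refine ⟨N, hN, ?_⟩
  set n : ℕ := ⌈K * (D + dist o (orb o g N) + D + K)⌉₊ with hn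
  have hsub : WS o g D N ⊆ ⋃ e ∈ Finset.Icc (-(n:ℤ)) n,
      {k : G | dist o (k • o) ≤ D ∧ dist (k • orb o g e) (orb o g N) ≤ D} := by
    rintro k ⟨h1, e, h2⟩
    simp only [Set.mem_iUnion]
    refine ⟨e, ?_, h1, h2⟩
    have h3 := qg_lower c.hK c.ax.1 e 0
    have h4 : dist (orb o g e) (orb o g 0) ≤ D + dist o (orb o g N) + D := by
      rw [← c.ds k, orb_zero]
      have q1 := dist_triangle (k • orb o g e) (orb o g N) (k • o)
      have q2 := dist_triangle (orb o g N) o (k • o)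
      rw [dist_comm o (orb o g N)]
      linarith
    have h5 : |(e:ℝ) - ((0:ℤ):ℝ)| ≤ n := by
      refine h3.trans (le_trans ?_ (Nat.le_ceil _))
      have := c.hK
      exact mul_le_mul_of_nonneg_left (by linarith) (by linarith)
    rw [Int.cast_zero, sub_zero, abs_le] at h5
    rw [Finset.mem_Icc]
    constructor
    · have := h5.1; exact_mod_cast this
    · exact_mod_cast h5.2
  refine Set.Finite.subset (Set.Finite.biUnion (Finset.finite_toSet _) fun e _ => ?_) hsub
  rcases Set.eq_empty_or_nonempty {k : G | dist o (k • o) ≤ D ∧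
    dist (k • orb o g e) (orb o g N) ≤ D} with h0 | ⟨k0, h01, h02⟩
  · rw [h0]; exact Set.finite_empty
  refine Set.Finite.of_injOn (f := fun k => k * k0⁻¹) ?_ ?_ hfin
  · rintro k ⟨h1, h2⟩
    constructor
    · have q := dist_triangle o (k • o) ((k * k0⁻¹) • o)
      rw [mul_smul, c.ds, dist_comm o (k0⁻¹ • o), c.dinv] at q
      rw [mul_smul]; linarith
    · have e1 : (g ^ N) • o = orb o g N := by simp [orb]
      rw [mul_smul, e1]
      have q := dist_triangle (orb o g N) (k • orb o g e) ((k * k0⁻¹) • orb o g N)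
      rw [mul_smul k k0⁻¹, c.ds, dist_comm (orb o g e), c.dinv, dist_comm (orb o g N) (k • _),
        dist_comm (orb o g N) (k0 • _)] at q
      rw [mul_smul, dist_comm]
      rw [dist_comm (orb o g N) (k • orb o g e)] at q
      linarith
  · intro a _ b _ hab
    exact mul_right_cancel hab

/-- the elementary closure -/
def El (g : G) : Subgroup G where
  carrier := {h | ∃ p q : ℤ, p ≠ 0 ∧ q ≠ 0 ∧ h * g ^ p * h⁻¹ = g ^ q}
  one_mem' := ⟨1, 1, one_ne_zero, one_ne_zero, by simp⟩
  mul_mem' := by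
    rintro a b ⟨p, q, hp, hq, h⟩ ⟨p', q', hp', hq', h'⟩
    refine ⟨p' * p, q * q', mul_ne_zero hp' hp, mul_ne_zero hq hq', ?_⟩
    have e1 : b * g ^ (p' * p) * b⁻¹ = g ^ (q' * p) := by
      rw [zpow_mul, ← conj_zpow, h', zpow_mul]
    have e2 : a * g ^ (q' * p) * a⁻¹ = g ^ (q * q') := by
      rw [mul_comm, zpow_mul, ← conj_zpow, h, zpow_mul]
    rw [← e2, ← e1]; group
  inv_mem' := by
    rintro a ⟨p, q, hp, hq, h⟩
    refine ⟨q, p, hq, hp, ?_⟩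
    rw [← h]; group

lemma mem_El {h : G} : h ∈ El g ↔ ∃ p q : ℤ, p ≠ 0 ∧ q ≠ 0 ∧ h * g ^ p * h⁻¹ = g ^ q := Iff.rfl

lemma zpow_mem_El (i : ℤ) : g ^ i ∈ El g :=
  Subgroup.zpow_mem _ (mem_El.2 ⟨1, 1, one_ne_zero, one_ne_zero, by simp⟩) i

lemma Ctx.memEl (c : Ctx o g K) {D : ℝ} {N : ℕ} (hf : (WS o g D N).Finite) {h : G}
    (hinf : {l : ℤ | (∃ m, dist (orb o g l) (h • orb o g m) ≤ D) ∧
      ∃ m, dist (orb o g (l + N)) (h • orb o g m) ≤ D}.Infinite) : h ∈ El g := by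
  classical
  set S := {l : ℤ | (∃ m, dist (orb o g l) (h • orb o g m) ≤ D) ∧
      ∃ m, dist (orb o g (l + N)) (h • orb o g m) ≤ D}
  have hch : ∀ l : ℤ, ∃ m : ℤ, l ∈ S → g ^ (-l) * h * g ^ m ∈ WS o g D N := by
    intro l
    by_cases hl : l ∈ S
    · obtain ⟨⟨m, hm⟩, m', hm'⟩ := id hl
      refine ⟨m, fun _ => ⟨?_, m' - m, ?_⟩⟩
      · rw [mul_smul, mul_smul, zpow_neg, dist_comm, c.dinv, dist_comm]
        exact hm
      · rw [mul_smul, mul_smul, zpow_neg, c.dinv, ← orb_add, ← orb_add, dist_comm]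
        convert hm' using 4; ring
    · exact ⟨0, fun h => absurd h hl⟩
  choose f hfm using hch
  obtain ⟨l1, -, l2, -, hne, heq⟩ := hinf.exists_ne_map_eq_of_mapsTo
    (f := fun l => g ^ (-l) * h * g ^ (f l)) (fun l hl => hfm l hl) hf
  have e : h * g ^ (f l1 - f l2) * h⁻¹ = g ^ (l1 - l2) := by
    have heq' : g ^ (-l1) * h * g ^ (f l1) = g ^ (-l2) * h * g ^ (f l2) := heq
    have e1 : h * g ^ (f l1) = g ^ (l1 - l2) * (h * g ^ (f l2)) := by
      calc h * g ^ (f l1) = g ^ l1 * (g ^ (-l1) * h * g ^ (f l1)) := by group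
        _ = g ^ l1 * (g ^ (-l2) * h * g ^ (f l2)) := by rw [heq']
        _ = _ := by group
    calc h * g ^ (f l1 - f l2) * h⁻¹ = (h * g ^ (f l1)) * (g ^ (- f l2) * h⁻¹) := by group
      _ = _ := by rw [e1]; group
  refine ⟨f l1 - f l2, l1 - l2, ?_, sub_ne_zero.2 hne, e⟩
  intro h0
  rw [h0, zpow_zero, mul_one, mul_inv_cancel] at e
  exact sub_ne_zero.2 hne (c.inj (i := l1 - l2) (j := 0) (by rw [← e, zpow_zero]))

/-- fellow-travel constant -/
noncomputable def D3 (K : ℝ) : ℝ := D1 K + 6 * K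

lemma Ctx.geoS (c : Ctx o g K) (x y : X) : ∃ f : ℝ → X, Geo f (dist x y) ∧ f 0 = x ∧ f (dist x y) = y := by
  obtain ⟨f, hf⟩ := c.geo x y
  exact ⟨f, Geo.of hf, hf.1, hf.2.1⟩

lemma Ctx.geo_smul (c : Ctx o g K) {f : ℝ → X} {l : ℝ} (h : Geo f l) (a : G) :
    Geo (fun u => a • f u) l := ⟨h.1, fun s hs t ht => by rw [c.ds]; exact h.2 s hs t ht⟩

lemma Ctx.noE (c : Ctx o g K) {h : G} (hE : h ∉ El g) : ∃ C : ℕ, ∀ (x : X) (i j : ℤ),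
    Pr (orb o g) x i → Pr (orb o g) (h⁻¹ • x) j → |i| ≤ C ∨ |j| ≤ C := by
  by_contra hno
  push Not at hno
  have hK := c.hK
  have hD10 : 0 ≤ D1 K := by
    have : 0 < K := by linarith
    unfold D1; positivity
  obtain ⟨N, hN, hfin⟩ := c.finWS (D := D3 K) (by unfold D3; linarith)
  set Λ : Set ℤ := {l | ∃ m, dist (orb o g l) (h • orb o g m) ≤ D3 K} with hΛ
  obtain ⟨i0, hi0⟩ := exists_Pr hK c.ax.1 (h • o)
  have key : ∀ n : ℕ, (∀ l, i0 ≤ l → l ≤ i0 + n → l ∈ Λ) ∨ (∀ l, i0 - n ≤ l → l ≤ i0 → l ∈ Λ) := by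
    intro n
    set U : ℝ := dist (h • o) (orb o g i0) + (K * n + K) + D1 K with hU
    obtain ⟨C, hC⟩ := exists_nat_gt (|(i0:ℝ)| + n + 2 * K ^ 2 + K * (U + 3 * K))
    have hU0 : 0 ≤ U := by
      have : (0:ℝ) ≤ K * n := by positivity
      have := dist_nonneg (x := h • o) (y := orb o g i0)
      linarith
    have hUK : 0 ≤ K * (U + 3 * K) := by positivity
    obtain ⟨x, i, j, hi, hj, hiC, hjC⟩ := hno C
    have hiC' : (C:ℝ) < |(i:ℝ)| := by exact_mod_cast hiC
    have hjC' : (C:ℝ) < |(j:ℝ)| := by exact_mod_cast hjC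
    have hn0 : (0:ℝ) ≤ n := Nat.cast_nonneg n
    have hii : (n:ℝ) + 2 * K ^ 2 < |(i0:ℝ) - i| := by
      have := abs_sub_abs_le_abs_sub (i:ℝ) i0
      rw [abs_sub_comm] at this
      linarith
    obtain ⟨f, hf, hf0, hfl⟩ := c.geoS (h • o) x
    set L := dist (h • o) x
    have hcore : ∀ l : ℤ, |(l:ℝ) - i0| ≤ n → (i0 ≤ l ∧ l ≤ i ∨ i ≤ l ∧ l ≤ i0) → l ∈ Λ := by
      intro l hln hbt
      obtain ⟨u, hu, hud⟩ := ft hK c.ax hf (by rw [hf0]; exact hi0) (by rw [hfl]; exact hi)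
        (by linarith) hbt
      have huU : u ≤ U := by
        have e1 : dist (f 0) (f u) = u := by
          rw [hf.2 0 ⟨le_rfl, hf.1⟩ u hu, zero_sub, abs_neg, abs_of_nonneg hu.1]
        have q1 := dist_triangle (h • o) (orb o g i0) (f u)
        have q2 := dist_triangle (orb o g i0) (orb o g l) (f u)
        have q3 := (c.ax.1 i0 l).2
        rw [abs_sub_comm] at q3
        have q4 : K * |(l:ℝ) - i0| ≤ K * n := mul_le_mul_of_nonneg_left hln (by linarith)
        rw [← e1, hf0, hU]
        rw [dist_comm (orb o g l)] at q2
        linarith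
      have hg2 := c.geo_smul hf h⁻¹
      have hpr0 : Pr (orb o g) ((fun u => h⁻¹ • f u) 0) 0 := by
        show Pr (orb o g) (h⁻¹ • f 0) 0
        rw [hf0, inv_smul_smul]
        have := c.Pr_self 0
        rwa [orb_zero] at this
      have hprl : Pr (orb o g) ((fun u => h⁻¹ • f u) L) j := by
        show Pr (orb o g) (h⁻¹ • f L) j
        rw [hfl]; exact hj
      have hi00 : 0 ≤ |(i0:ℝ)| := abs_nonneg _
      obtain ⟨s, t, hs, hst, ht, -, htd⟩ := lemA hK c.ax hg2 hpr0 hprl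
        (far_of hK c.ax (by
          rw [Int.cast_zero, zero_sub, abs_neg]
          linarith))
      have htU : U ≤ t := by
        have e1 : dist ((fun u => h⁻¹ • f u) 0) ((fun u => h⁻¹ • f u) t) = t := by
          rw [hg2.2 0 ⟨le_rfl, hf.1⟩ t ⟨by linarith, ht⟩, zero_sub, abs_neg, abs_of_nonneg (by linarith)]
        have q1 := dist_triangle (orb o g 0) (h⁻¹ • f t) (orb o g j)
        have e2 : (fun u => h⁻¹ • f u) 0 = orb o g 0 := by
          show h⁻¹ • f 0 = _
          rw [hf0, inv_smul_smul, orb_zero]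
        rw [e2] at e1
        have q2 := qg_lower hK c.ax.1 0 j
        rw [Int.cast_zero, zero_sub, abs_neg] at q2
        have q5 : 0 ≤ 2 * K ^ 2 := by positivity
        have q3 : K * (U + 3 * K) ≤ K * (dist (orb o g 0) (orb o g j) + K) := by linarith
        have q4 := le_of_mul_le_mul_left q3 (by linarith)
        simp only at e1 htd
        linarith
      have hg3 := hg2.sub (s := 0) (t := t) le_rfl (by linarith) ht
      have q := qconv hK c.ax hg3 (R := 2 * K) (by linarith)
        ((Metric.infDist_le_dist_of_mem (Set.mem_range_self 0)).trans (by
          simp only [add_zero]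
          rw [hf0, inv_smul_smul, orb_zero, dist_self]; linarith))
        ((Metric.infDist_le_dist_of_mem (Set.mem_range_self j)).trans (by
          simp only [zero_add, sub_zero]; exact htd))
        (u := u) ⟨hu.1, by linarith⟩
      obtain ⟨m, hm⟩ := exists_Pr hK c.ax.1 (h⁻¹ • f u)
      simp only [zero_add] at q
      rw [infDist_Pr hm, c.dinv] at q
      refine ⟨m, ?_⟩
      have := dist_triangle (orb o g l) (f u) (h • orb o g m)
      rw [dist_comm (orb o g l) (f u)] at this
      unfold D3; linarith
    rcases le_total i0 i with h0 | h0
    · left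
      intro l hl1 hl2
      have a0 : (i0:ℝ) ≤ i := by exact_mod_cast h0
      have a1 : (i0:ℝ) ≤ l := by exact_mod_cast hl1
      have a2 : (l:ℝ) ≤ i0 + n := by exact_mod_cast hl2
      refine hcore l (by rw [abs_of_nonneg (by linarith)]; linarith) (Or.inl ⟨hl1, ?_⟩)
      rw [abs_of_nonpos (by linarith)] at hii
      have : (l:ℝ) ≤ i := by nlinarith
      exact_mod_cast this
    · right
      intro l hl1 hl2
      have a0 : (i:ℝ) ≤ i0 := by exact_mod_cast h0
      have a1 : (i0:ℝ) - n ≤ l := by exact_mod_cast hl1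
      have a2 : (l:ℝ) ≤ i0 := by exact_mod_cast hl2
      refine hcore l (by rw [abs_of_nonpos (by linarith)]; linarith) (Or.inr ⟨?_, hl2⟩)
      rw [abs_of_nonneg (by linarith)] at hii
      have : (i:ℝ) ≤ l := by nlinarith
      exact_mod_cast this
  apply hE
  refine c.memEl hfin ?_
  by_cases hP : ∀ n : ℕ, ∀ l, i0 ≤ l → l ≤ i0 + n → l ∈ Λ
  · have hall : ∀ l, i0 ≤ l → l ∈ Λ := fun l hl => hP (l - i0).toNat l hl (by omega)
    exact (Set.Ici_infinite i0).mono fun l hl => ⟨hall l hl, hall _ (by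
      have : i0 ≤ l := hl
      omega)⟩
  · push Not at hP
    obtain ⟨n1, l1, h1, h2, h3⟩ := hP
    have hall : ∀ l, l ≤ i0 → l ∈ Λ := by
      intro l hl
      rcases key (n1 + (i0 - l).toNat) with h | h
      · exact absurd (h l1 h1 (by push_cast; omega)) h3
      · exact h l (by push_cast; omega) hl
    exact (Set.Iic_infinite (i0 - N)).mono fun l hl => by
      have : l ≤ i0 - N := hl
      exact ⟨hall l (by omega), hall _ (by omega)⟩

lemma Ctx.finE (c : Ctx o g K) : ∃ Y : Set G, Y.Finite ∧ ∀ h ∈ El g, ∃ m : ℤ, h * g ^ m ∈ Y := by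
  have hK := c.hK
  have hD10 : 0 ≤ D1 K := by
    have : 0 < K := by linarith
    unfold D1; positivity
  obtain ⟨N, hN, hfin⟩ := c.finWS (D := D3 K) (by unfold D3; linarith)
  refine ⟨_, hfin, ?_⟩
  rintro h ⟨p, q, hp, hq, hpq⟩
  obtain ⟨i0, hi0⟩ := exists_Pr hK c.ax.1 (h • o)
  have key : ∀ l : ℤ, ∃ m, dist (orb o g l) (h • orb o g m) ≤ D3 K := by
    intro l
    obtain ⟨n, hn⟩ := exists_nat_gt (|((l - i0 : ℤ) : ℝ)| + 2 * K ^ 2)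
    have hconj : ∀ n : ℤ, h • orb o g (p * n) = g ^ (q * n) • (h • o) := by
      intro n
      rw [zpow_mul, ← hpq, conj_zpow, ← zpow_mul]
      simp [orb, mul_smul]
    obtain ⟨f, hf, hf0, hfl⟩ := c.geoS (h • orb o g (p * (-n))) (h • orb o g (p * n))
    set L := dist (h • orb o g (p * (-n))) (h • orb o g (p * n))
    have hq1 : (1:ℝ) ≤ |(q:ℝ)| := by
      have : (1:ℤ) ≤ |q| := Int.one_le_abs hq
      exact_mod_cast this
    have hqn : (n:ℝ) ≤ |(q:ℝ) * n| := by
      rw [abs_mul, abs_of_nonneg (Nat.cast_nonneg n : (0:ℝ) ≤ n)]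
      have : (0:ℝ) ≤ n := Nat.cast_nonneg n
      nlinarith
    have hK2 : 0 ≤ 2 * K ^ 2 := by positivity
    have hl1 : |l - i0| ≤ |q * n| := by
      have : |((l - i0 : ℤ) : ℝ)| ≤ |((q * n : ℤ) : ℝ)| := by push_cast at hn ⊢; linarith
      exact_mod_cast this
    obtain ⟨u, hu, hud⟩ := ft hK c.ax hf (i := q * (-n) + i0) (j := q * n + i0) (n := l)
      (by rw [hf0, hconj]; exact c.Pr_shift _ hi0) (by rw [hfl, hconj]; exact c.Pr_shift _ hi0)
      (by
        have e : ((q * (-n) + i0 : ℤ) : ℝ) - ((q * n + i0 : ℤ) : ℝ) = - (2 * (q * n)) := by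
          push_cast; ring
        rw [e, abs_neg, abs_mul, abs_of_nonneg (by norm_num : (0:ℝ) ≤ 2)]
        have := abs_nonneg ((l - i0 : ℤ) : ℝ)
        linarith)
      (by
        have e : q * (-n : ℤ) = - (q * n) := by ring
        rw [e]
        rcases abs_cases (l - i0) with h1 | h1 <;> rcases abs_cases (q * (n:ℤ)) with h2 | h2 <;> omega)
    have hg2 := c.geo_smul hf h⁻¹
    have qq := qconv hK c.ax hg2 (R := K) le_rfl
      ((Metric.infDist_le_dist_of_mem (Set.mem_range_self (p * (-n)))).trans (by
          rw [hf0, inv_smul_smul, dist_self]; linarith))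
      ((Metric.infDist_le_dist_of_mem (Set.mem_range_self (p * n))).trans (by
          rw [hfl, inv_smul_smul, dist_self]; linarith)) hu
    obtain ⟨m, hm⟩ := exists_Pr hK c.ax.1 (h⁻¹ • f u)
    rw [infDist_Pr hm, c.dinv] at qq
    refine ⟨m, ?_⟩
    have := dist_triangle (orb o g l) (f u) (h • orb o g m)
    rw [dist_comm (orb o g l) (f u)] at this
    unfold D3; linarith
  obtain ⟨m, hm⟩ := key 0
  obtain ⟨m', hm'⟩ := key N
  refine ⟨m, ?_, m' - m, ?_⟩
  · rw [mul_smul]; rwa [orb_zero] at hm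
  · rw [mul_smul, ← orb_add, dist_comm]
    convert hm' using 4; ring

lemma Ctx.conjE (c : Ctx o g K) {a : G} {e : ℤ} (he : e ≠ 0) (h : a * g ^ e * a⁻¹ ∈ El g) :
    a ∈ El g := by
  obtain ⟨Y, hY, hm⟩ := c.finE
  have h1 : ∀ n : ℕ, ∃ m : ℤ, a * g ^ (e * n) * a⁻¹ * g ^ m ∈ Y := by
    intro n
    apply hm
    have := Subgroup.pow_mem _ h n
    rwa [conj_pow, ← zpow_natCast, ← zpow_mul] at this
  choose f hf using h1
  obtain ⟨n1, -, n2, -, hne, heq⟩ := Set.infinite_univ.exists_ne_map_eq_of_mapsTo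
    (f := fun n : ℕ => a * g ^ (e * n) * a⁻¹ * g ^ (f n)) (fun n _ => hf n) hY
  have heq' : a * g ^ (e * n1) * a⁻¹ * g ^ (f n1) = a * g ^ (e * n2) * a⁻¹ * g ^ (f n2) := heq
  have hk : e * n1 - e * n2 ≠ 0 := by
    rw [← mul_sub]
    exact mul_ne_zero he (sub_ne_zero.2 (by exact_mod_cast hne))
  have e1 : a * g ^ (e * n1 - e * n2) * a⁻¹ = g ^ (f n2 - f n1) := by
    calc a * g ^ (e * n1 - e * n2) * a⁻¹
        = (a * g ^ (e * n2) * a⁻¹)⁻¹ * (a * g ^ (e * n1) * a⁻¹ * g ^ (f n1)) * g ^ (- f n1) := by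
          group
      _ = _ := by rw [heq']; group
  refine ⟨_, _, hk, ?_, e1⟩
  intro h0
  rw [h0, zpow_zero] at e1
  have : g ^ (e * (n1:ℤ) - e * n2) = g ^ (0:ℤ) := by
    calc g ^ (e * (n1:ℤ) - e * n2) = a⁻¹ * (a * g ^ (e * (n1:ℤ) - e * n2) * a⁻¹) * a := by group
      _ = _ := by rw [e1]; simp
  exact hk (c.inj this)

/-- Schottky words -/
def bw (t a : G) (J l : ℕ) : G := t ^ l * a * t ^ (J - l)

lemma Ctx.schottky (c : Ctx o g K) {a : G} (ha : a ∉ El g) {m : ℕ} (hm : 0 < m) (J : ℕ) :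
    ∃ C : ℕ, (∀ l ≤ J, ∀ l' ≤ J, l ≠ l' → ∀ (x : X) (i j : ℤ),
        Pr (orb o g) ((bw (g ^ m) a J l)⁻¹ • x) i → Pr (orb o g) ((bw (g ^ m) a J l')⁻¹ • x) j →
          |i| ≤ C ∨ |j| ≤ C) ∧
      (∀ l ≤ J, ∀ l' ≤ J, l ≠ l' → ∀ (x : X) (i j : ℤ),
        Pr (orb o g) (bw (g ^ m) a J l • x) i → Pr (orb o g) (bw (g ^ m) a J l' • x) j →
          |i| ≤ C ∨ |j| ≤ C) := by
  have ez : ∀ l : ℕ, (g ^ m) ^ l = g ^ ((m:ℤ) * l) := by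
    intro l; rw [← pow_mul, ← zpow_natCast]; push_cast; rfl
  have hmz : (m:ℤ) ≠ 0 := by exact_mod_cast hm.ne'
  have h1 : ∀ l l' : ℕ, l ≠ l' → (bw (g ^ m) a J l)⁻¹ * bw (g ^ m) a J l' ∉ El g := by
    intro l l' hne hE
    apply ha
    have : a⁻¹ * g ^ ((m:ℤ) * l' - m * l) * a⁻¹⁻¹ ∈ El g := by
      have := (El g).mul_mem ((El g).mul_mem (zpow_mem_El ((m:ℤ) * (J - l : ℕ))) hE)
        (zpow_mem_El (-((m:ℤ) * (J - l' : ℕ))))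
      convert this using 1
      unfold bw
      rw [ez, ez, ez, ez]; group
    have hz : (m:ℤ) * l' - m * l ≠ 0 := by
      rw [← mul_sub]; exact mul_ne_zero hmz (by omega)
    simpa using (El g).inv_mem (c.conjE hz this)
  have h2 : ∀ l ≤ J, ∀ l' ≤ J, l ≠ l' → bw (g ^ m) a J l * (bw (g ^ m) a J l')⁻¹ ∉ El g := by
    intro l hl l' hl' hne hE
    apply ha
    have hz : (m:ℤ) * (J - l : ℕ) - m * (J - l' : ℕ) ≠ 0 := by
      rw [← mul_sub]; exact mul_ne_zero hmz (by omega)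
    refine c.conjE hz ?_
    have := (El g).mul_mem ((El g).mul_mem (zpow_mem_El (-((m:ℤ) * l))) hE)
        (zpow_mem_El ((m:ℤ) * l'))
    convert this using 1
    unfold bw
    rw [ez, ez, ez, ez]; group
  have h1' : ∀ l l' : ℕ, ∃ C : ℕ, l ≠ l' → ∀ (x : X) (i j : ℤ),
      Pr (orb o g) ((bw (g ^ m) a J l)⁻¹ • x) i → Pr (orb o g) ((bw (g ^ m) a J l')⁻¹ • x) j →
          |i| ≤ C ∨ |j| ≤ C := by
    intro l l'
    by_cases hne : l = l'
    · exact ⟨0, fun h => absurd hne h⟩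
    obtain ⟨C, hC⟩ := c.noE (h1 l l' hne)
    refine ⟨C, fun _ x i j hi hj => hC _ i j hi ?_⟩
    convert hj using 1
    rw [← mul_smul]; congr 1; group
  have h2' : ∀ l l' : ℕ, ∃ C : ℕ, l ≤ J → l' ≤ J → l ≠ l' → ∀ (x : X) (i j : ℤ),
      Pr (orb o g) (bw (g ^ m) a J l • x) i → Pr (orb o g) (bw (g ^ m) a J l' • x) j →
          |i| ≤ C ∨ |j| ≤ C := by
    intro l l'
    by_cases hne : l ≤ J ∧ l' ≤ J ∧ l ≠ l'
    · obtain ⟨C, hC⟩ := c.noE (h2 l hne.1 l' hne.2.1 hne.2.2)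
      refine ⟨C, fun _ _ _ x i j hi hj => hC _ i j hi ?_⟩
      convert hj using 1
      rw [← mul_smul]; congr 1; group
    · exact ⟨0, fun h h' h'' => absurd ⟨h, h', h''⟩ hne⟩
  choose C1 hC1 using h1'
  choose C2 hC2 using h2'
  have hb : ∀ l ≤ J, ∀ l' ≤ J, C1 l l' + C2 l l' ≤
      ∑ l ∈ Finset.range (J+1), ∑ l' ∈ Finset.range (J+1), (C1 l l' + C2 l l') := by
    intro l hl l' hl'
    refine le_trans ?_ (Finset.single_le_sum (f := fun l => ∑ l' ∈ Finset.range (J+1), (C1 l l' + C2 l l'))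
      (fun _ _ => Nat.zero_le _) (Finset.mem_range.2 (Nat.lt_succ_of_le hl)))
    exact Finset.single_le_sum (f := fun l' => (C1 l l' + C2 l l'))
      (fun _ _ => Nat.zero_le _) (Finset.mem_range.2 (Nat.lt_succ_of_le hl'))
  refine ⟨∑ l ∈ Finset.range (J+1), ∑ l' ∈ Finset.range (J+1), (C1 l l' + C2 l l'), ?_, ?_⟩
  · intro l hl l' hl' hne x i j hi hj
    have := hb l hl l' hl'
    rcases hC1 l l' hne x i j hi hj with h | h
    · left; omega
    · right; omega
  · intro l hl l' hl' hne x i j hi hj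
    have := hb l hl l' hl'
    rcases hC2 l l' hl hl' hne x i j hi hj with h | h
    · left; omega
    · right; omega

end grp
end EC

open scoped ENNReal
namespace EC
section geo2
variable {G X : Type*} [Group G] [MetricSpace X] [MulAction G X] {o : X} {g : G} {K : ℝ}

lemma cnt_inj {α β : Type*} {B : Set α} {Y : Set β} (hY : Y.Finite) (f : α → β)
    (hf : ∀ x ∈ B, f x ∈ Y) (hi : ∀ x ∈ B, ∀ y ∈ B, f x = f y → x = y) :
    cnt B ≤ (Y.ncard : ℝ≥0∞) := by
  unfold cnt
  rw [ENNReal.tsum_set_one]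
  have h1 : B.encard ≤ Y.encard := Set.encard_le_encard_of_injOn hf fun x hx y hy h => hi x hx y hy h
  rw [← hY.cast_ncard_eq] at h1
  exact_mod_cast h1

/-- projections near the base point -/
def Nr (o : X) (g : G) (C : ℕ) (x : X) : Prop := ∀ i, Pr (orb o g) x i → |i| ≤ C

/-- displacement -/
noncomputable def nmo (o : X) (x : G) : ℝ := dist o (x • o)

lemma Ctx.nmo_inv (c : Ctx o g K) (x y : G) : dist (x • o) (y • o) = nmo o (x⁻¹ * y) := by
  unfold nmo; rw [← c.ds x⁻¹ (x • o), inv_smul_smul, mul_smul]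

lemma Ctx.nmo_mul (c : Ctx o g K) (x y : G) : nmo o (x * y) ≤ nmo o x + nmo o y := by
  have := dist_triangle o (x • o) ((x * y) • o)
  rw [c.nmo_inv x (x * y), inv_mul_cancel_left] at this
  exact this

lemma Ctx.track (c : Ctx o g K) {C I N : ℕ} (hI : 2 * C + 2 * K ^ 2 + N < I) {P Q u v : G}
    (hu : Nr o g C ((u * P)⁻¹ • o)) (hv : Nr o g C ((Q * v) • o)) {f : ℝ → X} {L : ℝ}
    (hf : Geo f L) (hf0 : f 0 = o) (hfl : f L = (u * (P * g ^ I * Q) * v) • o) {n : ℕ}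
    (h1 : C ≤ n) (h2 : n ≤ C + N) :
    ∃ τ ∈ Set.Icc 0 L, dist (f τ) ((u * P * g ^ n) • o) ≤ D1 K := by
  have hK := c.hK
  obtain ⟨i, hi⟩ := exists_Pr hK c.ax.1 ((u * P)⁻¹ • o)
  obtain ⟨j, hj⟩ := exists_Pr hK c.ax.1 ((Q * v) • o)
  have hiC := hu i hi
  have hjC := hv j hj
  have hj' := c.Pr_shift I hj
  have hg := c.geo_smul hf (u * P)⁻¹
  have hiC' : |(i:ℝ)| ≤ C := by exact_mod_cast hiC
  have hjC' : |(j:ℝ)| ≤ C := by exact_mod_cast hjC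
  rw [abs_le] at hiC' hjC' hiC hjC
  have hIN : (C:ℤ) + N + C ≤ I := by
    have : (2 * C + N : ℝ) < I := by nlinarith
    have : 2 * C + N < I := by exact_mod_cast this
    omega
  obtain ⟨τ, hτ, hd⟩ := ft hK c.ax hg (i := i) (j := I + j) (n := n)
    (by simp only [hf0]; exact hi)
    (by
      simp only [hfl]
      convert hj' using 1
      rw [← mul_smul, ← mul_smul]
      congr 1
      rw [zpow_natCast]; group)
    (by
      push_cast
      rw [abs_of_nonpos (by nlinarith)]
      have : (0:ℝ) ≤ N := Nat.cast_nonneg N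
      linarith)
    (Or.inl ⟨by omega, by omega⟩)
  refine ⟨τ, hτ, ?_⟩
  rw [c.dinv] at hd
  simpa [orb, mul_smul] using hd

lemma Ctx.datA (c : Ctx o g K) {C I : ℕ} (hI : 2 * C + 2 * K ^ 2 < I) (P Q : G) :
    ∃ A : ℕ, ∀ u v, Nr o g C ((u * P)⁻¹ • o) → Nr o g C ((Q * v) • o) →
      |nmo o (u * (P * g ^ I * Q) * v) - nmo o u - nmo o v| ≤ A := by
  set a1 := nmo o (P * g ^ I * Q)
  set a2 := nmo o (P * g ^ C)
  set a3 := nmo o ((P * g ^ C)⁻¹ * (P * g ^ I * Q))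
  obtain ⟨A, hA⟩ := exists_nat_gt (a1 + a2 + a3 + 2 * D1 K)
  refine ⟨A, fun u v hu hv => ?_⟩
  obtain ⟨f, hf, hf0, hfl⟩ := c.geoS o ((u * (P * g ^ I * Q) * v) • o)
  obtain ⟨τ, hτ, hd⟩ := c.track (N := 0) (by simpa using hI) hu hv hf hf0 hfl (n := C) le_rfl (by omega)
  have hK := c.hK
  have hD10 : 0 ≤ D1 K := by
    have : 0 < K := by linarith
    unfold D1; positivity
  have p1 : 0 ≤ a1 := dist_nonneg
  have p2 : 0 ≤ a2 := dist_nonneg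
  have p3 : 0 ≤ a3 := dist_nonneg
  have up1 := c.nmo_mul (u * (P * g ^ I * Q)) v
  have up2 : nmo o (u * (P * g ^ I * Q)) ≤ nmo o u + a1 := c.nmo_mul u (P * g ^ I * Q)
  have e1 : dist (f 0) (f τ) = τ := by
    rw [hf.2 0 ⟨le_rfl, hf.1⟩ τ hτ, zero_sub, abs_neg, abs_of_nonneg hτ.1]
  have e2 : dist (f τ) (f (dist o ((u * (P * g ^ I * Q) * v) • o))) =
      dist o ((u * (P * g ^ I * Q) * v) • o) - τ := by
    rw [hf.2 τ hτ _ ⟨hf.1, le_rfl⟩, abs_of_nonpos (by linarith [hτ.2])]; ring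
  rw [hf0] at e1
  rw [hfl] at e2
  have q1 := dist_triangle o (f τ) ((u * P * g ^ C) • o)
  have q2 := dist_triangle_left ((u * P * g ^ C) • o) ((u * (P * g ^ I * Q) * v) • o) (f τ)
  have q3 : nmo o u ≤ nmo o (u * P * g ^ C) + a2 := by
    have := c.nmo_mul (u * P * g ^ C) (P * g ^ C)⁻¹
    have e : nmo o (P * g ^ C)⁻¹ = a2 := by
      have := c.nmo_inv (P * g ^ C) 1
      rw [one_smul, mul_one] at this
      rw [← this, dist_comm]; rfl
    rw [e] at this
    convert this using 2; group
  have q4 : nmo o v ≤ a3 + dist ((u * P * g ^ C) • o) ((u * (P * g ^ I * Q) * v) • o) := by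
    rw [c.nmo_inv]
    have := c.nmo_mul ((P * g ^ C)⁻¹ * (P * g ^ I * Q))⁻¹ ((u * P * g ^ C)⁻¹ * (u * (P * g ^ I * Q) * v))
    have e : nmo o ((P * g ^ C)⁻¹ * (P * g ^ I * Q))⁻¹ = a3 := by
      have := c.nmo_inv ((P * g ^ C)⁻¹ * (P * g ^ I * Q)) 1
      rw [one_smul, mul_one] at this
      rw [← this, dist_comm]; rfl
    rw [e] at this
    convert this using 2; group
  rw [abs_le]
  unfold nmo at *
  constructor <;> linarith

lemma Ctx.datA' (c : Ctx o g K) {C I N : ℕ} (hI : 2 * C + 2 * K ^ 2 + N < I)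
    (hN : {h : G | dist o (h • o) ≤ 2 * D1 K + 1 ∧
      dist ((g ^ N) • o) ((h * g ^ N) • o) ≤ 2 * D1 K + 1}.Finite) (P Q : G) :
    ∃ A : ℕ, ∀ w (D : ℝ), cnt {u | ∃ v, u * (P * g ^ I * Q) * v = w ∧
      Nr o g C ((u * P)⁻¹ • o) ∧ Nr o g C ((Q * v) • o) ∧ D ≤ nmo o u ∧ nmo o u ≤ D + 1} ≤ A := by
  set Y := {h : G | dist o (h • o) ≤ 2 * D1 K + 1 ∧
      dist ((g ^ N) • o) ((h * g ^ N) • o) ≤ 2 * D1 K + 1}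
  obtain ⟨B, hB⟩ := exists_nat_gt (D1 K + nmo o (P * g ^ C) + nmo o (P * g ^ (C + N)) + 2)
  let ι := (Finset.Icc (-(B:ℤ)) B) × (Finset.Icc (-(B:ℤ)) B)
  refine ⟨Fintype.card ι * Y.ncard, fun w D => ?_⟩
  set U := {u | ∃ v, u * (P * g ^ I * Q) * v = w ∧
      Nr o g C ((u * P)⁻¹ • o) ∧ Nr o g C ((Q * v) • o) ∧ D ≤ nmo o u ∧ nmo o u ≤ D + 1}
  obtain ⟨f, hf, hf0, hfl⟩ := c.geoS o (w • o)
  set Lw := dist o (w • o)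
  have hpt : ∀ u ∈ U, ∀ n, C ≤ n → n ≤ C + N → (n = C ∨ n = C + N) → ∃ τ ∈ Set.Icc 0 Lw,
      dist (f τ) ((u * P * g ^ n) • o) ≤ D1 K ∧ ⌊τ - D⌋ ∈ Finset.Icc (-(B:ℤ)) B := by
    rintro u ⟨v, hw, hu, hv, hD1, hD2⟩ n hn1 hn2 hn3
    obtain ⟨τ, hτ, hd⟩ := c.track hI hu hv hf hf0 (by rw [hfl, hw]) hn1 hn2
    refine ⟨τ, hτ, hd, ?_⟩
    have e1 : dist (f 0) (f τ) = τ := by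
      rw [hf.2 0 ⟨le_rfl, hf.1⟩ τ hτ, zero_sub, abs_neg, abs_of_nonneg hτ.1]
    rw [hf0] at e1
    have hn : nmo o (P * g ^ n) ≤ nmo o (P * g ^ C) + nmo o (P * g ^ (C + N)) := by
      have p1 : 0 ≤ nmo o (P * g ^ C) := dist_nonneg
      have p2 : 0 ≤ nmo o (P * g ^ (C + N)) := dist_nonneg
      rcases hn3 with rfl | rfl <;> linarith
    have q1 := dist_triangle o (u • o) ((u * P * g ^ n) • o)
    have q2 := dist_triangle_right o ((u * P * g ^ n) • o) (f τ)
    have q3 := dist_triangle_right o (f τ) ((u * P * g ^ n) • o)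
    have q4 := dist_triangle_right o (u • o) ((u * P * g ^ n) • o)
    have e2 : dist (u • o) ((u * P * g ^ n) • o) = nmo o (P * g ^ n) := by
      rw [c.nmo_inv]; congr 1; group
    rw [dist_comm ((u * P * g ^ n) • o)] at q2
    unfold nmo at *
    rw [Finset.mem_Icc]
    constructor
    · rw [Int.le_floor]; push_cast; linarith
    · have : (⌊τ - D⌋ : ℝ) ≤ B := (Int.floor_le _).trans (by linarith)
      exact_mod_cast this
  let BB : ι → Set G := fun b => {u | u ∈ U ∧ ∃ τ1 ∈ Set.Icc 0 Lw, ∃ τ2 ∈ Set.Icc 0 Lw,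
    dist (f τ1) ((u * P * g ^ C) • o) ≤ D1 K ∧ dist (f τ2) ((u * P * g ^ (C + N)) • o) ≤ D1 K ∧
    ⌊τ1 - D⌋ = b.1 ∧ ⌊τ2 - D⌋ = b.2}
  have hsub : U ⊆ ⋃ b, BB b := by
    intro u hu
    obtain ⟨τ1, h1, h1d, h1f⟩ := hpt u hu C le_rfl (by omega) (Or.inl rfl)
    obtain ⟨τ2, h2, h2d, h2f⟩ := hpt u hu (C + N) (by omega) le_rfl (Or.inr rfl)
    exact Set.mem_iUnion.2 ⟨⟨⟨_, h1f⟩, ⟨_, h2f⟩⟩, hu, τ1, h1, τ2, h2, h1d, h2d, rfl, rfl⟩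
  refine (cnt_mono hsub).trans ?_
  push_cast
  refine cnt_iUnion BB fun b => ?_
  rcases Set.eq_empty_or_nonempty (BB b) with h0 | ⟨u0, hu0⟩
  · rw [h0]; simp [cnt]
  obtain ⟨-, τ1, h1, τ2, h2, h1d, h2d, h1f, h2f⟩ := hu0
  refine cnt_inj hN (fun u => (u0 * P * g ^ C)⁻¹ * (u * P * g ^ C)) ?_ ?_
  · rintro u ⟨-, τ1', h1', τ2', h2', h1d', h2d', h1f', h2f'⟩
    have near : ∀ s t : ℝ, s ∈ Set.Icc 0 Lw → t ∈ Set.Icc 0 Lw → ⌊s - D⌋ = ⌊t - D⌋ →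
        dist (f s) (f t) ≤ 1 := by
      intro s t hs ht hst
      rw [hf.2 s hs t ht]
      have := Int.abs_sub_lt_one_of_floor_eq_floor hst
      rw [show s - D - (t - D) = s - t by ring] at this
      exact this.le
    have n1 := near τ1 τ1' h1 h1' (h1f.trans h1f'.symm)
    have n2 := near τ2 τ2' h2 h2' (h2f.trans h2f'.symm)
    constructor
    · rw [mul_smul, dist_comm, c.dinv]
      have q1 := dist_triangle ((u * P * g ^ C) • o) (f τ1') ((u0 * P * g ^ C) • o)
      have q2 := dist_triangle (f τ1') (f τ1) ((u0 * P * g ^ C) • o)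
      rw [dist_comm _ (f τ1')] at q1
      rw [dist_comm (f τ1') (f τ1)] at q2
      linarith
    · rw [mul_assoc, mul_smul, dist_comm, c.dinv, ← mul_smul]
      have e : ∀ x : G, x * P * g ^ (C + N) = x * P * g ^ C * g ^ N := by
        intro x; rw [pow_add]; group
      rw [e] at h2d h2d'
      have q1 := dist_triangle ((u * P * g ^ C * g ^ N) • o) (f τ2') ((u0 * P * g ^ C * g ^ N) • o)
      have q2 := dist_triangle (f τ2') (f τ2) ((u0 * P * g ^ C * g ^ N) • o)
      rw [dist_comm _ (f τ2')] at q1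
      rw [dist_comm (f τ2') (f τ2)] at q2
      linarith
  · intro x _ y _ hxy
    simpa using hxy

end geo2
end EC

open scoped ENNReal
namespace EC
section lists
variable {α : Type*}

/-- law of `n` independent samples -/
noncomputable def lst (p : α → ℝ≥0∞) : ℕ → List α → ℝ≥0∞
  | 0, [] => 1
  | 0, _ :: _ => 0
  | _ + 1, [] => 0
  | n + 1, a :: s => p a * lst p n s

lemma tsum_lst_zero (p : α → ℝ≥0∞) (F : List α → ℝ≥0∞) : ∑' s, lst p 0 s * F s = F [] := by
  rw [tsum_eq_single []]
  · simp [lst]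
  · intro s hs
    cases s with
    | nil => exact absurd rfl hs
    | cons a s => simp [lst]

lemma tsum_lst_succ (p : α → ℝ≥0∞) (n : ℕ) (F : List α → ℝ≥0∞) :
    ∑' s, lst p (n+1) s * F s = ∑' a, p a * ∑' s, lst p n s * F (a :: s) := by
  have hi : Function.Injective (fun x : α × List α => x.1 :: x.2) := by
    rintro ⟨a, s⟩ ⟨b, t⟩ h
    simpa using h
  rw [← hi.tsum_eq (f := fun s => lst p (n+1) s * F s), ENNReal.tsum_prod']
  · refine tsum_congr fun a => ?_
    rw [← ENNReal.tsum_mul_left]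
    refine tsum_congr fun s => ?_
    simp [lst, mul_assoc]
  · intro s hs
    cases s with
    | nil => simp [lst] at hs
    | cons a s => exact ⟨(a, s), rfl⟩

lemma isP_lst {p : α → ℝ≥0∞} (hp : IsP p) (n : ℕ) : IsP (lst p n) := by
  unfold IsP
  induction n with
  | zero => simpa using tsum_lst_zero p (fun _ => 1)
  | succ n ih =>
    have := tsum_lst_succ p n (fun _ => 1)
    simp only [mul_one] at this
    rw [this, ih]; simp only [mul_one]; exact hp

lemma Ent_lst {p : α → ℝ≥0∞} (hp : IsP p) (n : ℕ) : Ent (lst p n) = n * Ent p := by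
  induction n with
  | zero => unfold Ent; rw [tsum_lst_zero]; simp [lst, sur_one]
  | succ n ih =>
    unfold Ent at *
    rw [tsum_lst_succ]
    have h1 : ∀ a, p a * ∑' s, lst p n s * sur (lst p (n+1) (a :: s)) =
        p a * sur (p a) + p a * ∑' s, lst p n s * sur (lst p n s) := by
      intro a
      rw [← mul_add]
      congr 1
      have : ∀ s, lst p n s * sur (lst p (n+1) (a :: s)) =
          lst p n s * sur (p a) + lst p n s * sur (lst p n s) := by
        intro s
        rw [← mul_add, ← sur_mul (hp.le_one a) ((isP_lst hp n).le_one s)]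
        rfl
      simp only [this]
      rw [ENNReal.tsum_add, ENNReal.tsum_mul_right, isP_lst hp n, one_mul]
    simp only [h1]
    rw [ENNReal.tsum_add, ENNReal.tsum_mul_right, ih, hp]
    push_cast; ring

lemma lst_map {G : Type*} [Group G] {p : α → ℝ≥0∞} {P : G → ℝ≥0∞} {f : α → G}
    (h : ∀ F : G → ℝ≥0∞, ∑' a, p a * F (f a) = ∑' y, P y * F y) (n : ℕ) (F : G → ℝ≥0∞) :
    ∑' s, lst p n s * F ((s.map f).prod) = ∑' y, cpow P n y * F y := by
  induction n generalizing F with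
  | zero => rw [tsum_lst_zero, tsum_cpow_zero]; simp
  | succ n ih =>
    rw [tsum_lst_succ]
    show _ = ∑' y, cnv P (cpow P n) y * F y
    rw [tsum_cnv, ← h]
    refine tsum_congr fun a => ?_
    congr 1
    rw [← ih]
    simp

lemma tendsto_lst {p : ℕ → α → ℝ≥0∞} {q : α → ℝ≥0∞} (hq : IsP q)
    (h : ∀ x, Tendsto (fun i => p i x) atTop (𝓝 (q x))) (n : ℕ) (s : List α) :
    Tendsto (fun i => lst (p i) n s) atTop (𝓝 (lst q n s)) := by
  induction n generalizing s with
  | zero => cases s <;> exact tendsto_const_nhds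
  | succ n ih =>
    cases s with
    | nil => exact tendsto_const_nhds
    | cons a s =>
      refine ENNReal.Tendsto.mul (h a) (Or.inr ?_) (ih s) (Or.inr ?_)
      · exact ne_top_of_le_ne_top ENNReal.one_ne_top ((isP_lst hq n).le_one s)
      · exact ne_top_of_le_ne_top ENNReal.one_ne_top (hq.le_one a)

lemma lst_append (p : α → ℝ≥0∞) (x y : List α) (m n : ℕ) (hx : x.length = m) :
    lst p (m + n) (x ++ y) = lst p m x * lst p n y := by
  induction x generalizing m with
  | nil => subst hx; simp [lst]
  | cons a x ih =>
    obtain ⟨m, rfl⟩ : ∃ m', m = m' + 1 := ⟨x.length, by simpa using hx.symm⟩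
    rw [show m + 1 + n = (m + n) + 1 by ring]
    show p a * lst p (m+n) (x ++ y) = p a * lst p m x * lst p n y
    rw [ih m (by simpa using hx), mul_assoc]

lemma lst_repl (p : α → ℝ≥0∞) (t : α) (m : ℕ) : lst p m (List.replicate m t) = p t ^ m := by
  induction m with
  | zero => simp [lst]
  | succ m ih => rw [List.replicate_succ, pow_succ']; show p t * _ = _; rw [ih]

lemma repl_inj {t a : α} (hne : a ≠ t) {l l' : ℕ} {x y : List α}
    (h : List.replicate l t ++ a :: x = List.replicate l' t ++ a :: y) : l = l' ∧ x = y := by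
  induction l generalizing l' with
  | zero =>
    cases l' with
    | zero => simpa using h
    | succ l' => simp [List.replicate_succ] at h; exact absurd h.1 hne
  | succ l ih =>
    cases l' with
    | zero => simp [List.replicate_succ] at h; exact absurd h.1.symm hne
    | succ l' =>
      simp only [List.replicate_succ, List.cons_append, List.cons.injEq, true_and] at h
      have := ih h
      exact ⟨by omega, this.2⟩

/-- success words -/
def Wd (t a : α) (J M l l' : ℕ) : List α :=
  List.replicate l t ++ a :: (List.replicate (J - l + M + l') t ++ a :: List.replicate (J - l') t)

lemma Wd_inj {t a : α} (hne : a ≠ t) {J M l l' k k' : ℕ} (h : Wd t a J M l l' = Wd t a J M k k') :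
    l = k ∧ l' = k' := by
  obtain ⟨h1, h2⟩ := repl_inj hne h
  obtain ⟨h3, -⟩ := repl_inj hne h2
  omega

lemma lst_Wd (p : α → ℝ≥0∞) {t a : α} {J M l l' : ℕ} (hl : l ≤ J) (hl' : l' ≤ J) :
    lst p (2 * (J + 1) + M) (Wd t a J M l l') = p t ^ (2 * J + M) * p a ^ 2 := by
  have e : 2 * (J + 1) + M = l + (((J - l + M + l') + ((J - l') + 1)) + 1) := by omega
  have e2 : 2 * J + M = l + ((J - l + M + l') + (J - l')) := by omega
  rw [e, e2, Wd, lst_append _ _ _ _ _ (by simp)]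
  show _ * (p a * lst p _ _) = _
  rw [lst_append _ _ _ _ _ (by simp)]
  show _ * (p a * (_ * (p a * lst p _ _))) = _
  rw [lst_repl, lst_repl, lst_repl]
  ring

lemma prod_Wd {G : Type*} [Group G] (t a : G) {J M l l' : ℕ} :
    (Wd t a J M l l').prod = bw t a J l * t ^ M * bw t a J l' := by
  simp only [Wd, List.prod_append, List.prod_cons, List.prod_replicate, bw, pow_add]
  group

end lists
end EC

open scoped ENNReal
namespace EC
section prob

open Classical in
/-- indicator of a proposition -/
noncomputable def ind (P : Prop) : ℝ≥0∞ := if P then 1 else 0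

lemma ind_le_one (P : Prop) : ind P ≤ 1 := by unfold ind; split_ifs <;> simp
lemma ind_true {P : Prop} (h : P) : ind P = 1 := by simp [ind, h]
lemma ind_false {P : Prop} (h : ¬ P) : ind P = 0 := by simp [ind, h]
lemma ind_mono {P Q : Prop} (h : P → Q) : ind P ≤ ind Q := by
  by_cases hp : P
  · rw [ind_true hp, ind_true (h hp)]
  · rw [ind_false hp]; simp
lemma ind_or (P Q : Prop) : ind (P ∨ Q) ≤ ind P + ind Q := by
  by_cases hp : P
  · rw [ind_true hp]; exact (ind_le_one _).trans le_self_add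
  · by_cases hq : Q
    · rw [ind_true hq]; exact (ind_le_one _).trans le_add_self
    · rw [ind_false (by tauto)]; simp
lemma ind_and (P Q : Prop) : ind (P ∧ Q) = ind P * ind Q := by
  by_cases hp : P <;> by_cases hq : Q <;> simp [ind, hp, hq]

lemma prob_abs {α T : Type*} {p : α → ℝ≥0∞} (hp : IsP p) {Sc : Set α} {δ η : ℝ≥0∞}
    (N : List α → T → Prop) (bad : α → List α → T → Prop) (nx : T → α → T)
    (hN : ∀ x s u, N (x :: s) u → bad x s u ∨ (x ∉ Sc ∧ N s (nx u x)))
    (hb : ∀ s u, ∑' x, p x * ind (bad x s u) ≤ δ)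
    (hη : δ + (∑' x, p x * ind (x ∉ Sc)) * η ≤ η) (q : ℕ) (u : T) :
    ∑' s, lst p q s * ind (N s u) ≤ η + (∑' x, p x * ind (x ∉ Sc)) ^ q := by
  set β := ∑' x, p x * ind (x ∉ Sc)
  induction q generalizing u with
  | zero => rw [tsum_lst_zero, pow_zero]; exact (ind_le_one _).trans le_add_self
  | succ q ih =>
    rw [tsum_lst_succ]
    calc ∑' x, p x * ∑' s, lst p q s * ind (N (x :: s) u)
        ≤ ∑' x, (p x * ∑' s, lst p q s * ind (bad x s u) + p x * ind (x ∉ Sc) * (η + β ^ q)) := by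
          refine ENNReal.tsum_le_tsum fun x => ?_
          rw [mul_assoc, ← mul_add]
          gcongr
          calc ∑' s, lst p q s * ind (N (x :: s) u)
              ≤ ∑' s, (lst p q s * ind (bad x s u) + ind (x ∉ Sc) * (lst p q s * ind (N s (nx u x)))) := by
                refine ENNReal.tsum_le_tsum fun s => ?_
                calc lst p q s * ind (N (x :: s) u)
                    ≤ lst p q s * (ind (bad x s u) + ind (x ∉ Sc) * ind (N s (nx u x))) := by
                      gcongr
                      refine (ind_mono (hN x s u)).trans ?_
                      rw [← ind_and]; exact ind_or _ _
                  _ = _ := by ring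
            _ = ∑' s, lst p q s * ind (bad x s u) + ind (x ∉ Sc) * ∑' s, lst p q s * ind (N s (nx u x)) := by
                rw [ENNReal.tsum_add, ENNReal.tsum_mul_left]
            _ ≤ _ := by gcongr; exact ih _
      _ = ∑' s, lst p q s * ∑' x, p x * ind (bad x s u) + β * (η + β ^ q) := by
          rw [ENNReal.tsum_add, ENNReal.tsum_mul_right]
          congr 1
          simp only [← ENNReal.tsum_mul_left]
          rw [ENNReal.tsum_comm]
          refine tsum_congr fun s => tsum_congr fun x => ?_
          ring
      _ ≤ ∑' s, lst p q s * δ + β * (η + β ^ q) := by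
          gcongr with s
          exact hb s u
      _ = δ + β * η + β ^ (q + 1) := by
          rw [ENNReal.tsum_mul_right, isP_lst hp q]; ring
      _ ≤ _ := by gcongr

variable {G : Type*} [Group G]

/-- success set -/
def Sc (t a : G) (J M : ℕ) : Set (List G) := {x | ∃ l ≤ J, ∃ l' ≤ J, x = Wd t a J M l l'}

lemma Sc_bound {τ : G → ℝ≥0∞} (hτ : IsP τ) {t a : G} (hne : a ≠ t) (J M : ℕ) {κ : ℝ≥0∞}
    (hκ : κ = τ t ^ (2 * J + M) * τ a ^ 2) :
    ((J + 1 : ℕ) : ℝ≥0∞) * κ + (∑' x, lst τ (2 * (J + 1) + M) x * ind (x ∉ Sc t a J M)) *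
      ((J + 1 : ℕ) : ℝ≥0∞)⁻¹ ≤ ((J + 1 : ℕ) : ℝ≥0∞)⁻¹ := by
  classical
  set n := J + 1
  set p := lst τ (2 * n + M)
  set β := ∑' x, p x * ind (x ∉ Sc t a J M)
  set S := ∑' x, p x * ind (x ∈ Sc t a J M)
  have h1 : S + β = 1 := by
    rw [← ENNReal.tsum_add]
    rw [← show ∑' x, p x = 1 from isP_lst hτ _]
    refine tsum_congr fun x => ?_
    by_cases hx : x ∈ Sc t a J M
    · rw [ind_true hx, ind_false (by simpa using hx)]; simp
    · rw [ind_false hx, ind_true hx]; simp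
  have h2 : (n : ℝ≥0∞) * n * κ ≤ S := by
    let F : Finset (List G) := (Finset.range n ×ˢ Finset.range n).image fun l => Wd t a J M l.1 l.2
    have hS : ∑ x ∈ F, p x * ind (x ∈ Sc t a J M) ≤ S := ENNReal.sum_le_tsum F
    refine le_trans (le_of_eq ?_) hS
    rw [Finset.sum_image]
    · rw [Finset.sum_congr rfl (g := fun _ => κ)]
      · simp [mul_assoc]
      · rintro ⟨l, l'⟩ hl
        rw [Finset.mem_product, Finset.mem_range, Finset.mem_range] at hl
        have h1 : l ≤ J := Nat.lt_succ_iff.1 hl.1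
        have h2 : l' ≤ J := Nat.lt_succ_iff.1 hl.2
        rw [ind_true ⟨l, h1, l', h2, rfl⟩, mul_one, hκ]
        exact lst_Wd τ h1 h2
    · rintro ⟨l, l'⟩ - ⟨k, k'⟩ - h
      obtain ⟨h1, h2⟩ := Wd_inj hne h
      exact Prod.ext h1 h2
  have hn0 : (n : ℝ≥0∞) ≠ 0 := by simp [n]
  have h3 : (n : ℝ≥0∞) * κ ≤ S * (n : ℝ≥0∞)⁻¹ := by
    calc (n : ℝ≥0∞) * κ = (n * n * κ) * (n : ℝ≥0∞)⁻¹ := by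
          rw [mul_comm _ (n : ℝ≥0∞)⁻¹, mul_assoc, ← mul_assoc (n : ℝ≥0∞)⁻¹,
            ENNReal.inv_mul_cancel hn0 (by simp), one_mul]
      _ ≤ _ := by gcongr
  calc _ ≤ S * (n : ℝ≥0∞)⁻¹ + β * (n : ℝ≥0∞)⁻¹ := by gcongr
    _ = _ := by rw [← add_mul, h1, one_mul]

lemma bad_bound {τ : G → ℝ≥0∞} {t a : G} (J M : ℕ) {κ : ℝ≥0∞}
    (hκ : κ = τ t ^ (2 * J + M) * τ a ^ 2) (w : ℕ → List G) (hw : ∀ j ≤ J, ∃ l ≤ J, ∃ l' ≤ J,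
      w j = Wd t a J M l l') (B : Set (List G)) (hB : ∀ x ∈ B, ∃ j ≤ J, x = w j) :
    ∑' x, lst τ (2 * (J + 1) + M) x * ind (x ∈ B) ≤ ((J + 1 : ℕ) : ℝ≥0∞) * κ := by
  classical
  set p := lst τ (2 * (J + 1) + M)
  let F : Finset (List G) := (Finset.range (J+1)).image w
  calc ∑' x, p x * ind (x ∈ B) = ∑ x ∈ F, p x * ind (x ∈ B) := by
        refine tsum_eq_sum fun x hx => ?_
        rw [ind_false, mul_zero]
        intro hxB
        obtain ⟨j, hj, rfl⟩ := hB x hxB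
        exact hx (Finset.mem_image.2 ⟨j, Finset.mem_range.2 (by omega), rfl⟩)
    _ ≤ ∑ x ∈ F, κ := by
        refine Finset.sum_le_sum fun x hx => ?_
        obtain ⟨j, hj, rfl⟩ := Finset.mem_image.1 hx
        obtain ⟨l, hl, l', hl', e⟩ := hw j (by have := Finset.mem_range.1 hj; omega)
        refine (mul_le_of_le_one_right' (ind_le_one _)).trans ?_
        rw [e, hκ]; exact (lst_Wd τ hl hl').le
    _ ≤ _ := by
        rw [Finset.sum_const, nsmul_eq_mul]
        gcongr
        simpa using Finset.card_image_le (s := Finset.range (J+1)) (f := w)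

/-- value of a list of words -/
def vl (s : List (List G)) : G := (s.map List.prod).prod

def LOK (t a : G) (J M : ℕ) (BL : G → ℕ → Prop) : List (List G) → G → Prop
  | [], _ => False
  | x :: s, u => (∃ l ≤ J, ∃ l' ≤ J, x = Wd t a J M l l' ∧ ¬ BL u l) ∨
      (x ∉ Sc t a J M ∧ LOK t a J M BL s (u * x.prod))

def ROK (t a : G) (J M : ℕ) (BR : G → ℕ → Prop) : List (List G) → G → Prop
  | [], _ => False
  | x :: s, v => (∃ l ≤ J, ∃ l' ≤ J, x = Wd t a J M l l' ∧ ¬ BR (vl s * v) l') ∨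
      (x ∉ Sc t a J M ∧ ROK t a J M BR s v)

variable {t a : G} {J M : ℕ} {BL BR : G → ℕ → Prop}

lemma LOK_prob {τ : G → ℝ≥0∞} (hτ : IsP τ) (hne : a ≠ t)
    (hBL : ∀ u, ∀ l ≤ J, ∀ l' ≤ J, BL u l → BL u l' → l = l') (q : ℕ) (u : G) :
    ∑' s, lst (lst τ (2 * (J + 1) + M)) q s * ind (¬ LOK t a J M BL s u) ≤
      ((J + 1 : ℕ) : ℝ≥0∞)⁻¹ + (∑' x, lst τ (2 * (J + 1) + M) x * ind (x ∉ Sc t a J M)) ^ q := by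
  refine prob_abs (isP_lst hτ _) (fun s u => ¬ LOK t a J M BL s u)
    (fun x _ u => ∃ l ≤ J, ∃ l' ≤ J, x = Wd t a J M l l' ∧ BL u l) (fun u x => u * x.prod)
    ?_ ?_ (Sc_bound hτ hne J M rfl) q u
  · intro x s u h
    rw [LOK] at h
    push Not at h
    by_cases hx : x ∈ Sc t a J M
    · obtain ⟨l, hl, l', hl', e⟩ := id hx
      exact Or.inl ⟨l, hl, l', hl', e, h.1 l hl l' hl' e⟩
    · exact Or.inr ⟨hx, h.2 hx⟩
  · intro s u
    by_cases hb : ∃ l0 ≤ J, BL u l0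
    · obtain ⟨l0, hl0, hb⟩ := hb
      refine bad_bound J M rfl (fun j => Wd t a J M l0 j) (fun j hj => ⟨l0, hl0, j, hj, rfl⟩)
        {x | ∃ l ≤ J, ∃ l' ≤ J, x = Wd t a J M l l' ∧ BL u l} ?_
      rintro x ⟨l, hl, l', hl', e, hbl⟩
      obtain rfl := hBL u l hl l0 hl0 hbl hb
      exact ⟨l', hl', e⟩
    · have : ∀ x, ¬ ∃ l ≤ J, ∃ l' ≤ J, x = Wd t a J M l l' ∧ BL u l := by
        rintro x ⟨l, hl, l', hl', e, hbl⟩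
        exact hb ⟨l, hl, hbl⟩
      simp [ind_false (this _)]

lemma ROK_prob {τ : G → ℝ≥0∞} (hτ : IsP τ) (hne : a ≠ t)
    (hBR : ∀ u, ∀ l ≤ J, ∀ l' ≤ J, BR u l → BR u l' → l = l') (q : ℕ) (u : G) :
    ∑' s, lst (lst τ (2 * (J + 1) + M)) q s * ind (¬ ROK t a J M BR s u) ≤
      ((J + 1 : ℕ) : ℝ≥0∞)⁻¹ + (∑' x, lst τ (2 * (J + 1) + M) x * ind (x ∉ Sc t a J M)) ^ q := by
  refine prob_abs (isP_lst hτ _) (fun s u => ¬ ROK t a J M BR s u)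
    (fun x s u => ∃ l ≤ J, ∃ l' ≤ J, x = Wd t a J M l l' ∧ BR (vl s * u) l') (fun u x => u)
    ?_ ?_ (Sc_bound hτ hne J M rfl) q u
  · intro x s u h
    rw [ROK] at h
    push Not at h
    by_cases hx : x ∈ Sc t a J M
    · obtain ⟨l, hl, l', hl', e⟩ := id hx
      exact Or.inl ⟨l, hl, l', hl', e, h.1 l hl l' hl' e⟩
    · exact Or.inr ⟨hx, h.2 hx⟩
  · intro s u
    by_cases hb : ∃ l0 ≤ J, BR (vl s * u) l0
    · obtain ⟨l0, hl0, hb⟩ := hb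
      refine bad_bound J M rfl (fun j => Wd t a J M j l0) (fun j hj => ⟨j, hj, l0, hl0, rfl⟩)
        {x | ∃ l ≤ J, ∃ l' ≤ J, x = Wd t a J M l l' ∧ BR (vl s * u) l'} ?_
      rintro x ⟨l, hl, l', hl', e, hbl⟩
      obtain rfl := hBR _ l' hl' l0 hl0 hbl hb
      exact ⟨l, hl, e⟩
    · have : ∀ x, ¬ ∃ l ≤ J, ∃ l' ≤ J, x = Wd t a J M l l' ∧ BR (vl s * u) l' := by
        rintro x ⟨l, hl, l', hl', e, hbl⟩
        exact hb ⟨l', hl', hbl⟩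
      simp [ind_false (this _)]

lemma OK_extract (hne : a ≠ t) (s : List (List G)) :
    (∀ u v, ¬ (LOK t a J M BL s u ∧ ROK t a J M BR s v)) ∨
    ∃ A D : G, ∃ l ≤ J, ∃ l' ≤ J, vl s = (A * bw t a J l) * t ^ M * (bw t a J l' * D) ∧
      ∀ u v, LOK t a J M BL s u → ROK t a J M BR s v → ¬ BL (u * A) l ∧ ¬ BR (D * v) l' := by
  induction s with
  | nil => left; rintro u v ⟨h, -⟩; exact h
  | cons x s ih =>
    have hvl : vl (x :: s) = x.prod * vl s := by simp [vl]
    by_cases hx : x ∈ Sc t a J M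
    · right
      obtain ⟨l, hl, l', hl', e⟩ := id hx
      refine ⟨1, vl s, l, hl, l', hl', ?_, ?_⟩
      · rw [hvl, e, prod_Wd]; group
      · intro u v hL hR
        rw [LOK] at hL
        rw [ROK] at hR
        rcases hL with ⟨k, hk, k', hk', e1, hb1⟩ | h
        · rcases hR with ⟨m, hm, m', hm', e2, hb2⟩ | h
          · obtain ⟨rfl, -⟩ := Wd_inj hne (e.symm.trans e1)
            obtain ⟨-, rfl⟩ := Wd_inj hne (e.symm.trans e2)
            rw [mul_one]
            exact ⟨hb1, hb2⟩
          · exact absurd hx h.1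
        · exact absurd hx h.1
    · have hL : ∀ u, LOK t a J M BL (x :: s) u → LOK t a J M BL s (u * x.prod) := by
        intro u h
        rw [LOK] at h
        rcases h with ⟨k, hk, k', hk', e1, hb1⟩ | h
        · exact absurd ⟨k, hk, k', hk', e1⟩ hx
        · exact h.2
      have hR : ∀ u, ROK t a J M BR (x :: s) u → ROK t a J M BR s u := by
        intro u h
        rw [ROK] at h
        rcases h with ⟨k, hk, k', hk', e1, hb1⟩ | h
        · exact absurd ⟨k, hk, k', hk', e1⟩ hx
        · exact h.2
      rcases ih with h | ⟨A, D, l, hl, l', hl', hv, hb⟩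
      · left
        rintro u v ⟨h1, h2⟩
        exact h _ _ ⟨hL u h1, hR v h2⟩
      · right
        refine ⟨x.prod * A, D, l, hl, l', hl', ?_, ?_⟩
        · rw [hvl, hv]; group
        · intro u v h1 h2
          have := hb _ _ (hL u h1) (hR v h2)
          rwa [mul_assoc] at this

end prob
end EC

open scoped ENNReal
namespace EC
section datum
variable {G X : Type*} [Group G] [MetricSpace X] [MulAction G X] {o : X} {g : G} {K : ℝ}

lemma exists_tail {α : Type*} {p : α → ℝ≥0∞} (hp : IsP p) {ε : ℝ≥0∞} (hε : ε ≠ 0) :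
    ∃ Φ : Finset α, ∑' s, p s * ind (s ∉ Φ) ≤ ε := by
  have hne : ∑' x, p x ≠ ⊤ := by rw [show ∑' x, p x = 1 from hp]; simp
  have h := (ENNReal.tendsto_tsum_compl_atTop_zero hne).eventually
    (Iio_mem_nhds (pos_iff_ne_zero.2 hε))
  obtain ⟨Φ, h⟩ := h.exists
  refine ⟨Φ, le_trans (le_of_eq ?_) (le_of_lt h)⟩
  have e : ∑' b : {x // x ∉ Φ}, p b = ∑' x, ({x | x ∉ Φ} : Set α).indicator p x :=
    tsum_subtype ({x | x ∉ Φ} : Set α) p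
  rw [e]
  refine tsum_congr fun x => ?_
  by_cases hx : x ∈ Φ
  · rw [ind_false (by simpa using hx), Set.indicator_of_notMem (by simpa using hx), mul_zero]
  · rw [ind_true hx, Set.indicator_of_mem (show x ∈ {x | x ∉ Φ} from hx), mul_one]

theorem Ctx.datum (c : Ctx o g K) {τ : G → ℝ≥0∞} (hτ : IsP τ) {a : G} (ha : a ∉ El g)
    (hta : τ a ≠ 0) {m : ℕ} (hm : 0 < m) (htt : τ (g ^ m) ≠ 0) {δ : ℝ≥0∞} (hδ : δ ≠ 0) :
    ∃ (r q : ℕ) (L R : G → Set (List (List G))) (A A' : ℕ),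
      (∀ u, ∑' s, lst (lst τ r) q s * ind (s ∈ L u) ≤ δ) ∧
      (∀ u, ∑' s, lst (lst τ r) q s * ind (s ∈ R u) ≤ δ) ∧
      (∀ u v s, s ∉ L u → s ∉ R v → |nmo o (u * vl s * v) - nmo o u - nmo o v| ≤ A) ∧
      (∀ w s (D : ℝ), cnt {u | ∃ v, u * vl s * v = w ∧ s ∉ L u ∧ s ∉ R v ∧
        D ≤ nmo o u ∧ nmo o u ≤ D + 1} ≤ A') := by
  classical
  have h3 : δ / 3 ≠ 0 := by simp [hδ]
  obtain ⟨J, hJ⟩ := ENNReal.exists_inv_nat_lt h3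
  have hJ' : ((J + 1 : ℕ) : ℝ≥0∞)⁻¹ ≤ δ / 3 :=
    le_trans (ENNReal.inv_le_inv.2 (by exact_mod_cast Nat.le_succ J)) hJ.le
  obtain ⟨C, hC1, hC2⟩ := c.schottky ha hm J
  have hK := c.hK
  have hD1 : 0 ≤ 2 * D1 K + 1 := by unfold D1; positivity
  obtain ⟨N, -, hN⟩ := c.wpd _ hD1
  set M : ℕ := ⌈2 * (C:ℝ) + 2 * K ^ 2 + N⌉₊ + 1 with hM
  have hI : 2 * C + 2 * K ^ 2 + N < ((m * M : ℕ) : ℝ) := by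
    have h1 := Nat.le_ceil (2 * (C:ℝ) + 2 * K ^ 2 + N)
    have h2 : M ≤ m * M := Nat.le_mul_of_pos_left _ hm
    have h2' : (M:ℝ) ≤ ((m * M : ℕ) : ℝ) := by exact_mod_cast h2
    have h3 : (M:ℝ) = (⌈2 * (C:ℝ) + 2 * K ^ 2 + N⌉₊ : ℝ) + 1 := by rw [hM]; push_cast; rfl
    linarith
  have hI0 : 2 * C + 2 * K ^ 2 < ((m * M : ℕ) : ℝ) := by
    have : (0:ℝ) ≤ N := by positivity
    linarith
  have hne : a ≠ g ^ m := by
    rintro rfl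
    exact ha (by simpa using zpow_mem_El (g := g) (m : ℤ))
  set t := g ^ m with ht
  set β := ∑' x, lst τ (2 * (J + 1) + M) x * ind (x ∉ Sc t a J M) with hβ
  have hβ1 : β < 1 := by
    by_contra hcon
    push Not at hcon
    have hs := Sc_bound hτ hne J M rfl
    rw [← hβ] at hs
    have h1 : ((J + 1 : ℕ) : ℝ≥0∞) * (τ t ^ (2 * J + M) * τ a ^ 2) + ((J + 1 : ℕ) : ℝ≥0∞)⁻¹
        ≤ 0 + ((J + 1 : ℕ) : ℝ≥0∞)⁻¹ := by
      rw [zero_add]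
      refine le_trans ?_ hs
      gcongr
      exact le_mul_of_one_le_left' hcon
    have h2 := (ENNReal.add_le_add_iff_right (by simp)).1 h1
    simp [hta, htt] at h2
  obtain ⟨q, hq⟩ := ((ENNReal.tendsto_pow_atTop_nhds_zero_of_lt_one hβ1).eventually
    (Iio_mem_nhds (pos_iff_ne_zero.2 h3))).exists
  have hq : β ^ q ≤ δ / 3 := le_of_lt hq
  set σ := lst (lst τ (2 * (J + 1) + M)) q with hσ
  have hσP : IsP σ := isP_lst (isP_lst hτ _) _
  obtain ⟨Φ, hΦ⟩ := exists_tail hσP h3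
  let BL : G → ℕ → Prop := fun u l => ¬ Nr o g C ((u * bw t a J l)⁻¹ • o)
  let BR : G → ℕ → Prop := fun v l => ¬ Nr o g C ((bw t a J l * v) • o)
  have hBL : ∀ u, ∀ l ≤ J, ∀ l' ≤ J, BL u l → BL u l' → l = l' := by
    intro u l hl l' hl' h1 h2
    by_contra hll
    simp only [BL, Nr] at h1 h2
    push Not at h1 h2
    obtain ⟨i, hi, hi'⟩ := h1
    obtain ⟨j, hj, hj'⟩ := h2
    rw [mul_inv_rev, mul_smul] at hi hj
    rcases hC1 l hl l' hl' hll _ i j hi hj with h | h <;> omega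
  have hBR : ∀ u, ∀ l ≤ J, ∀ l' ≤ J, BR u l → BR u l' → l = l' := by
    intro u l hl l' hl' h1 h2
    by_contra hll
    simp only [BR, Nr] at h1 h2
    push Not at h1 h2
    obtain ⟨i, hi, hi'⟩ := h1
    obtain ⟨j, hj, hj'⟩ := h2
    rw [mul_smul] at hi hj
    rcases hC2 l hl l' hl' hll _ i j hi hj with h | h <;> omega
  have hex : ∀ s, ∃ A A' : ℕ, (∀ u v, LOK t a J M BL s u → ROK t a J M BR s v →
      |nmo o (u * vl s * v) - nmo o u - nmo o v| ≤ A) ∧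
      (∀ w (D : ℝ), cnt {u | ∃ v, u * vl s * v = w ∧ LOK t a J M BL s u ∧ ROK t a J M BR s v ∧
        D ≤ nmo o u ∧ nmo o u ≤ D + 1} ≤ A') := by
    intro s
    rcases OK_extract (M := M) (BL := BL) (BR := BR) hne s with h | ⟨P, Q, l, hl, l', hl', hv, hb⟩
    · refine ⟨0, 0, fun u v h1 h2 => absurd ⟨h1, h2⟩ (h u v), fun w D => ?_⟩
      have : {u | ∃ v, u * vl s * v = w ∧ LOK t a J M BL s u ∧ ROK t a J M BR s v ∧
        D ≤ nmo o u ∧ nmo o u ≤ D + 1} = ∅ := by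
        ext u
        simp only [Set.mem_ofPred_eq, Set.mem_empty_iff_false, iff_false]
        rintro ⟨v, -, h1, h2, -⟩
        exact h u v ⟨h1, h2⟩
      rw [this]; simp [cnt]
    · obtain ⟨A, hA⟩ := c.datA hI0 (P * bw t a J l) (bw t a J l' * Q)
      obtain ⟨A', hA'⟩ := c.datA' hI hN (P * bw t a J l) (bw t a J l' * Q)
      have e : vl s = (P * bw t a J l) * g ^ (m * M) * (bw t a J l' * Q) := by
        rw [hv, ht, ← pow_mul]
      have hb' : ∀ u v, LOK t a J M BL s u → ROK t a J M BR s v →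
          Nr o g C ((u * (P * bw t a J l))⁻¹ • o) ∧ Nr o g C ((bw t a J l' * Q * v) • o) := by
        intro u v h1 h2
        have := hb u v h1 h2
        simp only [BL, BR, not_not] at this
        rw [← mul_assoc, mul_assoc _ Q]
        exact this
      refine ⟨A, A', fun u v h1 h2 => ?_, fun w D => le_trans (cnt_mono ?_) (hA' w D)⟩
      · rw [e]; exact hA u v (hb' u v h1 h2).1 (hb' u v h1 h2).2
      · rintro u ⟨v, h0, h1, h2, h3⟩
        exact ⟨v, by rw [← e]; exact h0, (hb' u v h1 h2).1, (hb' u v h1 h2).2, h3⟩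
  choose fA fA' hfA hfA' using hex
  refine ⟨2 * (J + 1) + M, q, fun u => {s | s ∉ Φ ∨ ¬ LOK t a J M BL s u},
    fun v => {s | ¬ ROK t a J M BR s v}, ∑ s ∈ Φ, fA s, ∑ s ∈ Φ, fA' s, ?_, ?_, ?_, ?_⟩
  · intro u
    calc _ ≤ ∑' s, (σ s * ind (s ∉ Φ) + σ s * ind (¬ LOK t a J M BL s u)) := by
          refine ENNReal.tsum_le_tsum fun s => ?_
          rw [← mul_add]
          gcongr
          exact ind_or _ _
      _ ≤ δ / 3 + (δ / 3 + δ / 3) := by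
          rw [ENNReal.tsum_add]
          gcongr
          exact (LOK_prob hτ hne hBL q u).trans (by gcongr)
      _ = δ := by rw [← add_assoc, ENNReal.add_thirds]
  · intro u
    calc _ ≤ δ / 3 + δ / 3 := (ROK_prob hτ hne hBR q u).trans (by gcongr)
      _ ≤ δ / 3 + δ / 3 + δ / 3 := le_self_add
      _ = δ := by rw [ENNReal.add_thirds]
  · intro u v s h1 h2
    simp only [Set.mem_ofPred_eq, not_or, not_not] at h1 h2
    refine (hfA s u v h1.2 h2).trans ?_
    exact_mod_cast Finset.single_le_sum (f := fA) (fun _ _ => Nat.zero_le _) h1.1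
  · intro w s D
    by_cases hs : s ∈ Φ
    · refine le_trans (cnt_mono ?_) ((hfA' s w D).trans ?_)
      · rintro u ⟨v, h0, h1, h2, h3⟩
        simp only [Set.mem_ofPred_eq, not_or, not_not] at h1 h2
        exact ⟨v, h0, h1.2, h2, h3⟩
      · exact_mod_cast Finset.single_le_sum (f := fA') (fun _ _ => Nat.zero_le _) hs
    · have : {u | ∃ v, u * vl s * v = w ∧ s ∉ {s | s ∉ Φ ∨ ¬ LOK t a J M BL s u} ∧
          s ∉ {s | ¬ ROK t a J M BR s v} ∧ D ≤ nmo o u ∧ nmo o u ≤ D + 1} = ∅ := by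
        ext u
        simp only [Set.mem_ofPred_eq, Set.mem_empty_iff_false, iff_false]
        rintro ⟨v, -, h1, -⟩
        exact h1 (Or.inl hs)
      rw [this]; simp [cnt]

end datum
end EC

open scoped ENNReal
namespace EC
section caseA
variable {G X : Type*} [Group G] [MetricSpace X] [MulAction G X] {o : X} {g : G} {K : ℝ}

lemma exists_k (A Lc A' : ℕ) : ∃ k : ℕ, 0 < k ∧
    sur (((1 + 2 ^ k * ((2 * (k * (2 * A + Lc) + 2 * A) + 1) * A') : ℕ) : ℝ≥0∞)⁻¹) ≤ (k : ℝ≥0∞) * 2 := by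
  set c1 := 2 * (2 * A + Lc) * A' with hc1
  set c2 := (4 * A + 1) * A' with hc2
  set j := 2 * c1 + c2 + 1 with hj
  set k := 2 * j with hk
  refine ⟨k, by omega, ?_⟩
  set M := 1 + 2 ^ k * ((2 * (k * (2 * A + Lc) + 2 * A) + 1) * A') with hM
  have e : (2 * (k * (2 * A + Lc) + 2 * A) + 1) * A' = c1 * k + c2 := by rw [hc1, hc2]; ring
  have h1 : c1 * k + c2 + 1 ≤ 2 ^ k := by
    have h : j < 2 ^ j := Nat.lt_two_pow_self
    have : 2 ^ k = 2 ^ j * 2 ^ j := by rw [hk, two_mul, pow_add]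
    rw [this]
    calc c1 * k + c2 + 1 ≤ j * j := by rw [hk, hj]; nlinarith
      _ ≤ _ := Nat.mul_le_mul h.le h.le
  have h2 : M ≤ 4 ^ k := by
    have h4 : (4:ℕ) ^ k = 2 ^ k * 2 ^ k := by rw [← mul_pow]; norm_num
    have h0 : 1 ≤ 2 ^ k := Nat.one_le_two_pow
    rw [hM, e, h4]
    nlinarith
  rw [sur_inv_nat M (by omega)]
  have h3 : Real.log M ≤ k * 2 := by
    have h5 : (M:ℝ) ≤ 4 ^ k := by exact_mod_cast h2
    have h6 : Real.log M ≤ Real.log (4 ^ k) := Real.log_le_log (by positivity) h5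
    rw [Real.log_pow] at h6
    have h7 : Real.log 4 ≤ 2 := by
      rw [show (4:ℝ) = 2 ^ 2 by norm_num, Real.log_pow]
      have := Real.log_two_lt_d9
      push_cast; linarith
    refine h6.trans ?_
    gcongr
  refine (ENNReal.ofReal_le_ofReal h3).trans (le_of_eq ?_)
  rw [ENNReal.ofReal_mul (by positivity)]
  simp

theorem Ctx.caseA (c : Ctx o g K) {p : ℕ → G → ℝ≥0∞} {τ : G → ℝ≥0∞} (hp : ∀ i, IsP (p i))
    (hτ : IsP τ) (h : ∀ x, Tendsto (fun i => p i x) atTop (𝓝 (τ x)))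
    (hE : Tendsto (fun i => Ent (p i)) atTop (𝓝 (Ent τ))) (hfin : Ent τ ≠ ⊤)
    {a : G} (ha : a ∉ El g)
    (hta : τ a ≠ 0) {m : ℕ} (hm : 0 < m) (htt : τ (g ^ m) ≠ 0) {ε : ℝ≥0∞} (hε : ε ≠ 0) :
    ∃ n : ℕ, 0 < n ∧ ∀ᶠ i in atTop, ∀ ν, IsP ν →
      Ent (cpow (p i) n) + Ent ν ≤ Ent (cnv (cpow (p i) n) ν) + n * ε := by
  classical
  set H0 : ℝ≥0∞ := Ent τ + 1 with hH0
  have hH0t : H0 ≠ ⊤ := by simp [hH0, hfin]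
  have hH00 : H0 ≠ 0 := by simp [hH0]
  have hEH : ∀ᶠ i in atTop, Ent (p i) ≤ H0 :=
    hE.eventually (Iic_mem_nhds (ENNReal.lt_add_right hfin one_ne_zero))
  have h24 : 24 * H0 ≠ 0 := by simp [hH00]
  have h24t : 24 * H0 ≠ ⊤ := ENNReal.mul_ne_top (by simp) hH0t
  set θ : ℝ≥0∞ := min 4⁻¹ ((ε / 2) / (24 * H0)) with hθ
  have hε2 : ε / 2 ≠ 0 := by simp [hε]
  have hθ0 : θ ≠ 0 := by
    rw [hθ]
    refine (lt_min (by simp) ?_).ne'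
    exact ENNReal.div_pos hε2 h24t
  have hθ1 : 2 * θ ≤ 2⁻¹ := by
    calc 2 * θ ≤ 2 * 4⁻¹ := by gcongr; exact min_le_left _ _
      _ = 2⁻¹ := by
        rw [show (4:ℝ≥0∞) = 2 * 2 by norm_num, ENNReal.mul_inv (by simp) (by simp), ← mul_assoc,
          ENNReal.mul_inv_cancel (by simp) (by simp), one_mul]
  have hθ2 : 24 * θ * H0 ≤ ε / 2 := by
    calc 24 * θ * H0 ≤ (24 * H0) * ((ε / 2) / (24 * H0)) := by
          rw [mul_assoc, mul_comm θ, ← mul_assoc]; gcongr; exact min_le_right _ _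
      _ = ε / 2 := ENNReal.mul_div_cancel h24 h24t
  have hδ : θ ^ 2 / 2 ≠ 0 := by simp [hθ0]
  obtain ⟨r, q, L, R, A, A', hL, hR, hA, hA'⟩ := c.datum hτ ha hta hm htt hδ
  have hσP : ∀ i, IsP (lst (lst (p i) r) q) := fun i => isP_lst (isP_lst (hp i) _) _
  have hσ := tv hσP (isP_lst (isP_lst hτ _) _)
    (tendsto_lst (isP_lst hτ _) (tendsto_lst hτ h r) q) hδ
  set Cst : ℝ≥0∞ := 2 + q * (r * H0) + (sur 2⁻¹ + 1) with hCst
  have hCt : Cst ≠ ⊤ := by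
    rw [hCst]
    have : sur 2⁻¹ ≠ ⊤ := by
      have := sur_inv_nat 2 (by norm_num)
      rw [Nat.cast_ofNat] at this
      rw [this]; simp
    have h2 : (q : ℝ≥0∞) * (r * H0) ≠ ⊤ :=
      ENNReal.mul_ne_top (by simp) (ENNReal.mul_ne_top (by simp) hH0t)
    simp [this, h2]
  obtain ⟨n', hn'⟩ := ENNReal.exists_nat_mul_gt hε2 hCt
  have hn0 : 0 < n' := by
    rcases Nat.eq_zero_or_pos n' with h | h
    · simp [h] at hn'
    · exact h
  obtain ⟨F, hFf, hF⟩ := tail_small (isP_cpow hτ n') (tendsto_cpow hp hτ h n')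
    (tendsto_Ent_cpow hp hτ h hE hfin n') (Ent_cpow_ne_top hτ hfin n') one_ne_zero
  obtain ⟨B, hB⟩ := (hFf.image (nmo o)).bddAbove
  obtain ⟨k, hk, hkM⟩ := exists_k A ⌈B⌉₊ A'
  refine ⟨(n' + r * q) * k, by positivity, ?_⟩
  filter_upwards [hσ, hF, hEH] with i hσi hFi hEi ν hν
  have hlr : ∀ f : (List (List G)) → Prop, ∑' s, lst (lst τ r) q s * ind (f s) ≤ θ ^ 2 / 2 →
      ∑' s, lst (lst (p i) r) q s * (if f s then 1 else 0) ≤ θ ^ 2 := by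
    intro f hf
    have := hσi (fun s => ind (f s)) (fun s => ind_le_one _)
    calc _ = ∑' s, lst (lst (p i) r) q s * ind (f s) := by
          refine tsum_congr fun s => ?_
          unfold ind
          by_cases hfs : f s <;> simp [hfs]
      _ ≤ _ := this
      _ ≤ θ ^ 2 / 2 + θ ^ 2 / 2 := by gcongr
      _ = _ := ENNReal.add_halves _
  have hρ : ∀ f : G → ℝ≥0∞, ∑' y, cpow (p i) (n' + r * q) y * f y =
      ∑' z, cpow (p i) n' z * ∑' s, lst (lst (p i) r) q s * f (z * vl s) := by
    intro f
    rw [cpow_add, tsum_cnv]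
    refine tsum_congr fun z => ?_
    congr 1
    have h1 : ∀ F : G → ℝ≥0∞, ∑' s, lst (p i) r s * F s.prod = ∑' y, cpow (p i) r y * F y := by
      intro F
      have := lst_map (f := id) (p := p i) (P := p i) (fun F => rfl) r F
      simpa using this
    rw [← cpow_cpow]
    exact (lst_map h1 q (fun y => f (z * y))).symm
  have key := main_coding (isP_cpow (hp i) n') (hσP i) hν hρ hθ0 hθ1 (L := L) (R := R)
    (fun u => hlr (fun s => s ∈ L u) (hL u)) (fun u => hlr (fun s => s ∈ R u) (hR u)) hA
    (F := F) (Lc := ⌈B⌉₊)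
    (fun z hz => ⟨dist_nonneg, (hB (Set.mem_image_of_mem _ hz)).trans (Nat.le_ceil B)⟩) hA' hk
  rw [cpow_cpow] at key
  refine key.trans ?_
  gcongr
  have hEσ : Ent (lst (lst (p i) r) q) ≤ q * (r * H0) := by
    rw [Ent_lst (isP_lst (hp i) r), Ent_lst (hp i)]; gcongr
  have hEζ : 24 * θ * Ent (cpow (p i) n') ≤ n' * (ε / 2) := by
    calc _ ≤ 24 * θ * (n' * H0) := by
          gcongr; exact (Ent_cpow_le (hp i) n').trans (by gcongr)
      _ = n' * (24 * θ * H0) := by ring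
      _ ≤ _ := by gcongr
  calc _ ≤ (k:ℝ≥0∞) * 2 + k * (q * (r * H0)) + k * (sur 2⁻¹ + 1 + n' * (ε / 2)) := by
        gcongr
    _ = k * (Cst + n' * (ε / 2)) := by rw [hCst]; ring
    _ ≤ k * (n' * (ε / 2) + n' * (ε / 2)) := by gcongr
    _ = k * (n' * ε) := by rw [← mul_add, ENNReal.add_halves]
    _ ≤ ((n' + r * q) * k : ℕ) * ε := by
        push_cast
        rw [← mul_assoc, mul_comm (k:ℝ≥0∞)]
        gcongr
        exact le_self_add

end caseA
end EC

open scoped ENNReal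
namespace EC
section caseB
variable {G X : Type*} [Group G] [MetricSpace X] [MulAction G X] {o : X} {g : G} {K : ℝ}

/-- state of a word -/
def wst (rp : G → G) (ex : G → ℤ) : List G → G × ℤ
  | [] => (rp 1, ex 1)
  | z :: s => (rp (z * (wst rp ex s).1), ex (z * (wst rp ex s).1) + (wst rp ex s).2)

open Classical in
/-- revealed letter -/
noncomputable def rvl (F : Set G) (z : G) : Option G := if z ∈ F then none else some z

noncomputable def enc (rp : G → G) (ex : G → ℤ) (F : Set G) : List G → List (Option G × G)
  | [] => []
  | z :: s => (rvl F z, (wst rp ex (z :: s)).1) :: enc rp ex F s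

def dcd (rp : G → G) (ex : G → ℤ) : List (Option G × G) → G × ℤ
  | [] => (rp 1, ex 1)
  | (none, y) :: l => (y, (dcd rp ex l).2)
  | (some u, y) :: l => (y, ex (u * (dcd rp ex l).1) + (dcd rp ex l).2)

lemma dcd_enc_fst (rp : G → G) (ex : G → ℤ) (F : Set G) (s : List G) :
    (dcd rp ex (enc rp ex F s)).1 = (wst rp ex s).1 := by
  cases s with
  | nil => rfl
  | cons z s =>
    rw [enc]
    by_cases hz : z ∈ F <;> simp [rvl, hz, dcd]

lemma dcd_enc_snd {rp : G → G} {ex : G → ℤ} {F : Set G} {Y : Set G} {L : ℕ}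
    (hrp : ∀ h, rp h ∈ Y) (hL : ∀ u ∈ F, ∀ y ∈ Y, |ex (u * y)| ≤ L) (s : List G) :
    |(wst rp ex s).2 - (dcd rp ex (enc rp ex F s)).2| ≤ s.length * L := by
  induction s with
  | nil => simp [wst, enc, dcd]
  | cons z s ih =>
    have hy : (wst rp ex s).1 ∈ Y := by cases s <;> exact hrp _
    rw [enc, wst]
    by_cases hz : z ∈ F
    · simp only [rvl, hz, if_true, dcd]
      have := hL z hz _ hy
      rw [List.length_cons]
      push_cast
      rw [abs_le] at *
      constructor <;> nlinarith
    · simp only [rvl, hz, if_false, dcd, dcd_enc_fst]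
      rw [List.length_cons]
      push_cast
      rw [abs_le] at *
      constructor <;> nlinarith

lemma stt_prod {rp : G → G} {ex : G → ℤ} {E : Subgroup G}
    (hE : ∀ h ∈ E, rp h ∈ E ∧ h = rp h * g ^ ex h) (s : List G) (hs : ∀ z ∈ s, z ∈ E) :
    (wst rp ex s).1 ∈ E ∧ s.prod = (wst rp ex s).1 * g ^ (wst rp ex s).2 := by
  induction s with
  | nil =>
    have := hE 1 E.one_mem
    exact ⟨this.1, this.2⟩
  | cons z s ih =>
    obtain ⟨h1, h2⟩ := ih fun z hz => hs z (List.mem_cons_of_mem _ hz)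
    have h3 := hE (z * (wst rp ex s).1) (E.mul_mem (hs z List.mem_cons_self) h1)
    refine ⟨h3.1, ?_⟩
    rw [List.prod_cons, h2, wst, zpow_add, ← mul_assoc, ← mul_assoc, ← h3.2]

lemma lst_supp {α : Type*} {p : α → ℝ≥0∞} {n : ℕ} {s : List α} (h : lst p n s ≠ 0) :
    s.length = n ∧ ∀ z ∈ s, p z ≠ 0 := by
  induction n generalizing s with
  | zero => cases s with
    | nil => simp
    | cons => simp [lst] at h
  | succ n ih => cases s with
    | nil => simp [lst] at h
    | cons z s =>
      rw [lst] at h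
      have := ih (right_ne_zero_of_mul h)
      refine ⟨by simp [this.1], ?_⟩
      intro w hw
      rcases List.mem_cons.1 hw with rfl | hw
      · exact left_ne_zero_of_mul h
      · exact this.2 w hw

lemma cpow_supp {p : G → ℝ≥0∞} {E : Subgroup G} (hp : ∀ z, p z ≠ 0 → z ∈ E) (n : ℕ) (w : G)
    (hw : cpow p n w ≠ 0) : w ∈ E := by
  induction n generalizing w with
  | zero =>
    by_contra h
    apply hw
    rw [cpow, Set.indicator_of_notMem]
    rintro rfl
    exact h E.one_mem
  | succ n ih =>
    by_contra h
    apply hw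
    rw [cpow, cnv, ENNReal.tsum_eq_zero]
    intro x
    by_contra hx
    have h1 := hp x (left_ne_zero_of_mul hx)
    have h2 := ih _ (right_ne_zero_of_mul hx)
    have := E.mul_mem h1 h2
    rw [mul_inv_cancel_left] at this
    exact h this

/-- letter law -/
noncomputable def lam (ζ : G → ℝ≥0∞) (Y : Finset G) : Option G × G → ℝ≥0∞ :=
  fun x => wt ζ x.1 * ((Y.card : ℝ≥0∞)⁻¹ * ind (x.2 ∈ Y))

lemma isP_lam {ζ : G → ℝ≥0∞} (hζ : IsP ζ) {Y : Finset G} (hY : Y.Nonempty) : IsP (lam ζ Y) := by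
  unfold IsP lam
  rw [ENNReal.tsum_prod']
  simp only [ENNReal.tsum_mul_left]
  have : ∑' y, ind (y ∈ Y) = (Y.card : ℝ≥0∞) := by
    rw [tsum_eq_sum (s := Y) fun y hy => ind_false hy, Finset.sum_congr rfl fun y hy => ind_true hy]
    simp
  rw [this, ENNReal.inv_mul_cancel (by simpa using hY.ne_empty) (by simp)]
  simp only [mul_one]; exact isP_wt hζ

lemma coding_B {ζ : G → ℝ≥0∞} (hζ : IsP ζ) {E : Subgroup G} (hsupp : ∀ z, ζ z ≠ 0 → z ∈ E)
    {rp : G → G} {ex : G → ℤ} {F : Set G} {Y : Finset G} {L : ℕ} (hrp : ∀ h, rp h ∈ Y)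
    (hE : ∀ h ∈ E, rp h ∈ E ∧ h = rp h * g ^ ex h)
    (hL : ∀ u ∈ F, ∀ y ∈ Y, |ex (u * y)| ≤ L) (k : ℕ) :
    Ent (cpow ζ k) ≤ sur (((2 * (k * L) + 1 : ℕ) : ℝ≥0∞)⁻¹) +
      k * (sur (Y.card : ℝ≥0∞)⁻¹ + (sur 2⁻¹ + ∑' z, ζ z * (Fᶜ.indicator (fun z => sur (ζ z)) z))) := by
  classical
  have hYne : Y.Nonempty := ⟨_, hrp 1⟩
  have hlP := isP_lam hζ hYne
  set M : ℕ := 2 * (k * L) + 1 with hM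
  set J : Finset ℤ := Finset.Icc (-((k * L : ℕ) : ℤ)) ((k * L : ℕ) : ℤ) with hJ
  have hJc : J.card = M := by rw [hJ, Int.card_Icc]; omega
  let q : G → ℝ≥0∞ := fun w => (M : ℝ≥0∞)⁻¹ * ∑' l, lst (lam ζ Y) k l *
    ∑ j ∈ J, ind ((dcd rp ex l).1 * g ^ ((dcd rp ex l).2 + j) = w)
  have hM0 : (M : ℝ≥0∞) ≠ 0 := by simp [hM]
  have hq : ∑' w, q w ≤ 1 := by
    simp only [q, ENNReal.tsum_mul_left]
    rw [ENNReal.tsum_comm]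
    simp only [ENNReal.tsum_mul_left]
    have : ∀ l, ∑' w, ∑ j ∈ J, ind ((dcd rp ex l).1 * g ^ ((dcd rp ex l).2 + j) = w) = (M : ℝ≥0∞) := by
      intro l
      rw [Summable.tsum_finsetSum fun _ _ => ENNReal.summable]
      have h1 : ∀ x : G, ∑' w, ind (x = w) = 1 := by
        intro x
        rw [tsum_eq_single x fun y hy => ind_false (Ne.symm hy), ind_true rfl]
      simp [h1, hJc]
    simp only [this]
    rw [ENNReal.tsum_mul_right, show ∑' l, lst (lam ζ Y) k l = 1 from isP_lst hlP k, one_mul,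
      ENNReal.inv_mul_cancel hM0 (by simp)]
  refine (gibbs (isP_cpow hζ k) hq).trans ?_
  have hm := lst_map (f := id) (p := ζ) (P := ζ) (fun F => rfl) k (fun y => sur (q y))
  rw [← hm]
  simp only [List.map_id]
  have hMi : (M : ℝ≥0∞)⁻¹ ≤ 1 := by
    rw [ENNReal.inv_le_one, hM]; push_cast; exact le_add_self
  have hpt : ∀ s, lst ζ k s * sur (q s.prod) ≤
      lst ζ k s * (sur (M : ℝ≥0∞)⁻¹ + sur (lst (lam ζ Y) k (enc rp ex F s))) := by
    intro s
    by_cases h0 : lst ζ k s = 0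
    · simp [h0]
    gcongr
    obtain ⟨hlen, hs⟩ := lst_supp h0
    rw [← sur_mul hMi ((isP_lst hlP k).le_one _)]
    apply sur_anti
    simp only [q]
    gcongr
    refine le_trans ?_ (ENNReal.le_tsum (enc rp ex F s))
    refine le_mul_of_one_le_right' ?_
    set j := (wst rp ex s).2 - (dcd rp ex (enc rp ex F s)).2 with hj
    have hjJ : j ∈ J := by
      have := dcd_enc_snd (Y := (Y : Set G)) (fun h => hrp h) hL s
      rw [← hj, hlen, abs_le] at this
      rw [hJ, Finset.mem_Icc]
      push_cast
      exact this
    refine le_trans (le_of_eq ?_) (Finset.single_le_sum (fun _ _ => zero_le) hjJ)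
    rw [ind_true]
    rw [hj, dcd_enc_fst, add_sub_cancel]
    exact (stt_prod hE s fun z hz => hsupp z (hs z hz)).2.symm
  have hind : ∀ k, ∑' s, lst ζ k s * sur (lst (lam ζ Y) k (enc rp ex F s)) ≤
      k * (sur (Y.card : ℝ≥0∞)⁻¹ + (sur 2⁻¹ + ∑' z, ζ z * (Fᶜ.indicator (fun z => sur (ζ z)) z))) := by
    intro k
    induction k with
    | zero => rw [tsum_lst_zero]; simp [enc, lst, sur_one]
    | succ k ih =>
      rw [tsum_lst_succ]
      have h2 : (2:ℝ≥0∞)⁻¹ ≤ 1 := by simp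
      have hYi : (Y.card : ℝ≥0∞)⁻¹ ≤ 1 := by
        rw [ENNReal.inv_le_one]; exact_mod_cast hYne.card_pos
      have h1 : ∀ z s, sur (lst (lam ζ Y) (k+1) (enc rp ex F (z :: s))) =
          (sur (Y.card : ℝ≥0∞)⁻¹ + (sur 2⁻¹ + Fᶜ.indicator (fun z => sur (ζ z)) z)) +
            sur (lst (lam ζ Y) k (enc rp ex F s)) := by
        intro z s
        rw [enc, lst, sur_mul (hlP.le_one _) ((isP_lst hlP k).le_one _)]
        congr 1
        have hy : (wst rp ex (z :: s)).1 ∈ Y := hrp _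
        rw [lam, ind_true hy, mul_one, sur_mul ((isP_wt hζ).le_one _) hYi, add_comm]
        congr 1
        by_cases hz : z ∈ F
        · simp [rvl, hz, wt]
        · simp only [rvl, hz, if_false, wt]
          rw [sur_mul h2 (hζ.le_one _), Set.indicator_of_mem (show z ∈ Fᶜ from hz)]
      calc _ = ∑' z, ζ z * ((sur (Y.card : ℝ≥0∞)⁻¹ + (sur 2⁻¹ + Fᶜ.indicator (fun z => sur (ζ z)) z)) +
            ∑' s, lst ζ k s * sur (lst (lam ζ Y) k (enc rp ex F s))) := by
            refine tsum_congr fun z => ?_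
            simp only [h1, mul_add, ENNReal.tsum_add, ENNReal.tsum_mul_right]
            rw [show ∑' s, lst ζ k s = 1 from isP_lst hζ k]
            ring_nf
        _ = (sur (Y.card : ℝ≥0∞)⁻¹ + (sur 2⁻¹ + ∑' z, ζ z * Fᶜ.indicator (fun z => sur (ζ z)) z)) +
            ∑' s, lst ζ k s * sur (lst (lam ζ Y) k (enc rp ex F s)) := by
            simp only [mul_add, ENNReal.tsum_add, ENNReal.tsum_mul_right]
            rw [show ∑' s, ζ s = 1 from hζ]
            simp only [one_mul]
        _ ≤ _ := by
            refine (add_le_add_right ih _).trans (le_of_eq ?_)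
            push_cast
            ring
  calc _ ≤ ∑' s, lst ζ k s * (sur (M : ℝ≥0∞)⁻¹ + sur (lst (lam ζ Y) k (enc rp ex F s))) :=
        ENNReal.tsum_le_tsum hpt
    _ = sur (M : ℝ≥0∞)⁻¹ + ∑' s, lst ζ k s * sur (lst (lam ζ Y) k (enc rp ex F s)) := by
        simp only [mul_add, ENNReal.tsum_add, ENNReal.tsum_mul_right]
        rw [show ∑' s, lst ζ k s = 1 from isP_lst hζ k, one_mul]
    _ ≤ _ := by gcongr; exact hind k

theorem Ctx.caseB (c : Ctx o g K) {τ : G → ℝ≥0∞} (hτ : IsP τ) (hfin : Ent τ ≠ ⊤)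
    (hsupp : ∀ a, τ a ≠ 0 → a ∈ El g) {ε : ℝ≥0∞} (hε : ε ≠ 0) :
    ∃ n : ℕ, 0 < n ∧ Ent (cpow τ n) ≤ n * ε := by
  classical
  obtain ⟨Y0, hY0, hm⟩ := c.finE
  obtain ⟨m1, hm1⟩ := hm 1 (El g).one_mem
  set Y := hY0.toFinset with hY
  have hrep : ∀ h : G, ∃ y : G, ∃ e : ℤ, y ∈ Y ∧ (h ∈ El g → y ∈ El g ∧ h = y * g ^ e) := by
    intro h
    by_cases hh : h ∈ El g
    · obtain ⟨m, hm⟩ := hm h hh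
      refine ⟨h * g ^ m, -m, by simpa [hY] using hm, fun _ => ⟨?_, by simp⟩⟩
      exact (El g).mul_mem hh (zpow_mem_El m)
    · exact ⟨_, 0, by simpa [hY] using hm1, fun h => absurd h hh⟩
  choose rp ex hrp hE using hrep
  set Cst : ℝ≥0∞ := 2 + (sur (Y.card : ℝ≥0∞)⁻¹ + (sur 2⁻¹ + 1)) with hCst
  have hCt : Cst ≠ ⊤ := by
    have h1 : sur 2⁻¹ ≠ ⊤ := by
      have := sur_inv_nat 2 (by norm_num)
      rw [Nat.cast_ofNat] at this
      rw [this]; simp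
    have h2 : sur (Y.card : ℝ≥0∞)⁻¹ ≠ ⊤ := by
      rw [sur_inv_nat _ (Finset.card_pos.2 ⟨_, hrp 1⟩)]; simp
    rw [hCst]
    simp [h1, h2]
  obtain ⟨n', hn'⟩ := ENNReal.exists_nat_mul_gt hε hCt
  have hn0 : 0 < n' := by
    rcases Nat.eq_zero_or_pos n' with h | h
    · simp [h] at hn'
    · exact h
  set ζ := cpow τ n' with hζ
  have hζP : IsP ζ := isP_cpow hτ n'
  obtain ⟨F, hFf, hF⟩ := tail_small (p := fun _ => ζ) hζP (fun x => tendsto_const_nhds)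
    tendsto_const_nhds (Ent_cpow_ne_top hτ hfin n') one_ne_zero
  obtain ⟨-, hF⟩ := hF.exists
  obtain ⟨L, hL⟩ : ∃ L : ℕ, ∀ u ∈ F, ∀ y ∈ Y, |ex (u * y)| ≤ L := by
    obtain ⟨B, hB⟩ := ((hFf.prod Y.finite_toSet).image fun x : G × G => |ex (x.1 * x.2)|).bddAbove
    refine ⟨B.toNat, fun u hu y hy => ?_⟩
    have := hB (Set.mem_image_of_mem _ (show (u, y) ∈ F ×ˢ (Y : Set G) from ⟨hu, hy⟩))
    exact this.trans (Int.self_le_toNat B)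
  obtain ⟨k, hk, hkM⟩ := exists_k 0 L 1
  refine ⟨n' * k, by positivity, ?_⟩
  rw [← cpow_cpow]
  refine (coding_B hζP (cpow_supp hsupp n') hrp hE hL k).trans ?_
  have h1 : sur (((2 * (k * L) + 1 : ℕ) : ℝ≥0∞)⁻¹) ≤ k * 2 := by
    refine le_trans (sur_anti ?_) hkM
    rw [ENNReal.inv_le_inv]
    have h0 : 1 ≤ 2 ^ k := Nat.one_le_two_pow
    norm_cast
    have := Nat.mul_le_mul_right (2 * (k * L) + 1) h0
    simp only [Nat.mul_zero, Nat.zero_add, Nat.add_zero, Nat.mul_one]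
    omega
  calc _ ≤ (k : ℝ≥0∞) * 2 + k * (sur (Y.card : ℝ≥0∞)⁻¹ + (sur 2⁻¹ + 1)) := by gcongr
    _ = k * Cst := by rw [hCst]; ring
    _ ≤ k * (n' * ε) := by gcongr
    _ = _ := by push_cast; ring

end caseB
end EC

open scoped ENNReal
namespace EC
section bridge
variable {G : Type*} [Group G]

noncomputable def toE {α : Type*} (μ : α → ℝ) : α → ℝ≥0∞ := fun x => ENNReal.ofReal (μ x)

lemma isP_toE {α : Type*} {μ : α → ℝ} (h : IsProbMeasure μ) : IsP (toE μ) := by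
  unfold IsP toE
  rw [← ENNReal.ofReal_tsum_of_nonneg h.1 h.2.1, h.2.2, ENNReal.ofReal_one]

lemma prob_of_isP {α : Type*} {μ : α → ℝ} (h0 : ∀ x, 0 ≤ μ x) (h : IsP (toE μ)) :
    IsProbMeasure μ := by
  have e : ∀ x, (toE μ x).toReal = μ x := fun x => ENNReal.toReal_ofReal (h0 x)
  have hs := ENNReal.summable_toReal (f := toE μ) (by rw [show ∑' x, toE μ x = 1 from h]; simp)
  simp only [e] at hs
  refine ⟨h0, hs, ?_⟩
  have := ENNReal.ofReal_tsum_of_nonneg h0 hs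
  rw [show ∑' x, ENNReal.ofReal (μ x) = 1 from h] at this
  rwa [ENNReal.ofReal_eq_one] at this

lemma prob_le_one {α : Type*} {μ : α → ℝ} (h : IsProbMeasure μ) (x : α) : μ x ≤ 1 := by
  have := (isP_toE h).le_one x
  rwa [toE, ENNReal.ofReal_le_one] at this

lemma toE_conv {μ ν : G → ℝ} (h : IsProbMeasure μ) (h' : IsProbMeasure ν) :
    toE (conv μ ν) = cnv (toE μ) (toE ν) := by
  funext x
  unfold toE conv cnv
  rw [ENNReal.ofReal_tsum_of_nonneg (fun y => mul_nonneg (h.1 _) (h'.1 _))]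
  · refine tsum_congr fun y => ENNReal.ofReal_mul (h.1 _)
  · exact Summable.of_nonneg_of_le (fun y => mul_nonneg (h.1 _) (h'.1 _))
      (fun y => mul_le_of_le_one_right (h.1 _) (prob_le_one h' _)) h.2.1

lemma convPow_prob {μ : G → ℝ} (h : IsProbMeasure μ) (n : ℕ) :
    IsProbMeasure (convPow μ n) ∧ toE (convPow μ n) = cpow (toE μ) n := by
  induction n with
  | zero =>
    have e : toE (convPow μ 0) = cpow (toE μ) 0 := by
      funext x
      unfold toE convPow cpow
      by_cases hx : x ∈ ({1} : Set G) <;> simp [hx]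
    refine ⟨prob_of_isP (fun x => ?_) (by rw [e]; exact isP_cpow (isP_toE h) 0), e⟩
    unfold convPow
    exact Set.indicator_nonneg (fun _ _ => zero_le_one) x
  | succ n ih =>
    have e : toE (convPow μ (n + 1)) = cpow (toE μ) (n + 1) := by
      rw [cpow, ← ih.2]; exact toE_conv h ih.1
    refine ⟨prob_of_isP (fun x => ?_) (by rw [e]; exact isP_cpow (isP_toE h) _), e⟩
    exact tsum_nonneg fun y => mul_nonneg (h.1 _) (ih.1.1 _)

lemma term_eq {x : ℝ} (h0 : 0 ≤ x) :
    ENNReal.ofReal x * sur (ENNReal.ofReal x) = ENNReal.ofReal (-(x * Real.log x)) := by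
  rcases h0.eq_or_lt with rfl | h
  · simp
  · unfold sur
    rw [if_neg (by simpa using h), ENNReal.toReal_ofReal h0, ← ENNReal.ofReal_mul h0]
    congr 1; ring

lemma entropyOf_eq {α : Type*} {μ : α → ℝ} (h : IsProbMeasure μ) :
    entropyOf μ = (Ent (toE μ)).toReal := by
  unfold entropyOf Ent toE
  simp only [term_eq (h.1 _)]
  rw [ENNReal.tsum_toReal_eq fun _ => ENNReal.ofReal_ne_top]
  refine tsum_congr fun x => (ENNReal.toReal_ofReal ?_).symm
  have := mul_nonneg (h.1 x) (neg_nonneg.2 (Real.log_nonpos (h.1 x) (prob_le_one h x)))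
  linarith

lemma Ent_toE_ne_top {α : Type*} {μ : α → ℝ} (h : IsProbMeasure μ) (hf : HasFiniteEntropy μ) :
    Ent (toE μ) ≠ ⊤ := by
  unfold Ent toE
  simp only [term_eq (h.1 _)]
  rw [← ENNReal.ofReal_tsum_of_nonneg]
  · simp
  · intro x
    have := mul_nonneg (h.1 x) (neg_nonneg.2 (Real.log_nonpos (h.1 x) (prob_le_one h x)))
    linarith
  · exact hf.neg

noncomputable def hh (p : G → ℝ≥0∞) : ℝ := ⨅ n : ℕ, (Ent (cpow p (n + 1))).toReal / (n + 1 : ℝ)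

lemma asymp_eq {μ : G → ℝ} (h : IsProbMeasure μ) : asympEntropy μ = hh (toE μ) := by
  unfold asympEntropy hh
  congr 1
  funext n
  rw [entropyOf_eq (convPow_prob h _).1, (convPow_prob h _).2]

lemma hh_le (p : G → ℝ≥0∞) {n : ℕ} (hn : 0 < n) : hh p ≤ (Ent (cpow p n)).toReal / n := by
  obtain ⟨m, rfl⟩ : ∃ m, n = m + 1 := ⟨n - 1, by omega⟩
  have : BddBelow (Set.range fun n : ℕ => (Ent (cpow p (n + 1))).toReal / (n + 1 : ℝ)) :=
    ⟨0, by rintro _ ⟨n, rfl⟩; positivity⟩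
  have := ciInf_le this m
  push_cast
  exact this

lemma le_hh (p : G → ℝ≥0∞) {x : ℝ} (h : ∀ n : ℕ, 0 < n → x ≤ (Ent (cpow p n)).toReal / n) :
    x ≤ hh p := by
  refine le_ciInf fun n => ?_
  have := h (n + 1) (by omega)
  push_cast at this
  exact this

lemma hh_nonneg (p : G → ℝ≥0∞) : 0 ≤ hh p := le_hh p fun n _ => by positivity

variable {X : Type*} [MetricSpace X] [MulAction G X] {o : X} {g : G} {K : ℝ}

theorem Ctx.final (c : Ctx o g K) {p : ℕ → G → ℝ≥0∞} {P : G → ℝ≥0∞} (hp : ∀ i, IsP (p i))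
    (hP : IsP P) (h : ∀ x, Tendsto (fun i => p i x) atTop (𝓝 (P x)))
    (hE : Tendsto (fun i => Ent (p i)) atTop (𝓝 (Ent P))) (hfin : Ent P ≠ ⊤)
    {n0 m : ℕ} (hn0 : 0 < n0) (hm : 0 < m) (hpos : cpow P n0 (g ^ m) ≠ 0) :
    Tendsto (fun i => hh (p i)) atTop (𝓝 (hh P)) := by
  have hT : ∀ n : ℕ, Tendsto (fun i => (Ent (cpow (p i) n)).toReal) atTop
      (𝓝 (Ent (cpow P n)).toReal) := fun n =>
    (ENNReal.tendsto_toReal (Ent_cpow_ne_top hP hfin n)).comp (tendsto_Ent_cpow hp hP h hE hfin n)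
  have hEt : ∀ᶠ i in atTop, Ent (p i) ≠ ⊤ := hE.eventually_ne hfin
  refine tendsto_order.2 ⟨fun x hx => ?_, fun x hx => ?_⟩
  · by_cases hsupp : ∀ a, cpow P n0 a ≠ 0 → a ∈ El g
    · have h0 : hh P ≤ 0 := by
        refine le_of_forall_pos_le_add fun ε hε => ?_
        obtain ⟨n, hn, hle⟩ := c.caseB (isP_cpow hP n0) (Ent_cpow_ne_top hP hfin n0) hsupp
          (ε := ENNReal.ofReal ε) (by simpa using hε)
        rw [cpow_cpow] at hle
        have h1 := hh_le P (n := n0 * n) (by positivity)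
        have h2 := ENNReal.toReal_mono (ENNReal.mul_ne_top (by simp) (by simp)) hle
        rw [ENNReal.toReal_mul, ENNReal.toReal_ofReal hε.le, ENNReal.toReal_natCast] at h2
        have hnn : (0:ℝ) < n := by exact_mod_cast hn
        have hn1 : (1:ℝ) ≤ n0 := by exact_mod_cast hn0
        refine h1.trans ?_
        rw [zero_add, div_le_iff₀ (by push_cast; positivity)]
        push_cast
        have : n * ε ≤ n0 * (n * ε) := le_mul_of_one_le_left (by positivity) hn1
        linarith
      exact Eventually.of_forall fun i => (lt_of_lt_of_le hx h0).trans_le (hh_nonneg _)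
    · push Not at hsupp
      obtain ⟨a, hta, ha⟩ := hsupp
      set ε : ℝ := (hh P - x) / 3 with hε
      have hε0 : 0 < ε := by rw [hε]; linarith
      obtain ⟨n, hn, hev⟩ := c.caseA (fun i => isP_cpow (hp i) n0) (isP_cpow hP n0)
        (tendsto_cpow hp hP h n0) (tendsto_Ent_cpow hp hP h hE hfin n0)
        (Ent_cpow_ne_top hP hfin n0) ha hta hm hpos (ε := ENNReal.ofReal ε) (by simpa using hε0)
      have hnn : (0:ℝ) < n := by exact_mod_cast hn
      have hn1 : (1:ℝ) ≤ n0 := by exact_mod_cast hn0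
      have hlt : (n0 * n : ℝ) * (hh P - ε) < (Ent (cpow P (n0 * n))).toReal := by
        have h1 := hh_le P (n := n0 * n) (by positivity)
        rw [le_div_iff₀ (by push_cast; positivity)] at h1
        push_cast at h1
        have : 0 < (n0 * n : ℝ) * ε := by positivity
        nlinarith
      filter_upwards [hev, hEt, (hT (n0 * n)).eventually (Ioi_mem_nhds hlt)] with i hi hti hEi
      have hEi : (n0 * n : ℝ) * (hh P - ε) < (Ent (cpow (p i) (n0 * n))).toReal := hEi
      have hx' : x < hh P - 2 * ε := by rw [hε]; linarith
      refine hx'.trans_le (le_hh _ fun N hN => ?_)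
      have hj : ∀ j : ℕ, j * Ent (cpow (p i) (n0 * n)) ≤
          Ent (cpow (p i) (n0 * n * j)) + j * (n * ENNReal.ofReal ε) := by
        intro j
        induction j with
        | zero => simp
        | succ j ih =>
          have h1 := hi (cpow (p i) (n0 * n * j)) (isP_cpow (hp i) _)
          rw [cpow_cpow, ← cpow_add] at h1
          rw [show n0 * n * (j + 1) = n0 * n + n0 * n * j by ring]
          calc ((j + 1 : ℕ) : ℝ≥0∞) * Ent (cpow (p i) (n0 * n))
              = Ent (cpow (p i) (n0 * n)) + j * Ent (cpow (p i) (n0 * n)) := by push_cast; ring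
            _ ≤ Ent (cpow (p i) (n0 * n)) + (Ent (cpow (p i) (n0 * n * j)) +
                  j * (n * ENNReal.ofReal ε)) := by gcongr
            _ = (Ent (cpow (p i) (n0 * n)) + Ent (cpow (p i) (n0 * n * j))) +
                  j * (n * ENNReal.ofReal ε) := by ring
            _ ≤ (Ent (cpow (p i) (n0 * n + n0 * n * j)) + n * ENNReal.ofReal ε) +
                  j * (n * ENNReal.ofReal ε) := by gcongr
            _ = _ := by push_cast; ring
      have h2 : N * Ent (cpow (p i) (n0 * n)) ≤
          ((n0 * n : ℕ) : ℝ≥0∞) * Ent (cpow (p i) N) + N * (n * ENNReal.ofReal ε) := by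
        refine (hj N).trans ?_
        gcongr
        rw [mul_comm (n0 * n), ← cpow_cpow]
        exact Ent_cpow_le (isP_cpow (hp i) N) _
      have hf1 : ((n0 * n : ℕ) : ℝ≥0∞) * Ent (cpow (p i) N) ≠ ⊤ :=
        ENNReal.mul_ne_top (ENNReal.natCast_ne_top _) (Ent_cpow_ne_top (hp i) hti N)
      have hf2 : (N : ℝ≥0∞) * (n * ENNReal.ofReal ε) ≠ ⊤ :=
        ENNReal.mul_ne_top (by simp) (ENNReal.mul_ne_top (by simp) (by simp))
      have h3 := ENNReal.toReal_mono (ENNReal.add_ne_top.2 ⟨hf1, hf2⟩) h2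
      rw [ENNReal.toReal_add hf1 hf2] at h3
      simp only [ENNReal.toReal_mul, ENNReal.toReal_natCast, ENNReal.toReal_ofReal hε0.le] at h3
      push_cast at h3
      have hNN : (0:ℝ) < N := by exact_mod_cast hN
      rw [le_div_iff₀ hNN]
      have h4 := mul_lt_mul_of_pos_left hEi hNN
      have h5 : (n:ℝ) * (N * ε) ≤ n0 * (n * (N * ε)) := le_mul_of_one_le_left (by positivity) hn1
      have hnz : (0:ℝ) < n0 * n := by positivity
      have h6 : (n0 * n : ℝ) * ((hh P - 2 * ε) * N) ≤ (n0 * n : ℝ) * (Ent (cpow (p i) N)).toReal := by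
        nlinarith
      exact le_of_mul_le_mul_left h6 hnz
  · obtain ⟨n, hn⟩ := exists_lt_of_ciInf_lt (show hh P < x from hx)
    have h1 := ((hT (n + 1)).div_const ((n + 1 : ℝ))).eventually (Iio_mem_nhds hn)
    filter_upwards [h1] with i hi
    have := hh_le (p i) (n := n + 1) (by omega)
    push_cast at this
    exact this.trans_lt hi

end bridge
end EC

theorem entropy_continuity
    {G X : Type*} [Group G] [Countable G] [MetricSpace X] [MulAction G X]
    (o : X) (hgeo : IsGeodesicSpace X)
    (hiso : ∀ g : G, Isometry fun x : X => g • x)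
    (g : G) (hcon : IsContractingIsom o g) (hwpd : IsWPD o g)
    (μ : G → ℝ) (hμ : IsProbMeasure μ) (hH : HasFiniteEntropy μ)
    (hpow : ∃ n m : ℕ, 0 < n ∧ 0 < m ∧ 0 < convPow μ n (g ^ m))
    (μs : ℕ → G → ℝ) (hμs : ∀ i, IsProbMeasure (μs i))
    (hsimple : ∀ h : G, Filter.Tendsto (fun i => μs i h) Filter.atTop (𝓝 (μ h)))
    (hHfin : ∀ᶠ i in Filter.atTop, HasFiniteEntropy (μs i))
    (hHconv : Filter.Tendsto (fun i => entropyOf (μs i)) Filter.atTop (𝓝 (entropyOf μ))) :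
    Filter.Tendsto (fun i => asympEntropy (μs i)) Filter.atTop (𝓝 (asympEntropy μ)) := by
  obtain ⟨K, hK, hax⟩ := hcon
  have c : EC.Ctx o g K := ⟨hgeo, hiso, hK, hax, hwpd⟩
  obtain ⟨n, m, hn, hm, hpos⟩ := hpow
  simp only [EC.asymp_eq hμ, EC.asymp_eq (hμs _)]
  have hfin := EC.Ent_toE_ne_top hμ hH
  refine c.final (fun i => EC.isP_toE (hμs i)) (EC.isP_toE hμ)
    (fun x => ENNReal.tendsto_ofReal (hsimple x)) ?_ hfin hn hm ?_
  · have h1 := ENNReal.tendsto_ofReal hHconv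
    rw [EC.entropyOf_eq hμ, ENNReal.ofReal_toReal hfin] at h1
    refine h1.congr' ?_
    filter_upwards [hHfin] with i hi
    rw [EC.entropyOf_eq (hμs i), ENNReal.ofReal_toReal (EC.Ent_toE_ne_top (hμs i) hi)]
  · rw [← (EC.convPow_prob hμ n).2]
    simpa [EC.toE] using hpos
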